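/- For every r, Δ ∈ ℕ and δ, α > 0 there exist ε, β > 0 and a constant C such that the following holds. Let R be a graph on the vertex set [r], and for each i ∈ [r] let V_i be a set of size N, the sets V_1, …, V_r pairwise disjoint. Let G be a graph on V = V_1 ∪ … ∪ V_r such that the pair (V_i, V_j) is (ε, δ)-super-regular for every edge {i, j} of R. Let H be a graph with maximum degree at most Δ and let h : V(H) → [r] be a graph homomorphism from H to R such that |h⁻¹(i)| ≤ N for every i ∈ [r]. Let W ⊆ V(H) be a set of size |W| ≤ βN, and for each x ∈ W let W_x ⊆ V_{h(x)} be a set of size at least αN; for x ∈ V(H) \ W set W_x = V_{h(x)}. Then there exists a (C/N)-vertex-spread probability distribution λ over graph embeddings φ : H ↪ G (injective maps sending every edge of H to an edge of G) with the property that φ(x) ∈ W_x for every x ∈ V(H). -/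

import Mathlib

open Finset
open scoped Classical

/-- The density of the pair of vertex sets `(A, B)` in the graph `G`. -/
noncomputable def edgeDensityR {V : Type} (G : SimpleGraph V) (A B : Finset V) : ℝ :=
  (∑ a ∈ A, ((B.filter fun b => G.Adj a b).card : ℝ)) / ((A.card : ℝ) * (B.card : ℝ))

/-- The pair `(A, B)` is `ε`-regular in `G`. -/
noncomputable def IsRegularPair {V : Type} (G : SimpleGraph V) (A B : Finset V) (ε : ℝ) : Prop :=
  ∀ X ⊆ A, ∀ Y ⊆ B, ε * A.card ≤ X.card → ε * B.card ≤ Y.card →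
    |edgeDensityR G X Y - edgeDensityR G A B| ≤ ε

/-- The pair `(A, B)` is `(ε, δ)`-super-regular in `G`: it is `ε`-regular,
`|A| = |B| = N`, and every vertex of one side has at least `δN` neighbours
in the other side. -/
noncomputable def IsSuperRegularPair {V : Type} (G : SimpleGraph V) (A B : Finset V)
    (ε δ : ℝ) (N : ℕ) : Prop :=
  IsRegularPair G A B ε ∧ A.card = N ∧ B.card = N ∧
    (∀ v ∈ A, δ * N ≤ ((B.filter fun b => G.Adj v b).card : ℝ)) ∧
    (∀ v ∈ B, δ * N ≤ ((A.filter fun a => G.Adj v a).card : ℝ))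

/-!
Adding isolated vertices to `H`, we may assume that every part of `H` has exactly `N` vertices.
Reserve in each part a small linear number of buffer vertices that are pairwise far apart and far
from `W`. A random greedy algorithm embeds the remaining vertices, the neighbours of the buffer
first: each vertex is mapped to a uniformly random free candidate that keeps the expected
proportion of the candidates of its unembedded neighbours. A vertex whose free candidates are
running out becomes critical and is embedded next. By regularity there are always at least `c₀ N`
choices, so a prescribed set of `k` images occurs with probability at most `(1 / (c₀ N)) ^ k`.

Products of weights over well separated vertices are supermartingales. They show that a fixed large
set of vertices all losing their candidates in a fixed linear set is so unlikely that a union bound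
over all pairs of sets is affordable. Hence few vertices become critical, and the relation that `v`
is a candidate for `b`, between the remaining vertices of each part, is lower-regular. Its minimum
degree on the host side comes from the buffer: every `v` stays a possible image for linearly many
buffer vertices. In such a relation, letting every vertex on both sides choose boundedly many
partners at random yields a graph that satisfies Hall's condition with positive probability. The
resulting perfect matching is `O(1 / N)`-spread because each edge has probability `O(1 / N)` of
being chosen.

For bounded `N` spreadness is no restriction, and as `ε` and `β` are tiny compared with `1 / N`, the
set `W` is empty and the super-regular pairs are complete, so any injection respecting the parts
will do.
-/

section Counting

variable {ι α β : Type*}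

theorem card_filter_le_sum_card_filter (Ω : Finset α) (I : Finset ι) (P : ι → α → Prop)
    [∀ i, DecidablePred (P i)] (Q : α → Prop) [DecidablePred Q]
    (h : ∀ a ∈ Ω, Q a → ∃ i ∈ I, P i a) :
    (#{a ∈ Ω | Q a} : ℝ) ≤ ∑ i ∈ I, (#{a ∈ Ω | P i a} : ℝ) := by
  have hsub : {a ∈ Ω | Q a} ⊆ I.biUnion fun i => {a ∈ Ω | P i a} := fun a ha => by
    obtain ⟨haΩ, haQ⟩ := mem_filter.1 ha
    obtain ⟨i, hi, hP⟩ := h a haΩ haQ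
    exact mem_biUnion.2 ⟨i, hi, mem_filter.2 ⟨haΩ, hP⟩⟩
  exact_mod_cast (card_le_card hsub).trans card_biUnion_le

theorem card_filter_piFinset_le {α : ι → Type*} [Fintype ι] [DecidableEq ι]
    (t : ∀ i, Finset (α i)) (s : Finset ι) (P : ∀ i, α i → Prop) [∀ i, DecidablePred (P i)]
    {b : ℝ} (h : ∀ i ∈ s, (#{a ∈ t i | P i a} : ℝ) ≤ b * #(t i)) :
    (#{f ∈ Fintype.piFinset t | ∀ i ∈ s, P i (f i)} : ℝ) ≤ b ^ #s * #(Fintype.piFinset t) := by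
  have hpi : {f ∈ Fintype.piFinset t | ∀ i ∈ s, P i (f i)}
      ⊆ Fintype.piFinset fun i => if i ∈ s then {a ∈ t i | P i a} else t i := fun f hf => by
    simp only [mem_filter, Fintype.mem_piFinset] at hf ⊢
    intro i
    split_ifs with hi
    · exact mem_filter.2 ⟨hf.1 i, hf.2 i hi⟩
    · exact hf.1 i
  calc (#{f ∈ Fintype.piFinset t | ∀ i ∈ s, P i (f i)} : ℝ)
      ≤ ∏ i, (#(if i ∈ s then {a ∈ t i | P i a} else t i) : ℝ) := by
        exact_mod_cast (card_le_card hpi).trans_eq (Fintype.card_piFinset _)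
    _ ≤ ∏ i, (if i ∈ s then b else 1) * (#(t i) : ℝ) := by
        refine prod_le_prod (fun _ _ => Nat.cast_nonneg _) fun i _ => ?_
        split_ifs with hi
        · exact h i hi
        · rw [one_mul]
    _ = b ^ #s * #(Fintype.piFinset t) := by
        rw [prod_mul_distrib, prod_ite_mem, univ_inter, prod_const, Fintype.card_piFinset,
          Nat.cast_prod]

theorem choose_mul_div_pow_le {n : ℕ} (hn : 0 < n) (s : ℕ) :
    (n.choose s : ℝ) * ((s : ℝ) / n) ^ s ≤ 3 ^ s := by
  calc (n.choose s : ℝ) * ((s : ℝ) / n) ^ s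
      ≤ ((n : ℝ) ^ s / s.factorial) * ((s : ℝ) / n) ^ s := by
        gcongr; exact Nat.choose_le_pow_div s n
    _ = (s : ℝ) ^ s / s.factorial := by rw [div_pow]; field_simp
    _ ≤ Real.exp s := Real.pow_div_factorial_le_exp _ (by positivity) s
    _ = Real.exp 1 ^ s := by rw [← Real.exp_nat_mul, mul_one]
    _ ≤ 3 ^ s := by gcongr; linarith [Real.exp_one_lt_d9]

end Counting

/-! ### Perfect matchings in random choice graphs -/

section KOut

variable {X Y : Type*} [Fintype X] {K : ℕ}

/-- The outcomes of the random `K`-out choice: every vertex `x` picks `K` neighbours, with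
repetition, among its candidates `N x`. -/
noncomputable def kOut (K : ℕ) (N : X → Finset Y) : Finset (X → Fin K → Y) :=
  Fintype.piFinset fun x => Fintype.piFinset fun _ => N x

theorem mem_kOut {N : X → Finset Y} {ω : X → Fin K → Y} : ω ∈ kOut K N ↔ ∀ x j, ω x j ∈ N x := by
  simp [kOut]

theorem kOut_nonempty {N : X → Finset Y} (hN : ∀ x, (N x).Nonempty) : (kOut K N).Nonempty := by
  choose f hf using hN
  exact ⟨fun x _ => f x, mem_kOut.2 fun x _ => hf x⟩

theorem card_kOut_filter_exists_eq_le {ι : Type*} (K : ℕ) (N : X → Finset Y) (s : Finset ι)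
    {f : ι → X} (hf : Set.InjOn f s) (g : ι → Y) {b : ℝ} (hb : ∀ x, 1 ≤ b * #(N x)) :
    (#{ω ∈ kOut K N | ∀ i ∈ s, ∃ j, ω (f i) j = g i} : ℝ) ≤ (K * b) ^ #s * #(kOut K N) := by
  have hsingle : ∀ i ∈ s, ∀ j ∈ (univ : Finset (Fin K)),
      (#{u ∈ Fintype.piFinset fun _ : Fin K => N (f i) | u j = g i} : ℝ)
        ≤ b * #(Fintype.piFinset fun _ : Fin K => N (f i)) := fun i _ j _ => by
    have hone : (#{y ∈ N (f i) | y = g i} : ℝ) ≤ b * #(N (f i)) := by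
      have hsub : {y ∈ N (f i) | y = g i} ⊆ {g i} := fun y hy =>
        mem_singleton.2 (mem_filter.1 hy).2
      refine le_trans ?_ (hb (f i))
      exact_mod_cast (card_le_card hsub).trans_eq (card_singleton _)
    simpa using card_filter_piFinset_le (fun _ : Fin K => N (f i)) {j} (fun _ y => y = g i)
      fun _ _ => hone
  have hcoord : ∀ x ∈ s.image f, (#{u ∈ Fintype.piFinset fun _ : Fin K => N x |
      ∀ i ∈ s, f i = x → ∃ j, u j = g i} : ℝ)
        ≤ K * b * #(Fintype.piFinset fun _ : Fin K => N x) := by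
    intro x hx
    obtain ⟨i, hi, rfl⟩ := mem_image.1 hx
    calc _ ≤ ∑ j : Fin K, (#{u ∈ Fintype.piFinset fun _ : Fin K => N (f i) | u j = g i} : ℝ) :=
          card_filter_le_sum_card_filter _ _ _ _ fun u _ hu =>
            (hu i hi rfl).imp fun j hj => ⟨mem_univ j, hj⟩
      _ ≤ ∑ _j : Fin K, b * #(Fintype.piFinset fun _ : Fin K => N (f i)) :=
          sum_le_sum (hsingle i hi)
      _ = _ := by rw [sum_const, card_univ, Fintype.card_fin, nsmul_eq_mul, mul_assoc]
  calc (#{ω ∈ kOut K N | ∀ i ∈ s, ∃ j, ω (f i) j = g i} : ℝ)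
      ≤ #{ω ∈ kOut K N | ∀ x ∈ s.image f, ∀ i ∈ s, f i = x → ∃ j, ω x j = g i} := by
        refine Nat.cast_le.2 (card_le_card (monotone_filter_right _ fun ω _ hω x _ i hi hix => ?_))
        exact hix ▸ hω i hi
    _ ≤ (K * b) ^ #(s.image f) * #(kOut K N) := card_filter_piFinset_le _ (s.image f)
        (fun x (u : Fin K → Y) => ∀ i ∈ s, f i = x → ∃ j, u j = g i) hcoord
    _ = _ := by rw [card_image_of_injOn hf]

theorem card_kOut_filter_forall_le (K : ℕ) (N : X → Finset Y) (s : Finset X) (T : Finset Y)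
    {b : ℝ} (hb : ∀ x ∈ s, (#(N x ∩ T) : ℝ) ≤ b * #(N x)) :
    (#{ω ∈ kOut K N | ∀ x ∈ s, ∀ j, ω x j ∈ T} : ℝ) ≤ (b ^ K) ^ #s * #(kOut K N) := by
  refine card_filter_piFinset_le _ s (fun _ (u : Fin K → Y) => ∀ j, u j ∈ T) fun x hx => ?_
  have hfilter : (#{y ∈ N x | y ∈ T} : ℝ) ≤ b * #(N x) := by
    rw [filter_mem_eq_inter]; exact hb x hx
  simpa using card_filter_piFinset_le (fun _ : Fin K => N x) univ (fun _ y => y ∈ T)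
    fun _ _ => hfilter

/-- The first obstruction to Hall's condition for the graph of choices `ω`: a nonempty set of at
most `a` vertices all of whose choices lie in a set of the same size. -/
def HasSmallTrap (ω : X → Fin K → Y) (a : ℝ) : Prop :=
  ∃ (S : Finset X) (T : Finset Y), #S = #T ∧ S.Nonempty ∧ (#S : ℝ) ≤ a ∧ ∀ x ∈ S, ∀ j, ω x j ∈ T

/-- The second obstruction to Hall's condition for the graph of choices `ω`: two sets of at least
`a` vertices such that no choice leads from the first to the second. -/
def HasLargeGap (ω : X → Fin K → Y) (a : ℝ) : Prop :=
  ∃ (S : Finset X) (T : Finset Y), a ≤ #S ∧ a ≤ #T ∧ ∀ x ∈ S, ∀ j, ω x j ∉ T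

theorem choose_sq_mul_pow_le {n s K : ℕ} {c : ℝ} (hc : 0 < c) (hn : 0 < n)
    (hs : (s : ℝ) ≤ c / 2 * n) (hK : 9 * (1 / 2 : ℝ) ^ K ≤ c ^ 2 / 32) :
    (n.choose s : ℝ) ^ 2 * (((s : ℝ) / (c * n)) ^ (K + 2)) ^ s ≤ (1 / 32 : ℝ) ^ s := by
  have hn' : (0 : ℝ) < n := by exact_mod_cast hn
  have hhalf : (s : ℝ) / (c * n) ≤ 1 / 2 := by
    rw [div_le_iff₀ (by positivity)]; linarith
  calc (n.choose s : ℝ) ^ 2 * (((s : ℝ) / (c * n)) ^ (K + 2)) ^ s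
      = ((n.choose s : ℝ) * ((s : ℝ) / n) ^ s) ^ 2
        * (1 / c ^ 2 * ((s : ℝ) / (c * n)) ^ K) ^ s := by
        have hbase : ((s : ℝ) / (c * n)) ^ (K + 2)
            = ((s : ℝ) / n) ^ 2 * (1 / c ^ 2 * ((s : ℝ) / (c * n)) ^ K) := by
          rw [pow_add]; field_simp
        rw [hbase, mul_pow, mul_pow]; ring
    _ ≤ (3 ^ s) ^ 2 * (1 / c ^ 2 * (1 / 2) ^ K) ^ s := by
        gcongr; exact choose_mul_div_pow_le hn s
    _ = (9 * (1 / 2) ^ K / c ^ 2) ^ s := by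
        rw [← pow_mul, mul_comm s, pow_mul, ← mul_pow]; norm_num; ring
    _ ≤ (1 / 32) ^ s := by
        refine pow_le_pow_left₀ (by positivity) ?_ s
        rw [div_le_iff₀ (by positivity)]; linarith

theorem sum_range_inv_pow_succ_le (n : ℕ) : ∑ s ∈ range n, (1 / 32 : ℝ) ^ (s + 1) ≤ 1 / 16 := by
  calc ∑ s ∈ range n, (1 / 32 : ℝ) ^ (s + 1) = 1 / 32 * ∑ s ∈ range n, (1 / 32 : ℝ) ^ s := by
        rw [mul_sum]; exact sum_congr rfl fun s _ => pow_succ' _ s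
    _ = 1 / 31 * (1 - (1 / 32) ^ n) := by rw [geom_sum_eq (by norm_num)]; ring
    _ ≤ 1 / 31 * 1 := by gcongr; exact sub_le_self 1 (by positivity)
    _ ≤ 1 / 16 := by norm_num

variable [Fintype Y]

theorem card_kOut_filter_trap_le {n s : ℕ} {N : X → Finset Y} (hX : Fintype.card X = n)
    (hY : Fintype.card Y = n) {c : ℝ} (hc : 0 < c) (hn : 0 < n) (hN : ∀ x, c * n ≤ #(N x))
    (hs : (s : ℝ) ≤ c / 2 * n) (hK : 9 * (1 / 2 : ℝ) ^ K ≤ c ^ 2 / 32) :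
    (#{ω ∈ kOut (K + 2) N | ∃ (S : Finset X) (T : Finset Y), #S = s ∧ #T = s ∧
      ∀ x ∈ S, ∀ j, ω x j ∈ T} : ℝ) ≤ (1 / 32 : ℝ) ^ s * #(kOut (K + 2) N) := by
  have hn' : (0 : ℝ) < n := by exact_mod_cast hn
  let pairs := powersetCard s (univ : Finset X) ×ˢ powersetCard s (univ : Finset Y)
  have hpair : ∀ P ∈ pairs, (#{ω ∈ kOut (K + 2) N | ∀ x ∈ P.1, ∀ j, ω x j ∈ P.2} : ℝ)
      ≤ (((s : ℝ) / (c * n)) ^ (K + 2)) ^ s * #(kOut (K + 2) N) := by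
    intro P hP
    obtain ⟨hS, hT⟩ := mem_product.1 hP
    have hle := card_kOut_filter_forall_le (K + 2) N P.1 P.2 (b := (s : ℝ) / (c * n)) fun x _ => by
      rw [div_mul_eq_mul_div, le_div_iff₀ (by positivity)]
      gcongr
      · exact (card_le_card inter_subset_right).trans_eq (mem_powersetCard.1 hT).2
      · exact hN x
    rwa [(mem_powersetCard.1 hS).2] at hle
  calc _ ≤ ∑ P ∈ pairs, (#{ω ∈ kOut (K + 2) N | ∀ x ∈ P.1, ∀ j, ω x j ∈ P.2} : ℝ) :=
        card_filter_le_sum_card_filter _ _ _ _ fun ω _ ⟨S, T, hS, hT, h⟩ =>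
          ⟨(S, T), mem_product.2 ⟨mem_powersetCard_univ.2 hS, mem_powersetCard_univ.2 hT⟩, h⟩
    _ ≤ ∑ _P ∈ pairs, (((s : ℝ) / (c * n)) ^ (K + 2)) ^ s * #(kOut (K + 2) N) := sum_le_sum hpair
    _ = (n.choose s : ℝ) ^ 2 * (((s : ℝ) / (c * n)) ^ (K + 2)) ^ s * #(kOut (K + 2) N) := by
        rw [sum_const, card_product, card_powersetCard, card_powersetCard, card_univ, card_univ,
          hX, hY, nsmul_eq_mul, Nat.cast_mul]
        ring
    _ ≤ _ := by gcongr; exact choose_sq_mul_pow_le hc hn hs hK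

theorem card_kOut_filter_hasSmallTrap_le {n : ℕ} {N : X → Finset Y} (hX : Fintype.card X = n)
    (hY : Fintype.card Y = n) {c : ℝ} (hc : 0 < c) (hn : 0 < n) (hN : ∀ x, c * n ≤ #(N x))
    (hK : 9 * (1 / 2 : ℝ) ^ K ≤ c ^ 2 / 32) :
    (#{ω ∈ kOut (K + 2) N | HasSmallTrap ω (c / 2 * n)} : ℝ) ≤ 1 / 16 * #(kOut (K + 2) N) := by
  let I : Finset ℕ := {s ∈ range n | ((s + 1 : ℕ) : ℝ) ≤ c / 2 * n}
  calc _ ≤ ∑ s ∈ I, (#{ω ∈ kOut (K + 2) N | ∃ (S : Finset X) (T : Finset Y),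
          #S = s + 1 ∧ #T = s + 1 ∧ ∀ x ∈ S, ∀ j, ω x j ∈ T} : ℝ) := by
        refine card_filter_le_sum_card_filter _ _ _ _ fun ω _ ⟨S, T, hST, hne, hle, h⟩ => ?_
        have hpos := hne.card_pos
        have hSn : #S ≤ n := hX ▸ card_le_univ S
        have hsucc : #S - 1 + 1 = #S := by omega
        exact ⟨#S - 1, mem_filter.2 ⟨mem_range.2 (by omega), by rwa [hsucc]⟩,
          S, T, by omega, by omega, h⟩
    _ ≤ ∑ s ∈ I, (1 / 32 : ℝ) ^ (s + 1) * #(kOut (K + 2) N) := sum_le_sum fun s hs =>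
        card_kOut_filter_trap_le hX hY hc hn hN (mem_filter.1 hs).2 hK
    _ ≤ ∑ s ∈ range n, (1 / 32 : ℝ) ^ (s + 1) * #(kOut (K + 2) N) :=
        sum_le_sum_of_subset_of_nonneg (filter_subset _ _) fun _ _ _ => by positivity
    _ ≤ 1 / 16 * #(kOut (K + 2) N) := by
        rw [← sum_mul]; gcongr; exact sum_range_inv_pow_succ_le n

theorem card_kOut_filter_forall_notMem_le {n : ℕ} {N : X → Finset Y} (hY : Fintype.card Y = n)
    {c : ℝ} (hc0 : 0 < c) (hc1 : c ≤ 1) (S : Finset X) (T : Finset Y) {m : ℝ}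
    (hm : m ≤ #{x ∈ S | c * n ≤ #(N x ∩ T)}) :
    (#{ω ∈ kOut K N | ∀ x ∈ S, ∀ j, ω x j ∉ T} : ℝ) ≤ Real.exp (-(c * K * m)) * #(kOut K N) := by
  set S' := {x ∈ S | c * n ≤ #(N x ∩ T)} with hS'
  have hmiss : ∀ x ∈ S', (#(N x ∩ Tᶜ) : ℝ) ≤ (1 - c) * #(N x) := fun x hx => by
    have hhit : c * n ≤ #(N x ∩ T) := (mem_filter.1 hx).2
    have hle : (#(N x) : ℝ) ≤ n := by exact_mod_cast hY ▸ card_le_univ (N x)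
    have hsplit : (#(N x ∩ T) : ℝ) + #(N x ∩ Tᶜ) = #(N x) := by
      rw [← sdiff_eq_inter_compl]; exact_mod_cast card_inter_add_card_sdiff _ _
    nlinarith
  have hexp : ((1 - c) ^ K) ^ #S' ≤ Real.exp (-(c * K * m)) :=
    calc ((1 - c) ^ K) ^ #S' ≤ (Real.exp (-c) ^ K) ^ #S' := by
          have hbase : 1 - c ≤ Real.exp (-c) := by linarith [Real.add_one_le_exp (-c)]
          have hc1' : 0 ≤ 1 - c := by linarith
          gcongr
      _ = Real.exp (-(c * K * #S')) := by
          rw [← pow_mul, ← Real.exp_nat_mul]; push_cast; ring_nf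
      _ ≤ Real.exp (-(c * K * m)) := by gcongr
  calc (#{ω ∈ kOut K N | ∀ x ∈ S, ∀ j, ω x j ∉ T} : ℝ)
      ≤ #{ω ∈ kOut K N | ∀ x ∈ S', ∀ j, ω x j ∈ Tᶜ} := by
        refine Nat.cast_le.2 (card_le_card (monotone_filter_right _ fun ω _ hω x hx j => ?_))
        exact mem_compl.2 (hω x (mem_filter.1 hx).1 j)
    _ ≤ ((1 - c) ^ K) ^ #S' * #(kOut K N) := card_kOut_filter_forall_le K N S' _ hmiss
    _ ≤ _ := by gcongr

theorem card_kOut_filter_hasLargeGap_le {n : ℕ} {N : X → Finset Y} (hX : Fintype.card X = n)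
    (hY : Fintype.card Y = n) {c θ θ' : ℝ} (hc0 : 0 < c) (hc1 : c ≤ 1) (hn : 0 < n)
    (hreg : ∀ (S : Finset X) (T : Finset Y), θ * n ≤ #S → θ * n ≤ #T →
      θ' * n ≤ #{x ∈ S | c * n ≤ #(N x ∩ T)})
    (hK : Real.exp (-(c * K * θ')) ≤ 1 / 64) :
    (#{ω ∈ kOut K N | HasLargeGap ω (θ * n)} : ℝ) ≤ 1 / 16 * #(kOut K N) := by
  let pairs : Finset (Finset X × Finset Y) := {P | θ * n ≤ #P.1 ∧ θ * n ≤ #P.2}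
  have hpair : ∀ P ∈ pairs, (#{ω ∈ kOut K N | ∀ x ∈ P.1, ∀ j, ω x j ∉ P.2} : ℝ)
      ≤ (1 / 64 : ℝ) ^ n * #(kOut K N) := fun P hP => by
    obtain ⟨-, hS, hT⟩ := mem_filter.1 hP
    refine (card_kOut_filter_forall_notMem_le hY hc0 hc1 P.1 P.2 (hreg _ _ hS hT)).trans ?_
    have hexp : Real.exp (-(c * K * (θ' * n))) = Real.exp (-(c * K * θ')) ^ n := by
      rw [← Real.exp_nat_mul]; congr 1; ring
    rw [hexp]
    gcongr
  have hcard : (#pairs : ℝ) ≤ 4 ^ n := by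
    have hle : #pairs ≤ 2 ^ n * 2 ^ n := (card_filter_le _ _).trans_eq (by
      rw [card_univ, Fintype.card_prod, Fintype.card_finset, Fintype.card_finset, hX, hY])
    rw [← mul_pow] at hle
    exact_mod_cast hle
  calc (#{ω ∈ kOut K N | HasLargeGap ω (θ * n)} : ℝ)
      ≤ ∑ P ∈ pairs, (#{ω ∈ kOut K N | ∀ x ∈ P.1, ∀ j, ω x j ∉ P.2} : ℝ) :=
        card_filter_le_sum_card_filter _ _ _ _ fun ω _ ⟨S, T, hS, hT, h⟩ =>
          ⟨(S, T), mem_filter.2 ⟨mem_univ _, hS, hT⟩, h⟩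
    _ ≤ ∑ _P ∈ pairs, (1 / 64 : ℝ) ^ n * #(kOut K N) := sum_le_sum hpair
    _ = #pairs * (1 / 64) ^ n * #(kOut K N) := by rw [sum_const, nsmul_eq_mul, mul_assoc]
    _ ≤ 4 ^ n * (1 / 64) ^ n * #(kOut K N) := by gcongr
    _ = (1 / 16) ^ n * #(kOut K N) := by rw [← mul_pow]; norm_num
    _ ≤ 1 / 16 * #(kOut K N) := by
        gcongr; exact pow_le_of_le_one (by norm_num) (by norm_num) hn.ne'

end KOut

section Spread

variable {α X Y : Type*}

/-- The distribution `p` on functions is `q`-vertex-spread: prescribing the values on `s` has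
probability at most `q ^ #s`. For distributions on injections this amounts to the usual definition
by tuples of distinct points. -/
def IsVertexSpread (p : PMF (X → Y)) (q : ℝ) : Prop :=
  ∀ (s : Finset X) (g : X → Y),
    p.toOuterMeasure {φ | ∀ x ∈ s, φ x = g x} ≤ ENNReal.ofReal (q ^ #s)

theorem toOuterMeasure_uniformOfFinset_le {s : Finset α} (hs : s.Nonempty) (t : Set α) {b : ℝ}
    (h : (#{a ∈ s | a ∈ t} : ℝ) ≤ b * #s) :
    (PMF.uniformOfFinset s hs).toOuterMeasure t ≤ ENNReal.ofReal b := by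
  have hpos : (0 : ℝ) < #s := by exact_mod_cast hs.card_pos
  rw [PMF.toOuterMeasure_uniformOfFinset_apply, ← ENNReal.ofReal_natCast, ← ENNReal.ofReal_natCast,
    ← ENNReal.ofReal_div_of_pos hpos]
  refine ENNReal.ofReal_le_ofReal ((div_le_iff₀ hpos).2 h)

theorem toOuterMeasure_le_one (p : PMF α) (t : Set α) : p.toOuterMeasure t ≤ 1 :=
  (p.toOuterMeasure_mono (t := Set.univ) (Set.subset_univ _)).trans_eq
    ((p.toOuterMeasure_apply_eq_one_iff _).2 (Set.subset_univ _))

theorem isVertexSpread_of_injective {p : PMF (X → Y)} {q : ℝ}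
    (hp : ∀ φ ∈ p.support, Function.Injective φ)
    (h : ∀ s : Finset X, s.Nonempty → ∀ g : X → Y, Set.InjOn g s →
      p.toOuterMeasure {φ | ∀ x ∈ s, φ x = g x} ≤ ENNReal.ofReal (q ^ #s)) :
    IsVertexSpread p q := by
  intro s g
  obtain rfl | hs := s.eq_empty_or_nonempty
  · rw [card_empty, pow_zero, ENNReal.ofReal_one]
    exact toOuterMeasure_le_one p _
  by_cases hg : Set.InjOn g s
  · exact h s hs g hg
  · have hdisj : Disjoint p.support {φ | ∀ x ∈ s, φ x = g x} :=
      Set.disjoint_left.2 fun φ hφ hφg => hg fun x hx y hy hxy =>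
        hp φ hφ (by rw [hφg x hx, hφg y hy, hxy])
    rw [(p.toOuterMeasure_apply_eq_zero_iff _).2 hdisj]
    exact zero_le

theorem exists_isVertexSpread_of_card_filter_le {Ω : Finset α} (hΩ : Ω.Nonempty)
    {C : α → X → Y → Prop} {q : ℝ} (hq : 0 ≤ q)
    (hbad : (#{ω ∈ Ω | ¬ ∃ φ : X → Y, Function.Injective φ ∧ ∀ x, C ω x (φ x)} : ℝ) ≤ 1 / 2 * #Ω)
    (hC : ∀ (s : Finset X) (g : X → Y), Set.InjOn g s →
      (#{ω ∈ Ω | ∀ x ∈ s, C ω x (g x)} : ℝ) ≤ q ^ #s * #Ω) :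
    ∃ p : PMF (X → Y),
      (∀ φ ∈ p.support, Function.Injective φ ∧ ∃ ω ∈ Ω, ∀ x, C ω x (φ x)) ∧
      IsVertexSpread p (2 * q) := by
  set good := {ω ∈ Ω | ∃ φ : X → Y, Function.Injective φ ∧ ∀ x, C ω x (φ x)}
  have hhalf : (#Ω : ℝ) ≤ 2 * #good := by
    have hsplit := card_filter_add_card_filter_not (s := Ω)
      (fun ω => ∃ φ : X → Y, Function.Injective φ ∧ ∀ x, C ω x (φ x))
    rify at hsplit
    linarith
  have hgood : good.Nonempty := by
    have hΩ' : (0 : ℝ) < #Ω := by exact_mod_cast hΩ.card_pos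
    exact card_pos.1 (Nat.cast_pos.1 (by linarith : (0 : ℝ) < #good))
  have : Nonempty (X → Y) := hgood.elim fun ω hω => ⟨(mem_filter.1 hω).2.choose⟩
  choose! Φ hΦ using fun ω (hω : ω ∈ good) => (mem_filter.1 hω).2
  have hsupp : ∀ φ ∈ ((PMF.uniformOfFinset good hgood).map Φ).support, ∃ ω ∈ good, Φ ω = φ :=
    fun φ hφ => by
      simpa only [PMF.mem_support_map_iff, PMF.mem_support_uniformOfFinset_iff] using hφ
  refine ⟨(PMF.uniformOfFinset good hgood).map Φ, fun φ hφ => ?_,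
    isVertexSpread_of_injective (fun φ hφ => ?_) fun s hs g hg => ?_⟩
  · obtain ⟨ω, hω, rfl⟩ := hsupp φ hφ
    exact ⟨(hΦ ω hω).1, ω, (mem_filter.1 hω).1, (hΦ ω hω).2⟩
  · obtain ⟨ω, hω, rfl⟩ := hsupp φ hφ
    exact (hΦ ω hω).1
  · rw [PMF.toOuterMeasure_map_apply]
    refine toOuterMeasure_uniformOfFinset_le hgood _ ?_
    calc (#{ω ∈ good | ω ∈ Φ ⁻¹' {φ | ∀ x ∈ s, φ x = g x}} : ℝ)
        ≤ #{ω ∈ Ω | ∀ x ∈ s, C ω x (g x)} := by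
          refine Nat.cast_le.2 (card_le_card fun ω hω => ?_)
          obtain ⟨hω, hg⟩ := mem_filter.1 hω
          exact mem_filter.2 ⟨(mem_filter.1 hω).1, fun x hx => hg x hx ▸ (hΦ ω hω).2 x⟩
      _ ≤ q ^ #s * (2 ^ #s * #good) := (hC s g hg).trans <| by
          gcongr
          exact hhalf.trans (by gcongr; exact le_self_pow₀ one_le_two hs.card_pos.ne')
      _ = (2 * q) ^ #s * #good := by rw [mul_pow]; ring

end Spread

section SpreadMatching

variable {X Y : Type*} {K : ℕ}

/-- In the outcome `ω` of the two-sided `K`-out choice, `x` chose `y` or `y` chose `x`. -/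
def IsChosen (ω : (X → Fin K → Y) × (Y → Fin K → X)) (x : X) (y : Y) : Prop :=
  (∃ j, ω.1 x j = y) ∨ ∃ j, ω.2 y j = x

variable [Fintype X] [Fintype Y]

theorem exists_injective_isChosen (hXY : Fintype.card X = Fintype.card Y) {a : ℝ}
    {ω : (X → Fin K → Y) × (Y → Fin K → X)} (htrap : ¬ HasSmallTrap ω.1 a)
    (hgap : ¬ HasLargeGap ω.1 a) (htrap' : ¬ HasSmallTrap ω.2 a) :
    ∃ φ : X → Y, Function.Injective φ ∧ ∀ x, IsChosen ω x (φ x) := by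
  let nbrs : X → Finset Y := fun x => {y | IsChosen ω x y}
  have hnbrs : ∀ {S : Finset X} {x y}, x ∈ S → IsChosen ω x y → y ∈ S.biUnion nbrs :=
    fun {_ x _} hx h => mem_biUnion.2 ⟨x, hx, mem_filter.2 ⟨mem_univ _, h⟩⟩
  have hall : ∀ S : Finset X, #S ≤ #(S.biUnion nbrs) := by
    intro S
    by_contra! hlt
    set U := S.biUnion nbrs
    have hS : #S ≤ Fintype.card X := card_le_univ S
    have hSc : #Sᶜ = Fintype.card X - #S := card_compl S
    have hUc : #Uᶜ = Fintype.card Y - #U := card_compl U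
    rcases le_or_gt (#S : ℝ) a with hsmall | hlarge
    · obtain ⟨T, hUT, hT⟩ := exists_superset_card_eq hlt.le (hXY ▸ hS)
      exact htrap ⟨S, T, hT.symm, card_pos.1 (by omega), hsmall,
        fun x hx j => hUT (hnbrs hx (.inl ⟨j, rfl⟩))⟩
    rcases le_or_gt a #Uᶜ with hUlarge | hUsmall
    · exact hgap ⟨S, Uᶜ, hlarge.le, hUlarge,
        fun x hx j => notMem_compl.2 (hnbrs hx (.inl ⟨j, rfl⟩))⟩
    · obtain ⟨T, hST, hT⟩ := exists_superset_card_eq (s := Sᶜ) (n := #Uᶜ) (by omega) (by omega)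
      exact htrap' ⟨Uᶜ, T, hT.symm, card_pos.1 (by omega), hUsmall.le,
        fun y hy j => hST (mem_compl.2 fun hS => mem_compl.1 hy (hnbrs hS (.inr ⟨j, rfl⟩)))⟩
  obtain ⟨φ, hinj, hφ⟩ := (all_card_le_biUnion_card_iff_exists_injective nbrs).1 hall
  exact ⟨φ, hinj, fun x => (mem_filter.1 (hφ x)).2⟩

theorem card_kOut_product_filter_isChosen_le (K : ℕ) (N : X → Finset Y) (M : Y → Finset X)
    {b : ℝ} (hb : 0 ≤ b) (hN : ∀ x, 1 ≤ b * #(N x)) (hM : ∀ y, 1 ≤ b * #(M y))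
    (s : Finset X) {g : X → Y} (hg : Set.InjOn g s) :
    (#{ω ∈ kOut K N ×ˢ kOut K M | ∀ x ∈ s, IsChosen ω x (g x)} : ℝ)
      ≤ (2 * (K * b)) ^ #s * #(kOut K N ×ˢ kOut K M) := by
  have hpart : ∀ s' ∈ s.powerset, (#{ω ∈ kOut K N ×ˢ kOut K M |
      (∀ x ∈ s', ∃ j, ω.1 x j = g x) ∧ ∀ x ∈ s \ s', ∃ j, ω.2 (g x) j = x} : ℝ)
        ≤ (K * b) ^ #s * #(kOut K N ×ˢ kOut K M) := by
    intro s' hs'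
    have hleft := card_kOut_filter_exists_eq_le K N s' (f := fun x => x) (Set.injOn_id _) g hN
    have hright := card_kOut_filter_exists_eq_le K M (s \ s')
      (hg.mono (coe_subset.2 sdiff_subset)) (fun x => x) hM
    have hprod : {ω ∈ kOut K N ×ˢ kOut K M |
        (∀ x ∈ s', ∃ j, ω.1 x j = g x) ∧ ∀ x ∈ s \ s', ∃ j, ω.2 (g x) j = x} =
        {ω ∈ kOut K N | ∀ x ∈ s', ∃ j, ω x j = g x} ×ˢ
          {ω ∈ kOut K M | ∀ x ∈ s \ s', ∃ j, ω (g x) j = x} := by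
      ext ω
      simp only [mem_filter, mem_product]
      tauto
    rw [hprod, card_product, card_product, Nat.cast_mul, Nat.cast_mul,
      ← card_sdiff_add_card_eq_card (mem_powerset.1 hs'), pow_add]
    refine le_of_le_of_eq (b := (K * b) ^ #s' * #(kOut K N) * ((K * b) ^ #(s \ s') * #(kOut K M)))
      ?_ (by ring)
    gcongr
    · exact le_of_eq_of_le (by congr!) hleft
    · exact le_of_eq_of_le (by congr!) hright
  calc (#{ω ∈ kOut K N ×ˢ kOut K M | ∀ x ∈ s, IsChosen ω x (g x)} : ℝ)
      ≤ ∑ s' ∈ s.powerset, (#{ω ∈ kOut K N ×ˢ kOut K M |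
          (∀ x ∈ s', ∃ j, ω.1 x j = g x) ∧ ∀ x ∈ s \ s', ∃ j, ω.2 (g x) j = x} : ℝ) := by
        refine card_filter_le_sum_card_filter _ _ _ _ fun ω _ hω =>
          ⟨{x ∈ s | ∃ j, ω.1 x j = g x}, mem_powerset.2 (filter_subset _ _),
            fun x hx => (mem_filter.1 hx).2, fun x hx => ?_⟩
        obtain ⟨hxs, hx'⟩ := mem_sdiff.1 hx
        exact (hω x hxs).resolve_left fun h => hx' (mem_filter.2 ⟨hxs, h⟩)
    _ ≤ ∑ _s' ∈ s.powerset, (K * b) ^ #s * #(kOut K N ×ˢ kOut K M) := sum_le_sum hpart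
    _ = _ := by
        rw [sum_const, card_powerset, nsmul_eq_mul, mul_pow 2, Nat.cast_pow, Nat.cast_ofNat,
          mul_assoc]

/-- The properties of a bipartite relation `E` between two classes of size `n` under which it has
a spread perfect matching: minimum degree `cn`, and between any two sets of size `cn / 2` at least
`cn / 4` of the vertices of the first have `c'n` neighbours in the second. -/
structure IsLowerRegular (E : X → Y → Prop) (c c' : ℝ) (n : ℕ) : Prop where
  card_left : Fintype.card X = n
  card_right : Fintype.card Y = n
  degree_left : ∀ x, c * n ≤ #{y | E x y}
  degree_right : ∀ y, c * n ≤ #{x | E x y}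
  regular : ∀ (S : Finset X) (T : Finset Y), c / 2 * n ≤ #S → c / 2 * n ≤ #T →
    c / 4 * n ≤ #{x ∈ S | c' * n ≤ #{y ∈ T | E x y}}

/-- `K` extra choices per vertex make the failure of Hall's condition unlikely in a relation that
is lower-regular with parameters `c` and `c'`. -/
structure IsLargeOutdegree (K : ℕ) (c c' : ℝ) : Prop where
  trap : 9 * (1 / 2 : ℝ) ^ K ≤ c ^ 2 / 32
  gap : Real.exp (-(c' * (K + 2 : ℕ) * (c / 4))) ≤ 1 / 64

theorem exists_isLargeOutdegree {c c' : ℝ} (hc : 0 < c) (hc' : 0 < c') :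
    ∃ K, IsLargeOutdegree K c c' := by
  have hpow : Filter.Tendsto (fun K : ℕ => 9 * (1 / 2 : ℝ) ^ K) Filter.atTop (nhds (9 * 0)) :=
    (tendsto_pow_atTop_nhds_zero_of_lt_one (by norm_num) (by norm_num)).const_mul 9
  have hexp : Filter.Tendsto (fun K : ℕ => Real.exp (-(c' * (K + 2 : ℕ) * (c / 4))))
      Filter.atTop (nhds 0) := by
    refine Real.tendsto_exp_neg_atTop_nhds_zero.comp
      (Filter.Tendsto.atTop_mul_const (by positivity) (Filter.Tendsto.const_mul_atTop hc' ?_))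
    exact tendsto_natCast_atTop_atTop.comp (Filter.tendsto_add_atTop_nat 2)
  obtain ⟨K, htrap, hgap⟩ := ((hpow.eventually_le_const
    (by rw [mul_zero]; positivity : 9 * 0 < c ^ 2 / 32)).and
    (hexp.eventually_le_const (by norm_num : (0 : ℝ) < 1 / 64))).exists
  exact ⟨K, htrap, hgap⟩

namespace IsLowerRegular

variable {E : X → Y → Prop} {c c' : ℝ} {n : ℕ}

theorem card_filter_not_isChosen_le (hE : IsLowerRegular E c c' n) (hn : 0 < n) (hc : 0 < c)
    (hc' : 0 < c') (hc'1 : c' ≤ 1) (hK : IsLargeOutdegree K c c') :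
    (#{ω ∈ kOut (K + 2) (fun x => ({y | E x y} : Finset Y)) ×ˢ
        kOut (K + 2) (fun y => ({x | E x y} : Finset X)) |
        ¬ ∃ φ : X → Y, Function.Injective φ ∧ ∀ x, IsChosen ω x (φ x)} : ℝ)
      ≤ 1 / 2 * #(kOut (K + 2) (fun x => ({y | E x y} : Finset Y)) ×ˢ
        kOut (K + 2) (fun y => ({x | E x y} : Finset X))) := by
  set A := kOut (K + 2) fun x => ({y | E x y} : Finset Y)
  set B := kOut (K + 2) fun y => ({x | E x y} : Finset X)
  have htrap : (#{ω ∈ A | HasSmallTrap ω (c / 2 * n)} : ℝ) ≤ 1 / 16 * #A :=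
    card_kOut_filter_hasSmallTrap_le hE.card_left hE.card_right hc hn hE.degree_left hK.trap
  have htrap' : (#{ω ∈ B | HasSmallTrap ω (c / 2 * n)} : ℝ) ≤ 1 / 16 * #B :=
    card_kOut_filter_hasSmallTrap_le hE.card_right hE.card_left hc hn hE.degree_right hK.trap
  have hgap : (#{ω ∈ A | HasLargeGap ω (c / 2 * n)} : ℝ) ≤ 1 / 16 * #A :=
    card_kOut_filter_hasLargeGap_le hE.card_left hE.card_right hc' hc'1 hn
      (fun S T hS hT => by
        simpa only [inter_filter, inter_univ, inter_comm] using hE.regular S T hS hT) hK.gap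
  have hsub : {ω ∈ A ×ˢ B | ¬ ∃ φ : X → Y, Function.Injective φ ∧ ∀ x, IsChosen ω x (φ x)}
      ⊆ ({ω ∈ A | HasSmallTrap ω (c / 2 * n)} ×ˢ B ∪ {ω ∈ A | HasLargeGap ω (c / 2 * n)} ×ˢ B)
        ∪ A ×ˢ {ω ∈ B | HasSmallTrap ω (c / 2 * n)} := by
    intro ω hω
    obtain ⟨hAB, hω⟩ := mem_filter.1 hω
    obtain ⟨hA, hB⟩ := mem_product.1 hAB
    simp only [mem_union, mem_product, mem_filter, hA, hB, true_and, and_true]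
    by_contra! h
    exact hω (exists_injective_isChosen (hE.card_left.trans hE.card_right.symm) h.1.1 h.1.2 h.2)
  have hcard := (card_le_card hsub).trans ((card_union_le _ _).trans
    (Nat.add_le_add_right (card_union_le _ _) _))
  simp only [card_product] at hcard ⊢
  rify at hcard ⊢
  calc _ ≤ _ := hcard
    _ ≤ 1 / 16 * #A * #B + 1 / 16 * #A * #B + #A * (1 / 16 * #B) := by gcongr
    _ = 3 / 16 * (#A * #B) := by ring
    _ ≤ 1 / 2 * (#A * #B) := mul_le_mul_of_nonneg_right (by norm_num) (by positivity)

theorem exists_spread_perfectMatching (hE : IsLowerRegular E c c' n) (hn : 0 < n) (hc : 0 < c)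
    (hc' : 0 < c') (hc'1 : c' ≤ 1) (hK : IsLargeOutdegree K c c') :
    ∃ p : PMF (X → Y), (∀ φ ∈ p.support, Function.Injective φ ∧ ∀ x, E x (φ x)) ∧
      IsVertexSpread p (4 * (K + 2 : ℕ) / c / n) := by
  have hcn : 0 < c * n := mul_pos hc (Nat.cast_pos.2 hn)
  have hle : ∀ {k : ℕ}, c * n ≤ k → 1 ≤ 1 / (c * n) * k := fun {k} h => by
    rwa [one_div_mul_eq_div, one_le_div hcn]
  have hΩ : (kOut (K + 2) (fun x => ({y | E x y} : Finset Y)) ×ˢ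
      kOut (K + 2) (fun y => ({x | E x y} : Finset X))).Nonempty :=
    (kOut_nonempty fun x => card_pos.1 (Nat.cast_pos.1 (hcn.trans_le (hE.degree_left x)))).product
      (kOut_nonempty fun y => card_pos.1 (Nat.cast_pos.1 (hcn.trans_le (hE.degree_right y))))
  have hchosen := fun (s : Finset X) (g : X → Y) (hg : Set.InjOn g s) =>
    card_kOut_product_filter_isChosen_le (K + 2) _ _ (one_div_nonneg.2 hcn.le)
      (fun x => hle (hE.degree_left x)) (fun y => hle (hE.degree_right y)) s hg
  obtain ⟨p, hp, hspread⟩ := exists_isVertexSpread_of_card_filter_le (C := IsChosen)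
    (q := 2 * ((K + 2 : ℕ) * (1 / (c * n)))) hΩ (by positivity)
    (by convert hE.card_filter_not_isChosen_le hn hc hc' hc'1 hK)
    fun s g hg => by convert hchosen s g hg
  have hq : 2 * (2 * ((K + 2 : ℕ) * (1 / (c * n)))) = 4 * (K + 2 : ℕ) / c / n := by
    field_simp; norm_num
  refine ⟨p, fun φ hφ => ⟨(hp φ hφ).1, fun x => ?_⟩, hq ▸ hspread⟩
  obtain ⟨-, ω, hω, hφω⟩ := hp φ hφ
  obtain ⟨hN, hM⟩ := mem_product.1 hω
  rcases hφω x with ⟨j, hj⟩ | ⟨j, hj⟩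
  · exact hj ▸ (mem_filter.1 (mem_kOut.1 hN x j)).2
  · have hE' := (mem_filter.1 (mem_kOut.1 hM (φ x) j)).2
    rwa [hj] at hE'

end IsLowerRegular

end SpreadMatching

/-! ### Random processes and supermartingales -/

section RandomProcess

variable {σ V : Type*} {opts : σ → Finset V} {next : σ → V → σ} {Inv : σ → Prop}

/-- Consider the process that moves from the state `s` to `next s v` for a uniformly random
`v ∈ opts s`. The nonnegative potential `Φ` does not increase on average in a step of this process
from a state satisfying `Inv`. -/
structure IsSupermartingale (opts : σ → Finset V) (next : σ → V → σ) (Inv : σ → Prop)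
    (Φ : σ → ℝ) : Prop where
  nonneg : ∀ s, 0 ≤ Φ s
  sum_le : ∀ s, Inv s → ∑ v ∈ opts s, Φ (next s v) ≤ #(opts s) * Φ s

theorem tsum_bind_mul (p : PMF σ) (q : σ → PMF V) (f : V → ENNReal) :
    ∑' v, p.bind q v * f v = ∑' s, p s * ∑' v, q s v * f v := by
  simp_rw [PMF.bind_apply, ← ENNReal.tsum_mul_right, ← ENNReal.tsum_mul_left]
  rw [ENNReal.tsum_comm]
  simp_rw [mul_assoc]

theorem tsum_uniformOfFinset_mul {s : Finset V} (hs : s.Nonempty) (f : V → ENNReal) :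
    ∑' v, PMF.uniformOfFinset s hs v * f v = (#s : ENNReal)⁻¹ * ∑ v ∈ s, f v := by
  rw [tsum_eq_sum (s := s) fun v hv => by
    rw [PMF.uniformOfFinset_apply_of_notMem hs hv, zero_mul], mul_sum]
  exact sum_congr rfl fun v hv => by rw [PMF.uniformOfFinset_apply_of_mem hs hv]

theorem IsSupermartingale.tsum_uniformOfFinset_le {Φ : σ → ℝ}
    (hΦ : IsSupermartingale opts next Inv Φ) {s : σ} (hs : Inv s) (ho : (opts s).Nonempty) :
    ∑' v, PMF.uniformOfFinset (opts s) ho v * ENNReal.ofReal (Φ (next s v))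
      ≤ ENNReal.ofReal (Φ s) := by
  have hpos : (0 : ℝ) < #(opts s) := by exact_mod_cast ho.card_pos
  rw [tsum_uniformOfFinset_mul, ← ENNReal.ofReal_sum_of_nonneg fun _ _ => hΦ.nonneg _, mul_comm,
    ← div_eq_mul_inv, ← ENNReal.ofReal_natCast, ← ENNReal.ofReal_div_of_pos hpos]
  exact ENNReal.ofReal_le_ofReal ((div_le_iff₀' hpos).2 (hΦ.sum_le s hs))

theorem exists_terminal_pmf (rank : σ → ℕ) {M : ℕ} (hM : ∀ s, rank s ≤ M)
    (hrank : ∀ s, ∀ v ∈ opts s, rank s < rank (next s v))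
    (hInv : ∀ s, Inv s → ∀ v ∈ opts s, Inv (next s v)) {s₀ : σ} (h₀ : Inv s₀) :
    ∃ p : PMF σ, (∀ s ∈ p.support, Inv s ∧ opts s = ∅) ∧
      ∀ Φ, IsSupermartingale opts next Inv Φ →
        ∑' s, p s * ENNReal.ofReal (Φ s) ≤ ENNReal.ofReal (Φ s₀) := by
  induction hk : M - rank s₀ using Nat.strong_induction_on generalizing s₀ with
  | _ k ih =>
    obtain ho | ho := (opts s₀).eq_empty_or_nonempty
    · refine ⟨PMF.pure s₀, fun s hs => ?_, fun Φ _ => ?_⟩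
      · obtain rfl := (PMF.mem_support_pure_iff _ _).1 hs
        exact ⟨h₀, ho⟩
      · rw [tsum_eq_single s₀ fun s hs => by rw [PMF.pure_apply_of_ne _ _ hs, zero_mul],
          PMF.pure_apply_self, one_mul]
    have hnext : ∀ v, ∃ p : PMF σ, v ∈ opts s₀ → (∀ s ∈ p.support, Inv s ∧ opts s = ∅) ∧
        ∀ Φ, IsSupermartingale opts next Inv Φ →
          ∑' s, p s * ENNReal.ofReal (Φ s) ≤ ENNReal.ofReal (Φ (next s₀ v)) := by
      intro v
      by_cases hv : v ∈ opts s₀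
      · have hlt := hrank s₀ v hv
        have hle := hM (next s₀ v)
        obtain ⟨p, hp⟩ := ih _ (by omega) (hInv s₀ h₀ v hv) rfl
        exact ⟨p, fun _ => hp⟩
      · exact ⟨PMF.pure s₀, fun h => absurd h hv⟩
    choose p hp using hnext
    refine ⟨(PMF.uniformOfFinset (opts s₀) ho).bind p, fun s hs => ?_, fun Φ hΦ => ?_⟩
    · obtain ⟨v, hv, hs⟩ := (PMF.mem_support_bind_iff _ _ _).1 hs
      exact (hp v ((PMF.mem_support_uniformOfFinset_iff ho v).1 hv)).1 s hs
    · rw [tsum_bind_mul]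
      refine le_trans (ENNReal.tsum_le_tsum fun v => ?_) (hΦ.tsum_uniformOfFinset_le h₀ ho)
      by_cases hv : v ∈ opts s₀
      · gcongr
        exact (hp v hv).2 Φ hΦ
      · rw [PMF.uniformOfFinset_apply_of_notMem ho hv, zero_mul, zero_mul]

theorem toOuterMeasure_le_of_one_le (p : PMF σ) {S : Set σ} {Φ : σ → ℝ} {K b : ℝ} (hK : 0 ≤ K)
    (hS : ∀ s ∈ S, 1 ≤ K * Φ s) (hΦ : ∑' s, p s * ENNReal.ofReal (Φ s) ≤ ENNReal.ofReal b) :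
    p.toOuterMeasure S ≤ ENNReal.ofReal (K * b) := by
  rw [ENNReal.ofReal_mul hK, PMF.toOuterMeasure_apply]
  refine le_trans ?_ (mul_le_mul_right hΦ _)
  rw [← ENNReal.tsum_mul_left]
  refine ENNReal.tsum_le_tsum fun s => Set.indicator_apply_le' (fun hs => ?_) fun _ => zero_le
  rw [mul_left_comm, ← ENNReal.ofReal_mul hK]
  exact le_mul_of_one_le_right' (ENNReal.one_le_ofReal.2 (hS s hs))

theorem sum_prod_le_card_mul_prod {ι : Type*} {O : Finset V} {I : Finset ι} {a : ι → ℝ}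
    {b : ι → V → ℝ} (ha : ∀ i, 0 ≤ a i) (hb : ∀ i v, 0 ≤ b i v) (i₀ : ι)
    (hle : ∀ i ∈ I, i ≠ i₀ → ∀ v ∈ O, b i v ≤ a i)
    (hsum : i₀ ∈ I → ∑ v ∈ O, b i₀ v ≤ #O * a i₀) :
    ∑ v ∈ O, ∏ i ∈ I, b i v ≤ #O * ∏ i ∈ I, a i := by
  by_cases hi₀ : i₀ ∈ I
  · calc ∑ v ∈ O, ∏ i ∈ I, b i v
        ≤ ∑ v ∈ O, b i₀ v * ∏ i ∈ I.erase i₀, a i := by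
          refine sum_le_sum fun v hv => ?_
          rw [← mul_prod_erase I (fun i => b i v) hi₀]
          exact mul_le_mul_of_nonneg_left (prod_le_prod (fun i _ => hb i v) fun i hi =>
            hle i (mem_of_mem_erase hi) (ne_of_mem_erase hi) v hv) (hb i₀ v)
      _ = (∑ v ∈ O, b i₀ v) * ∏ i ∈ I.erase i₀, a i := by rw [sum_mul]
      _ ≤ #O * a i₀ * ∏ i ∈ I.erase i₀, a i :=
          mul_le_mul_of_nonneg_right (hsum hi₀) (prod_nonneg fun i _ => ha i)
      _ = #O * ∏ i ∈ I, a i := by rw [mul_assoc, mul_prod_erase I a hi₀]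
  · rw [← nsmul_eq_mul]
    exact sum_le_card_nsmul _ _ _ fun v hv =>
      prod_le_prod (fun i _ => hb i v) fun i hi => hle i hi (ne_of_mem_of_not_mem hi hi₀) v hv

end RandomProcess

section ConditionalDistribution

variable {σ : Type*}

theorem filter_apply_le_two_mul (p : PMF σ) {S : Set σ} (hS : ∃ s ∈ S, s ∈ p.support)
    (hSc : p.toOuterMeasure Sᶜ ≤ ENNReal.ofReal (1 / 2)) (s : σ) :
    p.filter S hS s ≤ 2 * p s := by
  have hone : 1 ≤ p.toOuterMeasure S + p.toOuterMeasure Sᶜ := by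
    refine le_trans ?_ (MeasureTheory.measure_union_le _ _)
    rw [Set.union_compl_self, (p.toOuterMeasure_apply_eq_one_iff _).2 (Set.subset_univ _)]
  have hhalf : 2⁻¹ ≤ p.toOuterMeasure S := by
    have hSc' : p.toOuterMeasure Sᶜ ≤ 2⁻¹ := hSc.trans_eq (by
      rw [one_div, ENNReal.ofReal_inv_of_pos two_pos, ENNReal.ofReal_ofNat])
    refine (ENNReal.add_le_add_iff_right (a := 2⁻¹) (by simp)).1 ?_
    rw [ENNReal.inv_two_add_inv_two]
    exact hone.trans (by gcongr)
  rw [PMF.filter_apply, mul_comm, ← PMF.toOuterMeasure_apply]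
  refine mul_le_mul' ?_ (Set.indicator_le_self' (fun _ _ => zero_le) s)
  exact ENNReal.inv_le_iff_inv_le.1 hhalf

end ConditionalDistribution

section ProductDistribution

variable {ι : Type*} [Fintype ι] {Z : ι → Type*} [∀ i, Fintype (Z i)]

/-- The joint distribution of independent random elements with distributions `p i`. -/
noncomputable def productPMF (p : ∀ i, PMF (Z i)) : PMF (∀ i, Z i) :=
  PMF.ofFintype (fun ψ => ∏ i, p i (ψ i)) <| by
    rw [← Fintype.piFinset_univ, ← prod_univ_sum]
    exact prod_eq_one fun i _ => (tsum_fintype (p i)).symm.trans (p i).tsum_coe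

theorem mem_support_of_mem_support_productPMF {p : ∀ i, PMF (Z i)} {ψ : ∀ i, Z i}
    (hψ : ψ ∈ (productPMF p).support) (i : ι) : ψ i ∈ (p i).support := by
  rw [productPMF, PMF.mem_support_ofFintype_iff, prod_ne_zero_iff] at hψ
  exact (PMF.mem_support_iff _ _).2 (hψ i (mem_univ i))

theorem toOuterMeasure_productPMF_pi (p : ∀ i, PMF (Z i)) (S : ∀ i, Set (Z i)) :
    (productPMF p).toOuterMeasure {ψ | ∀ i, ψ i ∈ S i} = ∏ i, (p i).toOuterMeasure (S i) := by
  simp only [PMF.toOuterMeasure_apply_fintype]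
  rw [prod_univ_sum, Fintype.piFinset_univ]
  refine sum_congr rfl fun ψ _ => ?_
  by_cases hψ : ∀ i, ψ i ∈ S i
  · rw [Set.indicator_of_mem (by exact hψ), productPMF, PMF.ofFintype_apply]
    exact prod_congr rfl fun i _ => (Set.indicator_of_mem (hψ i) _).symm
  · rw [Set.indicator_of_notMem (by exact hψ)]
    obtain ⟨i, hi⟩ := not_forall.1 hψ
    exact (prod_eq_zero (mem_univ i) (Set.indicator_of_notMem hi _)).symm

end ProductDistribution

/-! ### Partial embeddings -/

section PartialEmbedding

variable {U V : Type*}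

theorem update_some_eq_none_iff {f : U → Option V} {z x : U} {v : V} :
    Function.update f z (some v) x = none ↔ f x = none ∧ x ≠ z := by
  by_cases hx : x = z <;> simp [hx]

theorem update_some_eq_some_iff {f : U → Option V} {z x : U} {v w : V} (hz : f z = none) :
    Function.update f z (some v) x = some w ↔ f x = some w ∨ x = z ∧ w = v := by
  obtain rfl | hx := eq_or_ne x z
  · simp [hz, eq_comm]
  · simp [hx]

/-- The vertices on which the partial map `f` is defined. -/
noncomputable def domain [Fintype U] (f : U → Option V) : Finset U := {x | f x ≠ none}

@[simp]
theorem mem_domain [Fintype U] {f : U → Option V} {x : U} : x ∈ domain f ↔ f x ≠ none := by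
  simp [domain]

theorem domain_update [Fintype U] (f : U → Option V) (z : U) (v : V) :
    domain (Function.update f z (some v)) = insert z (domain f) := by
  ext x
  simp only [mem_domain, mem_insert, ne_eq, update_some_eq_none_iff]
  tauto

theorem card_domain_update [Fintype U] {f : U → Option V} {z : U} (hz : f z = none) (v : V) :
    #(domain (Function.update f z (some v))) = #(domain f) + 1 := by
  rw [domain_update, card_insert_of_notMem (by simp [hz])]

/-- The vertices of the host graph which are images under the partial map `f`. -/
noncomputable def usedVertices [Fintype V] (f : U → Option V) : Finset V := {v | ∃ x, f x = some v}

@[simp]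
theorem mem_usedVertices [Fintype V] {f : U → Option V} {v : V} :
    v ∈ usedVertices f ↔ ∃ x, f x = some v := by
  simp [usedVertices]

theorem usedVertices_update [Fintype V] {f : U → Option V} {z : U} (hz : f z = none) (v : V) :
    usedVertices (Function.update f z (some v)) = insert v (usedVertices f) := by
  ext w
  simp only [mem_usedVertices, mem_insert, update_some_eq_some_iff hz]
  exact ⟨fun ⟨x, hx⟩ => hx.elim (fun hx => .inr ⟨x, hx⟩) fun hx => .inl hx.2,
    fun hw => hw.elim (fun hw => ⟨z, .inr ⟨rfl, hw⟩⟩) fun ⟨x, hx⟩ => ⟨x, .inl hx⟩⟩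

theorem card_usedVertices_le_card_domain [Fintype U] [Fintype V] (f : U → Option V) :
    #(usedVertices f) ≤ #(domain f) := by
  have hsub : usedVertices f ⊆ (domain f).biUnion fun x => (f x).toFinset := fun v hv => by
    obtain ⟨x, hx⟩ := mem_usedVertices.1 hv
    exact mem_biUnion.2 ⟨x, by simp [hx], by simp [hx]⟩
  refine (card_le_card hsub).trans ((card_biUnion_le_card_mul _ _ 1 fun x _ => ?_).trans_eq
    (mul_one _))
  cases f x <;> simp

/-- The problem of embedding `guest` into `host` so that the image of each vertex `x` lies in
`target x`. The partial solutions are partial maps, encoded as `f : U → Option V`. -/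
structure EmbeddingProblem (U V : Type*) where
  host : SimpleGraph V
  guest : SimpleGraph U
  target : U → Finset V

namespace EmbeddingProblem

section Neighbours

variable [Fintype U] (P : EmbeddingProblem U V) (f : U → Option V) (y : U)

/-- The neighbours of `y` on which the partial map `f` is defined. -/
noncomputable def embeddedNbrs : Finset U := {z ∈ P.guest.neighborFinset y | f z ≠ none}

/-- The neighbours of `y` on which the partial map `f` is not defined. -/
noncomputable def unembeddedNbrs : Finset U := {z ∈ P.guest.neighborFinset y | f z = none}

variable {P f y} {z : U} {v : V}

@[simp]
theorem mem_embeddedNbrs : z ∈ P.embeddedNbrs f y ↔ P.guest.Adj y z ∧ f z ≠ none := by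
  simp [embeddedNbrs]

@[simp]
theorem mem_unembeddedNbrs : z ∈ P.unembeddedNbrs f y ↔ P.guest.Adj y z ∧ f z = none := by
  simp [unembeddedNbrs]

theorem embeddedNbrs_update_of_adj (hyz : P.guest.Adj y z) :
    P.embeddedNbrs (Function.update f z (some v)) y = insert z (P.embeddedNbrs f y) := by
  ext x
  simp only [mem_embeddedNbrs, mem_insert, ne_eq, update_some_eq_none_iff]
  grind

theorem embeddedNbrs_update_of_not_adj (hyz : ¬ P.guest.Adj y z) :
    P.embeddedNbrs (Function.update f z (some v)) y = P.embeddedNbrs f y := by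
  ext x
  simp only [mem_embeddedNbrs, ne_eq, update_some_eq_none_iff]
  grind

theorem card_embeddedNbrs_update_of_adj (hz : f z = none) (hyz : P.guest.Adj y z) :
    #(P.embeddedNbrs (Function.update f z (some v)) y) = #(P.embeddedNbrs f y) + 1 := by
  rw [embeddedNbrs_update_of_adj hyz, card_insert_of_notMem (by simp [hz])]

theorem unembeddedNbrs_update :
    P.unembeddedNbrs (Function.update f z (some v)) y = (P.unembeddedNbrs f y).erase z := by
  ext x
  simp only [mem_unembeddedNbrs, mem_erase, update_some_eq_none_iff]
  tauto

theorem unembeddedNbrs_update_of_not_adj (hyz : ¬ P.guest.Adj y z) :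
    P.unembeddedNbrs (Function.update f z (some v)) y = P.unembeddedNbrs f y := by
  rw [unembeddedNbrs_update, erase_eq_of_notMem fun h => hyz (mem_unembeddedNbrs.1 h).1]

@[simp]
theorem embeddedNbrs_none : P.embeddedNbrs (fun _ => none) y = ∅ := by
  simp [embeddedNbrs]

end Neighbours

section Candidates

variable [Fintype U] [Fintype V] (P : EmbeddingProblem U V) (f : U → Option V) (y : U)

/-- The vertices of `target y` which are adjacent to the images of all embedded neighbours of `y`,
whether or not they are already images themselves. -/
noncomputable def candidates : Finset V :=
  {v ∈ P.target y | ∀ z w, P.guest.Adj y z → f z = some w → P.host.Adj v w}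

/-- The candidates for the image of `y` which are not yet used. -/
noncomputable def freeCandidates : Finset V := P.candidates f y \ usedVertices f

variable {P f y} {z : U} {v w : V}

theorem mem_candidates : v ∈ P.candidates f y ↔
    v ∈ P.target y ∧ ∀ z w, P.guest.Adj y z → f z = some w → P.host.Adj v w := by
  simp [candidates]

theorem mem_freeCandidates :
    v ∈ P.freeCandidates f y ↔ v ∈ P.candidates f y ∧ ∀ x, f x ≠ some v := by
  simp [freeCandidates]

theorem candidates_update_of_adj (hz : f z = none) (hyz : P.guest.Adj y z) :
    P.candidates (Function.update f z (some v)) y = {w ∈ P.candidates f y | P.host.Adj w v} := by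
  ext w
  simp only [mem_candidates, mem_filter, update_some_eq_some_iff hz]
  grind

theorem candidates_update_of_not_adj (hz : f z = none) (hyz : ¬ P.guest.Adj y z) :
    P.candidates (Function.update f z (some v)) y = P.candidates f y := by
  ext w
  simp only [mem_candidates, update_some_eq_some_iff hz]
  grind

theorem candidates_update_subset (hz : f z = none) :
    P.candidates (Function.update f z (some v)) y ⊆ P.candidates f y := by
  by_cases hyz : P.guest.Adj y z
  · rw [candidates_update_of_adj hz hyz]
    exact filter_subset _ _
  · rw [candidates_update_of_not_adj hz hyz]

theorem freeCandidates_update_of_adj (hz : f z = none) (hyz : P.guest.Adj y z) :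
    P.freeCandidates (Function.update f z (some v)) y
      = {w ∈ P.freeCandidates f y | P.host.Adj w v} := by
  ext w
  simp only [mem_freeCandidates, candidates_update_of_adj hz hyz, mem_filter,
    ne_eq, update_some_eq_some_iff hz]
  exact ⟨fun h => ⟨⟨h.1.1, fun x hx => h.2 x (.inl hx)⟩, h.1.2⟩, fun h => ⟨⟨h.1.1, h.2⟩,
    fun x hx => hx.elim (h.1.2 x) fun hx => (P.host.ne_of_adj h.2) hx.2⟩⟩

theorem freeCandidates_update_of_not_adj (hz : f z = none) (hyz : ¬ P.guest.Adj y z) :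
    P.freeCandidates (Function.update f z (some v)) y = (P.freeCandidates f y).erase v := by
  rw [freeCandidates, candidates_update_of_not_adj hz hyz, usedVertices_update hz,
    sdiff_insert, freeCandidates]

theorem freeCandidates_update_subset (hz : f z = none) :
    P.freeCandidates (Function.update f z (some v)) y ⊆ P.freeCandidates f y := by
  rw [freeCandidates, freeCandidates, usedVertices_update hz]
  exact sdiff_subset_sdiff (candidates_update_subset hz) (subset_insert _ _)

@[simp]
theorem candidates_none : P.candidates (fun _ => none) y = P.target y := by
  simp [candidates]

@[simp]
theorem freeCandidates_none : P.freeCandidates (fun _ => none) y = P.target y := by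
  simp [freeCandidates, usedVertices]

variable (P f y) in
/-- The images of `y` which keep at least the proportion `d` of the free candidates of each
unembedded neighbour of `y`. -/
noncomputable def allowedImages (d : ℝ) : Finset V :=
  {v ∈ P.freeCandidates f y | ∀ x ∈ P.unembeddedNbrs f y,
    d * #(P.freeCandidates f x) ≤ #{w ∈ P.freeCandidates f x | P.host.Adj w v}}

variable {d : ℝ}

theorem mem_allowedImages : v ∈ P.allowedImages f y d ↔ v ∈ P.freeCandidates f y ∧
    ∀ x, P.guest.Adj y x → f x = none →
      d * #(P.freeCandidates f x) ≤ #{w ∈ P.freeCandidates f x | P.host.Adj w v} := by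
  simp [allowedImages]

theorem pow_mul_sub_le_card_freeCandidates_update {a t : ℝ} (hd₀ : 0 ≤ d) (hd₁ : d ≤ 1)
    (ht : -1 ≤ t) (hz : f z = none) (hv : v ∈ P.allowedImages f z d) (hy : f y = none)
    (h : d ^ #(P.embeddedNbrs f y) * a - t ≤ #(P.freeCandidates f y)) :
    d ^ #(P.embeddedNbrs (Function.update f z (some v)) y) * a - (t + 1)
      ≤ #(P.freeCandidates (Function.update f z (some v)) y) := by
  by_cases hyz : P.guest.Adj y z
  · rw [card_embeddedNbrs_update_of_adj hz hyz, freeCandidates_update_of_adj hz hyz]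
    have hkeep := (mem_allowedImages.1 hv).2 y hyz.symm hy
    have hdh := mul_le_mul_of_nonneg_left h hd₀
    have hdt : d * t ≤ t + 1 := by nlinarith
    calc _ = d * (d ^ #(P.embeddedNbrs f y) * a - t) + d * t - (t + 1) := by ring
      _ ≤ _ := by linarith
  · rw [embeddedNbrs_update_of_not_adj hyz, freeCandidates_update_of_not_adj hz hyz]
    have hloss : (#(P.freeCandidates f y) : ℝ) ≤ #((P.freeCandidates f y).erase v) + 1 := by
      exact_mod_cast tsub_le_iff_right.1 pred_card_le_card_erase
    linarith

end Candidates

end EmbeddingProblem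

end PartialEmbedding

/-! ### The random greedy algorithm -/

/-- The vertices with fewer than `d * #Y` neighbours in `Y`. -/
noncomputable def atypicalVertices {V : Type*} [Fintype V] (G : SimpleGraph V) (d : ℝ)
    (Y : Finset V) : Finset V :=
  {v | #{w ∈ Y | G.Adj w v} < d * #Y}

/-- The constants of the random greedy embedding algorithm that do not depend on `N`. The pairs of
classes have density about `d` and minimum degree `δ * N`, and target sets have size at least
`α * N`. Each class contains about `μ * N` buffer vertices, a vertex is critical if it has at most
`κ * N` free candidates, and at most `γ * N` critical vertices are tolerated in each class. There
are `c₀ * N` options in each step, of which `q * N` preserve a given candidate of a buffer vertex.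
Candidate sets are tested against sets of size `τ * N`, one scattered set of `γ' * N` vertices at a
time, and the final matching takes place in a lower regular bipartite graph of density `c₂`. -/
structure BlowUpConstants where
  (d δ α μ κ γ c₀ q τ γ' c₂ : ℝ)

/-- The inequalities between the constants of the algorithm that involve neither `ε` nor the sizes
of the classes. -/
structure BlowUpConstants.IsHierarchy (K : BlowUpConstants) (r Δ : ℕ) : Prop where
  d_pos : 0 < K.d
  d_le_one : K.d ≤ 1
  δ_pos : 0 < K.δ
  α_pos : 0 < K.α
  μ_pos : 0 < K.μ
  κ_pos : 0 < K.κ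
  γ_pos : 0 < K.γ
  c₀_pos : 0 < K.c₀
  q_pos : 0 < K.q
  q_le_one : K.q ≤ 1
  τ_pos : 0 < K.τ
  γ'_pos : 0 < K.γ'
  c₂_pos : 0 < K.c₂
  μ_le_one : 4 * (r * (1 + Δ + Δ ^ 2 + Δ ^ 3)) * K.μ ≤ 1
  μ_le_α : 4 * (r * Δ) * K.μ ≤ K.d ^ Δ * K.α
  μ_le_δ : 8 * (r * Δ) * K.μ ≤ K.d ^ Δ * K.δ
  κ_le_α : K.κ ≤ K.d ^ Δ * K.α / 4
  κ_le_μ : K.κ ≤ K.d ^ Δ * K.μ / 4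
  γ_le_κ : r * K.γ ≤ K.d ^ Δ * K.κ / 4
  γ_le_μ : K.γ ≤ K.μ / 4
  γ_le_one : K.γ ≤ 1
  q_le_δ : K.q ≤ K.d ^ Δ * K.δ / 2
  c₀_le : K.c₀ ≤ K.d ^ Δ * K.κ / 4
  τ_le_μ : K.τ ≤ K.μ / 2
  scattered_le : (1 + Δ * Δ) * K.γ' ≤ K.γ / 2
  c₂_add_γ_le : K.c₂ * (2 * K.μ) + K.γ ≤ K.q ^ Δ * K.μ / 4
  c₂_le_κ : K.c₂ * (2 * K.μ) ≤ K.κ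
  τ_le_c₂ : K.τ ≤ K.c₂ * K.μ / 4
  γ_le_c₂ : K.γ ≤ K.c₂ * K.μ / 8
  two_mul_d_le : 2 * K.d ≤ K.δ
  α_le_one : K.α ≤ 1

/-- The inequalities between the constants which are used in the construction of the buffer and in
the analysis of the algorithm for classes of size `N` with exactly `m` buffer vertices each. -/
structure BlowUpConstants.IsAdmissible (K : BlowUpConstants) (r Δ : ℕ) (ε β : ℝ) (N m : ℕ) : Prop
    extends K.IsHierarchy r Δ where
  ε_pos : 0 < ε
  N_pos : 0 < N
  μ_mul_le : K.μ * N ≤ m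
  le_two_mul_μ : m ≤ 2 * K.μ * N
  near_buffer_lt : r * m * (1 + Δ + Δ ^ 2 + Δ ^ 3) + (1 + Δ) * (β * N) < N
  bufferNbrs_le : r * m * Δ ≤ K.d ^ Δ * (K.α * N) / 2
  critical_le_target : K.κ * N + 1 ≤ K.d ^ Δ * (K.α * N) / 2
  queue_le : r * (K.γ * N + 1) ≤ K.d ^ Δ * (K.κ * N) / 2
  ε_le_d : ε ≤ K.d
  Δ_mul_ε_le : Δ * ε ≤ K.c₀
  ε_le_c₀ : ε ≤ K.c₀
  ε_le_δ : ε ≤ K.d ^ Δ * K.δ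
  ε_le_τ : ε ≤ K.d ^ Δ * K.τ
  alive_le : r * m * Δ + 2 * (Δ * (ε * N)) ≤ (K.d ^ Δ * K.δ - K.q) * N
  β_le : β ≤ K.γ / 2
  queue_le_buffer : K.γ * N + 1 ≤ K.μ * N / 2
  critical_le_buffer : K.κ * N + 1 ≤ K.d ^ Δ * (K.μ * N / 2)
  bad_le_exp : Δ * (ε / K.c₀) ≤ Real.exp (-(4 / K.γ'))
  alive_tail_le : r * N * Real.exp (-(K.q ^ Δ * K.μ * N / 4)) ≤ 1 / 4
  bad_tail_le : r * Real.exp (-(2 * N)) ≤ 1 / 4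

/-- An embedding problem as in the blow-up lemma whose parts are indexed by `Fin r` and all have
size `N`, together with a set `buffer` of vertices of the guest graph, `m` in each part, which are
pairwise far apart and have full target sets, and which the random greedy algorithm tries to embed
last. The set `exceptional` contains all vertices whose target sets are restricted. -/
structure BlowUpInstance (K : BlowUpConstants) (r Δ N m : ℕ) (ε β : ℝ) (U V : Type*)
    [Fintype U] [Fintype V] extends EmbeddingProblem U V where
  admissible : K.IsAdmissible r Δ ε β N m
  reduced : SimpleGraph (Fin r)
  guestPart : U → Fin r
  hostPart : V → Fin r
  exceptional : Finset U
  buffer : Finset U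
  card_guestPart : ∀ i, #{x | guestPart x = i} = N
  card_hostPart : ∀ i, #{v | hostPart v = i} = N
  regular : ∀ i j, reduced.Adj i j → ∀ Y : Finset V, (∀ v ∈ Y, hostPart v = j) → ε * N ≤ #Y →
    #{v ∈ atypicalVertices host K.d Y | hostPart v = i} ≤ ε * N
  le_degree : ∀ v j, reduced.Adj (hostPart v) j → K.δ * N ≤ #{w | hostPart w = j ∧ host.Adj w v}
  degree_le : ∀ x, guest.degree x ≤ Δ
  reduced_adj : ∀ x y, guest.Adj x y → reduced.Adj (guestPart x) (guestPart y)
  hostPart_of_mem_target : ∀ x, ∀ v ∈ target x, hostPart v = guestPart x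
  le_card_target : ∀ x, K.α * N ≤ #(target x)
  mem_target : ∀ x ∉ exceptional, ∀ v, hostPart v = guestPart x → v ∈ target x
  card_exceptional_le : #exceptional ≤ β * N
  card_buffer : ∀ i, #{x ∈ buffer | guestPart x = i} = m
  buffer_separated : ∀ b ∈ buffer, ∀ b' ∈ buffer, b ≠ b' → 3 < guest.edist b b'
  exceptional_separated : ∀ b ∈ buffer, ∀ x ∈ exceptional, 1 < guest.edist b x

/-- The state of the random greedy algorithm: the current partial embedding, and the set of all
vertices which were embedded because they had become critical. -/
structure EmbedState (U V : Type*) where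
  map : U → Option V
  queue : Finset U

namespace BlowUpInstance

variable {K : BlowUpConstants} {r Δ N m : ℕ} {ε β : ℝ} {U V : Type*} [Fintype U] [Fintype V]
  (D : BlowUpInstance K r Δ N m ε β U V)

/-- The neighbours of buffer vertices. The algorithm embeds them first. -/
noncomputable def bufferNbrs : Finset U := {x | ∃ b ∈ D.buffer, D.guest.Adj b x}

/-- Some neighbour of the buffer is still unembedded. -/
def HasPending (f : U → Option V) : Prop := ∃ x ∈ D.bufferNbrs, f x = none

/-- An unembedded vertex is critical if it is running out of free candidates. -/
def IsCritical (f : U → Option V) (y : U) : Prop :=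
  f y = none ∧ #(D.freeCandidates f y) < K.κ * N + 1

/-- The vertex which the algorithm embeds next: a neighbour of the buffer as long as there are
any, then a critical vertex if there is one, and otherwise an arbitrary vertex outside the
buffer. -/
noncomputable def nextVertex (f : U → Option V) : Option U :=
  if hpend : ∃ x, x ∈ D.bufferNbrs ∧ f x = none then some hpend.choose
  else if hcrit : ∃ x, D.IsCritical f x then some hcrit.choose
  else if hrest : ∃ x, f x = none ∧ x ∉ D.buffer then some hrest.choose
  else none

/-- The queue is still short enough for the algorithm to continue. -/
def IsShortQueue (Q : Finset U) : Prop := ∀ i, #{x ∈ Q | D.guestPart x = i} ≤ K.γ * N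

/-- The possible images of the next vertex. There are none if the algorithm has terminated. -/
noncomputable def options (s : EmbedState U V) : Finset V :=
  if D.IsShortQueue s.queue then
    (D.nextVertex s.map).elim ∅ fun z => D.allowedImages s.map z K.d
  else ∅

/-- The state after the next vertex has been mapped to `v`. -/
noncomputable def step (s : EmbedState U V) (v : V) : EmbedState U V :=
  (D.nextVertex s.map).elim s fun z =>
    { map := Function.update s.map z (some v)
      queue := if ¬ D.HasPending s.map ∧ D.IsCritical s.map z then insert z s.queue
        else s.queue }

/-- In the first stage of the algorithm the neighbours of the buffer are embedded. Target sets are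
linear in `N` and few vertices have been embedded, so there are no critical vertices. -/
structure IsFirstStage (s : EmbedState U V) : Prop where
  domain_subset : domain s.map ⊆ D.bufferNbrs
  queue_eq : s.queue = ∅
  le_card_free : ∀ y, s.map y = none →
    K.d ^ #(D.embeddedNbrs s.map y) * (K.α * N) - #(domain s.map) ≤ #(D.freeCandidates s.map y)

/-- In the second stage of the algorithm a vertex has more than `K.κ * N` free candidates until it
becomes critical, and from then on its free candidates are only used by vertices in the queue. -/
structure IsSecondStage (s : EmbedState U V) : Prop where
  not_hasPending : ¬ D.HasPending s.map
  le_card_free : ∀ y, s.map y = none →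
    K.d ^ #(D.embeddedNbrs s.map y) * (K.κ * N) - #s.queue ≤ #(D.freeCandidates s.map y)

/-- The invariant of the random greedy algorithm. -/
structure IsValid (s : EmbedState U V) : Prop where
  injective : ∀ x y v, s.map x = some v → s.map y = some v → x = y
  mem_candidates : ∀ x v, s.map x = some v → v ∈ D.candidates s.map x
  queue_embedded : ∀ x ∈ s.queue, s.map x ≠ none
  card_free_of_mem_queue : ∀ x ∈ s.queue, #(D.freeCandidates s.map x) < K.κ * N + 1
  card_queue_le : ∀ i, #{x ∈ s.queue | D.guestPart x = i} ≤ K.γ * N + 1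
  mem_queue_of_mem_buffer : ∀ x ∈ D.buffer, s.map x ≠ none → x ∈ s.queue
  stage : D.IsFirstStage s ∨ D.IsSecondStage s

variable {D} {f : U → Option V} {s : EmbedState U V} {x y z : U} {v : V}

theorem mem_bufferNbrs : x ∈ D.bufferNbrs ↔ ∃ b ∈ D.buffer, D.guest.Adj b x := by
  simp [bufferNbrs]

theorem nextVertex_eq_some (h : D.nextVertex f = some z) : f z = none ∧
    (z ∈ D.bufferNbrs ∨ ¬ D.HasPending f ∧ D.IsCritical f z ∨
      ¬ D.HasPending f ∧ (∀ x, ¬ D.IsCritical f x) ∧ z ∉ D.buffer) := by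
  unfold nextVertex at h
  split_ifs at h with hpend hcrit hrest <;> cases h
  · exact ⟨hpend.choose_spec.2, .inl hpend.choose_spec.1⟩
  · exact ⟨hcrit.choose_spec.1, .inr (.inl ⟨hpend, hcrit.choose_spec⟩)⟩
  · exact ⟨hrest.choose_spec.1, .inr (.inr ⟨hpend, not_exists.1 hcrit, hrest.choose_spec.2⟩)⟩

theorem nextVertex_eq_none (h : D.nextVertex f = none) :
    (∀ x, ¬ D.IsCritical f x) ∧ ∀ x, f x = none → x ∈ D.buffer := by
  unfold nextVertex at h
  split_ifs at h with hpend hcrit hrest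
  exact ⟨not_exists.1 hcrit, fun x hx => by_contra fun hxb => hrest ⟨x, hx, hxb⟩⟩

theorem exists_of_mem_options (hv : v ∈ D.options s) : ∃ z, D.nextVertex s.map = some z ∧
    D.IsShortQueue s.queue ∧ D.options s = D.allowedImages s.map z K.d ∧ ∀ w, D.step s w =
      { map := Function.update s.map z (some w)
        queue := if ¬ D.HasPending s.map ∧ D.IsCritical s.map z then insert z s.queue
          else s.queue } := by
  unfold options at hv
  split_ifs at hv with hQ
  · cases hz : D.nextVertex s.map with
    | none => simp [hz] at hv
    | some z => exact ⟨z, rfl, hQ, by simp [options, hQ, hz], fun w => by simp [step, hz]⟩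
  · simp at hv

section Sizes

theorem N_pos (D : BlowUpInstance K r Δ N m ε β U V) : (0 : ℝ) < N :=
  Nat.cast_pos.2 D.admissible.N_pos

theorem pow_d_le_one (D : BlowUpInstance K r Δ N m ε β U V) (k : ℕ) : K.d ^ k ≤ 1 :=
  pow_le_one₀ D.admissible.d_pos.le D.admissible.d_le_one

theorem card_neighborFinset_le (D : BlowUpInstance K r Δ N m ε β U V) (x : U) :
    #(D.guest.neighborFinset x) ≤ Δ :=
  (D.guest.card_neighborFinset_eq_degree x).trans_le (D.degree_le x)

theorem card_embeddedNbrs_le (D : BlowUpInstance K r Δ N m ε β U V) (f : U → Option V) (y : U) :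
    #(D.embeddedNbrs f y) ≤ Δ :=
  (card_le_card (filter_subset _ _)).trans (D.card_neighborFinset_le y)

theorem card_unembeddedNbrs_le (D : BlowUpInstance K r Δ N m ε β U V) (f : U → Option V)
    (y : U) : #(D.unembeddedNbrs f y) ≤ Δ :=
  (card_le_card (filter_subset _ _)).trans (D.card_neighborFinset_le y)

theorem pow_d_le_pow_d_card (D : BlowUpInstance K r Δ N m ε β U V) (f : U → Option V) (y : U) :
    K.d ^ Δ ≤ K.d ^ #(D.embeddedNbrs f y) :=
  pow_le_pow_of_le_one D.admissible.d_pos.le D.admissible.d_le_one (D.card_embeddedNbrs_le f y)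

theorem card_bufferNbrs_le (D : BlowUpInstance K r Δ N m ε β U V) : #D.bufferNbrs ≤ r * m * Δ := by
  have hbuffer : #D.buffer = r * m := by
    rw [card_eq_sum_card_fiberwise fun x _ => mem_univ (D.guestPart x)]
    simp [D.card_buffer]
  have hsub : D.bufferNbrs ⊆ D.buffer.biUnion (D.guest.neighborFinset ·) := fun x hx => by
    simpa using mem_bufferNbrs.1 hx
  rw [← hbuffer]
  exact (card_le_card hsub).trans (card_biUnion_le_card_mul _ _ _ fun b _ =>
    D.card_neighborFinset_le b)

theorem IsValid.card_queue_le_of (hs : D.IsValid s) : #s.queue ≤ K.d ^ Δ * (K.κ * N) / 2 := by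
  refine le_trans ?_ D.admissible.queue_le
  rw [card_eq_sum_card_fiberwise fun x _ => mem_univ (D.guestPart x), Nat.cast_sum]
  simpa only [card_univ, Fintype.card_fin, nsmul_eq_mul] using
    sum_le_card_nsmul univ _ _ fun i _ => hs.card_queue_le i

theorem IsFirstStage.le_card_freeCandidates (hs : D.IsFirstStage s) (hy : s.map y = none) :
    K.κ * N + 1 ≤ #(D.freeCandidates s.map y) := by
  have hdomain : (#(domain s.map) : ℝ) ≤ r * m * Δ := by
    exact_mod_cast (card_le_card hs.domain_subset).trans D.card_bufferNbrs_le
  have hpow : K.d ^ Δ * (K.α * N) ≤ K.d ^ #(D.embeddedNbrs s.map y) * (K.α * N) :=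
    mul_le_mul_of_nonneg_right (D.pow_d_le_pow_d_card _ _)
      (mul_nonneg D.admissible.α_pos.le D.N_pos.le)
  linarith [hs.le_card_free y hy, D.admissible.bufferNbrs_le, D.admissible.critical_le_target]

theorem IsValid.two_mul_le_card_freeCandidates (hs : D.IsValid s) (hy : s.map y = none) :
    2 * (K.c₀ * N) ≤ #(D.freeCandidates s.map y) := by
  have hκN : 0 ≤ K.κ * N := mul_nonneg D.admissible.κ_pos.le D.N_pos.le
  have hc₀ : 4 * (K.c₀ * N) ≤ K.d ^ Δ * (K.κ * N) := by
    nlinarith [mul_le_mul_of_nonneg_right D.admissible.c₀_le D.N_pos.le]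
  have hpos : 0 ≤ K.c₀ * N := mul_nonneg D.admissible.c₀_pos.le D.N_pos.le
  obtain hs₁ | hs₂ := hs.stage
  · linarith [hs₁.le_card_freeCandidates hy, mul_le_of_le_one_left hκN (D.pow_d_le_one Δ)]
  · linarith [hs₂.le_card_free y hy, hs.card_queue_le_of,
      mul_le_mul_of_nonneg_right (D.pow_d_le_pow_d_card s.map y) hκN]

theorem IsValid.ε_mul_le_card_freeCandidates (hs : D.IsValid s) (hy : s.map y = none) :
    ε * N ≤ #(D.freeCandidates s.map y) := by
  have hpos : 0 ≤ K.c₀ * N := mul_nonneg D.admissible.c₀_pos.le D.N_pos.le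
  linarith [hs.two_mul_le_card_freeCandidates hy,
    mul_le_mul_of_nonneg_right D.admissible.ε_le_c₀ D.N_pos.le]

theorem hostPart_of_mem_candidates (hv : v ∈ D.candidates f y) : D.hostPart v = D.guestPart y :=
  D.hostPart_of_mem_target y v (EmbeddingProblem.mem_candidates.1 hv).1

theorem hostPart_of_mem_freeCandidates (hv : v ∈ D.freeCandidates f y) :
    D.hostPart v = D.guestPart y :=
  hostPart_of_mem_candidates (EmbeddingProblem.mem_freeCandidates.1 hv).1

theorem card_le_of_forall_mem_atypicalVertices {J : Finset U} {T : U → Finset V} {S : Finset V}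
    (hJ : ∀ y ∈ J, D.guest.Adj z y) (hT : ∀ y ∈ J, ∀ v ∈ T y, D.hostPart v = D.guestPart y)
    (hcard : ∀ y ∈ J, ε * N ≤ #(T y)) (hS : ∀ v ∈ S, D.hostPart v = D.guestPart z)
    (hatyp : ∀ v ∈ S, ∃ y ∈ J, v ∈ atypicalVertices D.host K.d (T y)) :
    #S ≤ #J * (ε * N) := by
  have hsub : S ⊆ J.biUnion fun y =>
      {v ∈ atypicalVertices D.host K.d (T y) | D.hostPart v = D.guestPart z} := fun v hv => by
    obtain ⟨y, hy, hvy⟩ := hatyp v hv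
    exact mem_biUnion.2 ⟨y, hy, mem_filter.2 ⟨hvy, hS v hv⟩⟩
  calc (#S : ℝ)
      ≤ ∑ y ∈ J, (#{v ∈ atypicalVertices D.host K.d (T y) |
          D.hostPart v = D.guestPart z} : ℝ) := by
        exact_mod_cast (card_le_card hsub).trans card_biUnion_le
    _ ≤ #J * (ε * N) := by
        rw [← nsmul_eq_mul]
        exact sum_le_card_nsmul _ _ _ fun y hy =>
          D.regular _ _ (D.reduced_adj z y (hJ y hy)) _ (hT y hy) (hcard y hy)

theorem IsValid.card_freeCandidates_sdiff_allowedImages_le (hs : D.IsValid s) (z : U) :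
    #(D.freeCandidates s.map z \ D.allowedImages s.map z K.d) ≤ Δ * (ε * N) := by
  have hεN : 0 ≤ ε * N := mul_nonneg D.admissible.ε_pos.le D.N_pos.le
  refine le_trans (card_le_of_forall_mem_atypicalVertices (J := D.unembeddedNbrs s.map z)
    (T := D.freeCandidates s.map) (fun y hy => (EmbeddingProblem.mem_unembeddedNbrs.1 hy).1)
    (fun y _ v hv => hostPart_of_mem_freeCandidates hv)
    (fun y hy => hs.ε_mul_le_card_freeCandidates (EmbeddingProblem.mem_unembeddedNbrs.1 hy).2)
    (fun v hv => hostPart_of_mem_freeCandidates (mem_sdiff.1 hv).1) fun v hv => ?_)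
    (mul_le_mul_of_nonneg_right (Nat.cast_le.2 (D.card_unembeddedNbrs_le s.map z)) hεN)
  simpa [EmbeddingProblem.allowedImages, atypicalVertices, and_assoc, (mem_sdiff.1 hv).1] using
    (mem_sdiff.1 hv).2

theorem IsValid.le_card_allowedImages (hs : D.IsValid s) (hz : s.map z = none) :
    K.c₀ * N ≤ #(D.allowedImages s.map z K.d) := by
  have hsplit : (#(D.freeCandidates s.map z) : ℝ)
      ≤ #(D.freeCandidates s.map z \ D.allowedImages s.map z K.d)
        + #(D.allowedImages s.map z K.d) := by
    exact_mod_cast card_le_card_sdiff_add_card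
  linarith [hs.two_mul_le_card_freeCandidates hz, hs.card_freeCandidates_sdiff_allowedImages_le z,
    mul_le_mul_of_nonneg_right D.admissible.Δ_mul_ε_le D.N_pos.le]

end Sizes

section Invariant

theorem notMem_bufferNbrs_of_mem_buffer (hx : x ∈ D.buffer) : x ∉ D.bufferNbrs := by
  intro hxN
  obtain ⟨b, hb, hbx⟩ := mem_bufferNbrs.1 hxN
  have hfar := D.buffer_separated b hb x hx hbx.ne
  rw [SimpleGraph.edist_eq_one_iff_adj.2 hbx] at hfar
  exact absurd hfar (by decide)

theorem IsFirstStage.update (hs : D.IsFirstStage s) (hz : s.map z = none)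
    (hzN : z ∈ D.bufferNbrs) (hv : v ∈ D.allowedImages s.map z K.d) :
    D.IsFirstStage { map := Function.update s.map z (some v), queue := s.queue } where
  domain_subset := by
    rw [domain_update]
    exact insert_subset hzN hs.domain_subset
  queue_eq := hs.queue_eq
  le_card_free y hy := by
    rw [card_domain_update hz, Nat.cast_add_one]
    have hyz := update_some_eq_none_iff.1 hy
    exact EmbeddingProblem.pow_mul_sub_le_card_freeCandidates_update D.admissible.d_pos.le
      D.admissible.d_le_one (neg_one_lt_zero.le.trans (Nat.cast_nonneg _)) hz hv hyz.1
      (hs.le_card_free y hyz.1)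

theorem IsFirstStage.isSecondStage (hs : D.IsFirstStage s) (hpend : ¬ D.HasPending s.map) :
    D.IsSecondStage s where
  not_hasPending := hpend
  le_card_free y hy := by
    have hκN : 0 ≤ K.κ * N := mul_nonneg D.admissible.κ_pos.le D.N_pos.le
    have hqueue : (0 : ℝ) ≤ #s.queue := Nat.cast_nonneg _
    linarith [hs.le_card_freeCandidates hy,
      mul_le_of_le_one_left hκN (D.pow_d_le_one #(D.embeddedNbrs s.map y))]

theorem not_hasPending_update (hpend : ¬ D.HasPending f) :
    ¬ D.HasPending (Function.update f z (some v)) :=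
  fun ⟨x, hx, hx₀⟩ => hpend ⟨x, hx, (update_some_eq_none_iff.1 hx₀).1⟩

theorem IsSecondStage.update_of_isCritical (hs : D.IsSecondStage s) (hz : s.map z = none)
    (hzQ : z ∉ s.queue) (hv : v ∈ D.allowedImages s.map z K.d) :
    D.IsSecondStage { map := Function.update s.map z (some v), queue := insert z s.queue } where
  not_hasPending := not_hasPending_update hs.not_hasPending
  le_card_free y hy := by
    rw [card_insert_of_notMem hzQ, Nat.cast_add_one]
    have hyz := update_some_eq_none_iff.1 hy
    exact EmbeddingProblem.pow_mul_sub_le_card_freeCandidates_update D.admissible.d_pos.le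
      D.admissible.d_le_one (neg_one_lt_zero.le.trans (Nat.cast_nonneg _)) hz hv hyz.1
      (hs.le_card_free y hyz.1)

theorem IsSecondStage.update_of_forall_not_isCritical (hs : D.IsSecondStage s)
    (hz : s.map z = none) (hcrit : ∀ x, ¬ D.IsCritical s.map x)
    (hv : v ∈ D.allowedImages s.map z K.d) :
    D.IsSecondStage { map := Function.update s.map z (some v), queue := s.queue } where
  not_hasPending := not_hasPending_update hs.not_hasPending
  le_card_free y hy := by
    have hyz := update_some_eq_none_iff.1 hy
    have hκN : 0 ≤ K.κ * N := mul_nonneg D.admissible.κ_pos.le D.N_pos.le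
    have hfree : K.κ * N + 1 ≤ #(D.freeCandidates s.map y) := by
      by_contra! hlt
      exact hcrit y ⟨hyz.1, hlt⟩
    have hstep := EmbeddingProblem.pow_mul_sub_le_card_freeCandidates_update
      (a := K.κ * N) (t := -1) D.admissible.d_pos.le D.admissible.d_le_one le_rfl hz hv hyz.1
      (by linarith [mul_le_of_le_one_left hκN (D.pow_d_le_one #(D.embeddedNbrs s.map y))])
    have hqueue : (0 : ℝ) ≤ #s.queue := Nat.cast_nonneg _
    linarith

theorem IsValid.stage_step (hs : D.IsValid s) (hz : D.nextVertex s.map = some z)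
    (hv : v ∈ D.allowedImages s.map z K.d) {t : EmbedState U V}
    (ht : t = { map := Function.update s.map z (some v)
                queue := if ¬ D.HasPending s.map ∧ D.IsCritical s.map z then insert z s.queue
                  else s.queue }) :
    D.IsFirstStage t ∨ D.IsSecondStage t := by
  obtain ⟨hz₀, hcases⟩ := nextVertex_eq_some hz
  subst ht
  by_cases hpend : D.HasPending s.map
  · have hzN : z ∈ D.bufferNbrs := by tauto
    rw [if_neg fun h => h.1 hpend]
    exact hs.stage.imp (fun hs₁ => hs₁.update hz₀ hzN hv) fun hs₂ =>
      absurd hpend hs₂.not_hasPending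
  · have hs₂ : D.IsSecondStage s := hs.stage.elim (fun hs₁ => hs₁.isSecondStage hpend) id
    right
    obtain hzN | hcrit | hrest := hcases
    · exact absurd ⟨z, hzN, hz₀⟩ hpend
    · rw [if_pos hcrit]
      exact hs₂.update_of_isCritical hz₀ (fun hzQ => hs.queue_embedded z hzQ hz₀) hv
    · rw [if_neg fun h => hrest.2.1 z h.2]
      exact hs₂.update_of_forall_not_isCritical hz₀ hrest.2.1 hv

theorem IsValid.injective_update (hs : D.IsValid s) (hz : s.map z = none)
    (hv : v ∈ D.freeCandidates s.map z) {w : V}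
    (hx : Function.update s.map z (some v) x = some w)
    (hy : Function.update s.map z (some v) y = some w) : x = y := by
  have hvfree := (EmbeddingProblem.mem_freeCandidates.1 hv).2
  rw [update_some_eq_some_iff hz] at hx hy
  obtain hx | ⟨rfl, rfl⟩ := hx <;> obtain hy | ⟨rfl, hw⟩ := hy
  · exact hs.injective x y w hx hy
  · exact absurd (hw ▸ hx) (hvfree x)
  · exact absurd hy (hvfree y)
  · rfl

theorem IsValid.mem_candidates_update (hs : D.IsValid s) (hz : s.map z = none)
    (hv : v ∈ D.freeCandidates s.map z) {w : V}
    (hx : Function.update s.map z (some v) x = some w) :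
    w ∈ D.candidates (Function.update s.map z (some v)) x := by
  have hvz := (EmbeddingProblem.mem_freeCandidates.1 hv).1
  by_cases hxz : D.guest.Adj x z
  · rw [EmbeddingProblem.candidates_update_of_adj hz hxz, mem_filter]
    obtain hx | ⟨rfl, -⟩ := (update_some_eq_some_iff hz).1 hx
    · exact ⟨hs.mem_candidates x w hx,
        ((EmbeddingProblem.mem_candidates.1 hvz).2 x w hxz.symm hx).symm⟩
    · exact absurd hxz D.guest.irrefl
  · rw [EmbeddingProblem.candidates_update_of_not_adj hz hxz]
    obtain hx | ⟨rfl, rfl⟩ := (update_some_eq_some_iff hz).1 hx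
    · exact hs.mem_candidates x w hx
    · exact hvz

theorem IsValid.step (hs : D.IsValid s) (hv : v ∈ D.options s) : D.IsValid (D.step s v) := by
  obtain ⟨z, hz, hQ, hopts, hstep⟩ := exists_of_mem_options hv
  obtain ⟨hz₀, hcases⟩ := nextVertex_eq_some hz
  rw [hopts] at hv
  have hvz := (EmbeddingProblem.mem_allowedImages.1 hv).1
  have hsubset : s.queue ⊆ (D.step s v).queue := by
    rw [hstep]
    split_ifs
    exacts [subset_insert _ _, Subset.rfl]
  have hqueue : ∀ x ∈ (D.step s v).queue,
      x ∈ s.queue ∨ x = z ∧ D.IsCritical s.map z := by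
    simp only [hstep]
    split_ifs with hcrit
    exacts [fun x hx => (mem_insert.1 hx).symm.imp_right fun hx => ⟨hx, hcrit.2⟩,
      fun x hx => .inl hx]
  have hmap : (D.step s v).map = Function.update s.map z (some v) := by rw [hstep]
  refine ⟨fun x y w hx hy => hs.injective_update hz₀ hvz (hmap ▸ hx) (hmap ▸ hy),
    fun x w hx => hmap ▸ hs.mem_candidates_update hz₀ hvz (hmap ▸ hx), fun x hx => ?_,
    fun x hx => ?_, fun i => ?_, fun x hx hxe => ?_, hs.stage_step hz hv (hstep v)⟩
  · rw [hmap, ne_eq, update_some_eq_none_iff]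
    exact fun h => (hqueue x hx).elim (fun hx => hs.queue_embedded x hx h.1) fun hx => h.2 hx.1
  · rw [hmap]
    refine lt_of_le_of_lt (Nat.cast_le.2 <| card_le_card <|
      EmbeddingProblem.freeCandidates_update_subset hz₀) ?_
    obtain hx | ⟨rfl, hcrit⟩ := hqueue x hx
    exacts [hs.card_free_of_mem_queue x hx, hcrit.2]
  · have hinsert : {x ∈ (D.step s v).queue | D.guestPart x = i}
        ⊆ insert z {x ∈ s.queue | D.guestPart x = i} := fun x hx => by
      have := hqueue x (mem_filter.1 hx).1
      have := (mem_filter.1 hx).2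
      rw [mem_insert, mem_filter]
      tauto
    have hcard := (card_le_card hinsert).trans (card_insert_le _ _)
    exact (Nat.cast_le.2 hcard).trans (by push_cast; linarith [hQ i])
  · rw [hmap, ne_eq, update_some_eq_none_iff, not_and_or, not_not] at hxe
    obtain hxe | rfl := hxe
    · exact hsubset (hs.mem_queue_of_mem_buffer x hx hxe)
    · obtain hxN | hcrit | hrest := hcases
      · exact absurd hxN (notMem_bufferNbrs_of_mem_buffer hx)
      · rw [hstep]
        exact if_pos hcrit ▸ mem_insert_self _ _
      · exact absurd hx hrest.2.2

theorem card_domain_lt_card_domain_step (hv : v ∈ D.options s) :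
    #(domain s.map) < #(domain (D.step s v).map) := by
  obtain ⟨z, hz, -, -, hstep⟩ := exists_of_mem_options hv
  rw [hstep, card_domain_update (nextVertex_eq_some hz).1]
  exact Nat.lt_succ_self _

variable (D) in
theorem isValid_init : D.IsValid { map := fun _ => none, queue := ∅ } := by
  have hγN : 0 ≤ K.γ * N := mul_nonneg D.admissible.γ_pos.le D.N_pos.le
  refine ⟨by simp, by simp, by simp, by simp, fun i => by simp; linarith, by simp,
    .inl ⟨by simp [domain], rfl, fun y _ => ?_⟩⟩
  simpa [domain] using D.le_card_target y

end Invariant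

end BlowUpInstance

/-! ### Potential functions -/

namespace BlowUpInstance

variable {K : BlowUpConstants} {r Δ N m : ℕ} {ε β : ℝ} {U V : Type*} [Fintype U] [Fintype V]
  {D : BlowUpInstance K r Δ N m ε β U V}

theorem isSupermartingale_prod (I : Finset U) {a : U → (U → Option V) → ℝ}
    (ha : ∀ x f, 0 ≤ a x f)
    (h : ∀ s z, D.IsValid s → D.nextVertex s.map = some z → ∃ x₀,
      (∀ x ∈ I, x ≠ x₀ → ∀ v ∈ D.allowedImages s.map z K.d,
        a x (Function.update s.map z (some v)) ≤ a x s.map) ∧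
      (x₀ ∈ I → ∑ v ∈ D.allowedImages s.map z K.d, a x₀ (Function.update s.map z (some v))
        ≤ #(D.allowedImages s.map z K.d) * a x₀ s.map)) :
    IsSupermartingale D.options D.step D.IsValid fun s => ∏ x ∈ I, a x s.map where
  nonneg s := prod_nonneg fun x _ => ha x s.map
  sum_le s hs := by
    obtain ho | ⟨v, hv⟩ := (D.options s).eq_empty_or_nonempty
    · simp [ho]
    obtain ⟨z, hz, -, hopts, hstep⟩ := exists_of_mem_options hv
    obtain ⟨x₀, hne, hsum⟩ := h s z hs hz
    simp only [hopts, hstep]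
    exact sum_prod_le_card_mul_prod (fun x => ha x _) (fun x v => ha x _) x₀ hne hsum

section Images

/-- The factor of `x` in the potential function for the event that all vertices in a given set
are embedded according to `g`. -/
noncomputable def imageWeight (M : ℝ) (g : U → V) (x : U) (f : U → Option V) : ℝ :=
  (f x).elim M fun v => if v = g x then 1 else 0

theorem isSupermartingale_prod_imageWeight (D : BlowUpInstance K r Δ N m ε β U V) {M : ℝ}
    (hM₀ : 0 ≤ M) (hM : 1 ≤ M * (K.c₀ * N)) (g : U → V) (I : Finset U) :
    IsSupermartingale D.options D.step D.IsValid
      fun s => ∏ x ∈ I, imageWeight M g x s.map := by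
  refine isSupermartingale_prod I (fun x f => ?_) fun s z hs hz =>
    ⟨z, fun x _ hxz v _ => le_of_eq ?_, fun _ => ?_⟩
  · unfold imageWeight
    cases f x
    exacts [hM₀, by dsimp only [Option.elim]; positivity]
  · rw [imageWeight, imageWeight, Function.update_of_ne hxz]
  · have hz₀ := (nextVertex_eq_some hz).1
    calc ∑ v ∈ D.allowedImages s.map z K.d,
          imageWeight M g z (Function.update s.map z (some v))
        = if g z ∈ D.allowedImages s.map z K.d then 1 else 0 := by simp [imageWeight]
      _ ≤ M * (K.c₀ * N) := by split_ifs <;> linarith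
      _ ≤ M * #(D.allowedImages s.map z K.d) := by
          gcongr
          exact hs.le_card_allowedImages hz₀
      _ = #(D.allowedImages s.map z K.d) * imageWeight M g z s.map := by
          simp [imageWeight, hz₀, mul_comm]

end Images

variable {f : U → Option V} {s : EmbedState U V} {b x y z : U} {v w : V} {T : Finset V} {a : ℝ}

section Typical

variable (D) in
/-- The number of candidates for the image of `y` in `T` is still at least what is expected if
there were `a` of them in the beginning. -/
def IsTypical (T : Finset V) (a : ℝ) (y : U) (f : U → Option V) : Prop :=
  K.d ^ #(D.embeddedNbrs f y) * a ≤ #(D.candidates f y ∩ T)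

theorem isTypical_update_iff_of_not_adj (hz : f z = none) (hyz : ¬ D.guest.Adj y z) :
    D.IsTypical T a y (Function.update f z (some w)) ↔ D.IsTypical T a y f := by
  rw [IsTypical, IsTypical, EmbeddingProblem.embeddedNbrs_update_of_not_adj hyz,
    EmbeddingProblem.candidates_update_of_not_adj hz hyz]

theorem IsTypical.update (h : D.IsTypical T a y f) (hz : f z = none)
    (hw : D.guest.Adj y z → w ∉ atypicalVertices D.host K.d (D.candidates f y ∩ T)) :
    D.IsTypical T a y (Function.update f z (some w)) := by
  by_cases hyz : D.guest.Adj y z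
  · have hw := hw hyz
    simp only [atypicalVertices, mem_filter, mem_univ, true_and, not_lt] at hw
    rw [IsTypical, EmbeddingProblem.card_embeddedNbrs_update_of_adj hz hyz,
      EmbeddingProblem.candidates_update_of_adj hz hyz, filter_inter, pow_succ']
    linarith [mul_le_mul_of_nonneg_left h D.admissible.d_pos.le]
  · exact (isTypical_update_iff_of_not_adj hz hyz).2 h

theorem IsTypical.pow_mul_le (h : D.IsTypical T a y f) (ha : 0 ≤ a) :
    K.d ^ Δ * a ≤ #(D.candidates f y ∩ T) :=
  (mul_le_mul_of_nonneg_right (D.pow_d_le_pow_d_card f y) ha).trans h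

end Typical

section Buffer

variable (D) in
/-- If the buffer vertex `b` were mapped to `v`, then its embedded neighbours would be adjacent to
it and its unembedded neighbours would have about as many candidates as expected. -/
def IsAlive (v : V) (b : U) (f : U → Option V) : Prop :=
  ∀ y, D.guest.Adj b y → (∀ w, f y = some w → D.host.Adj v w) ∧
    (f y = none → D.IsTypical {w | D.host.Adj w v} (K.δ * N) y f)

theorem eq_of_walk {b' : U} (hb : b ∈ D.buffer) (hb' : b' ∈ D.buffer) (p : D.guest.Walk b b')
    (hp : p.length ≤ 3) : b = b' := by
  by_contra hne
  exact ((D.buffer_separated b hb b' hb' hne).trans_le p.edist_le).not_ge (by exact_mod_cast hp)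

theorem isAlive_update_iff (hz : f z = none) (hbz : ¬ D.guest.Adj b z)
    (hyz : ∀ y, D.guest.Adj b y → f y = none → ¬ D.guest.Adj y z) :
    D.IsAlive v b (Function.update f z (some w)) ↔ D.IsAlive v b f := by
  refine forall₂_congr fun y hby => ?_
  have hne : y ≠ z := fun h => hbz (h ▸ hby)
  rw [Function.update_of_ne hne]
  exact and_congr_right fun _ => forall_congr' fun hy =>
    isTypical_update_iff_of_not_adj hz (hyz y hby hy)

theorem IsAlive.update (h : D.IsAlive v b f) (hz : f z = none) (hwv : D.host.Adj w v)
    (hw : ∀ y, D.guest.Adj b y → f y = none → D.guest.Adj y z →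
      w ∉ atypicalVertices D.host K.d (D.candidates f y ∩ ({w | D.host.Adj w v} : Finset V))) :
    D.IsAlive v b (Function.update f z (some w)) := by
  refine fun y hby => ⟨fun u hu => ?_, fun hy => ?_⟩
  · obtain hu | ⟨-, rfl⟩ := (update_some_eq_some_iff hz).1 hu
    exacts [(h y hby).1 u hu, hwv.symm]
  · have hy := (update_some_eq_none_iff.1 hy).1
    exact ((h y hby).2 hy).update hz (hw y hby hy)

theorem IsValid.card_usedVertices_le (hs : D.IsValid s) (hpend : D.HasPending s.map) :
    #(usedVertices s.map) ≤ r * m * Δ :=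
  (card_usedVertices_le_card_domain s.map).trans <| hs.stage.elim
    (fun hs₁ => (card_le_card hs₁.domain_subset).trans D.card_bufferNbrs_le)
    fun hs₂ => absurd hpend hs₂.not_hasPending

theorem δ_pos (D : BlowUpInstance K r Δ N m ε β U V) : 0 < K.δ :=
  pos_of_mul_pos_right (D.admissible.ε_pos.trans_le D.admissible.ε_le_δ)
    (pow_nonneg D.admissible.d_pos.le _)

theorem IsAlive.le_card (h : D.IsAlive v b f) (hby : D.guest.Adj b y) (hy : f y = none) :
    K.d ^ Δ * (K.δ * N) ≤ #(D.candidates f y ∩ ({w | D.host.Adj w v} : Finset V)) :=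
  ((h y hby).2 hy).pow_mul_le (mul_nonneg D.δ_pos.le D.N_pos.le)

theorem IsAlive.card_atypical_le (h : D.IsAlive v b f) (z : U) :
    #{w ∈ D.candidates f z | ∃ y, D.guest.Adj b y ∧ f y = none ∧ D.guest.Adj y z ∧
      w ∈ atypicalVertices D.host K.d
        (D.candidates f y ∩ ({w | D.host.Adj w v} : Finset V))} ≤ Δ * (ε * N) := by
  have hε : ε * N ≤ K.d ^ Δ * (K.δ * N) := by
    rw [← mul_assoc]
    exact mul_le_mul_of_nonneg_right D.admissible.ε_le_δ D.N_pos.le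
  refine le_trans (card_le_of_forall_mem_atypicalVertices (z := z)
    (J := {y ∈ D.unembeddedNbrs f b | D.guest.Adj y z})
    (T := fun y => D.candidates f y ∩ ({w | D.host.Adj w v} : Finset V))
    (fun y hy => (mem_filter.1 hy).2.symm)
    (fun y _ w hw => hostPart_of_mem_candidates (mem_inter.1 hw).1) (fun y hy => ?_)
    (fun w hw => hostPart_of_mem_candidates (mem_filter.1 hw).1) fun w hw => ?_) ?_
  · obtain ⟨hby, hy⟩ := EmbeddingProblem.mem_unembeddedNbrs.1 (mem_filter.1 hy).1
    exact hε.trans (h.le_card hby hy)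
  · obtain ⟨y, hby, hy, hyz, hwy⟩ := (mem_filter.1 hw).2
    exact ⟨y, by simp [hby, hy, hyz], hwy⟩
  · exact mul_le_mul_of_nonneg_right (Nat.cast_le.2 <|
      (card_filter_le _ _).trans (D.card_unembeddedNbrs_le f b))
      (mul_nonneg D.admissible.ε_pos.le D.N_pos.le)

theorem IsAlive.le_card_allowedImages (h : D.IsAlive v b s.map) (hs : D.IsValid s)
    (hpend : D.HasPending s.map) (hbz : D.guest.Adj b z) (hz : s.map z = none) :
    K.q * N ≤ #{w ∈ D.allowedImages s.map z K.d |
      D.IsAlive v b (Function.update s.map z (some w))} := by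
  set atypical : Finset V := {w ∈ D.candidates s.map z | ∃ y, D.guest.Adj b y ∧
    s.map y = none ∧ D.guest.Adj y z ∧ w ∈ atypicalVertices D.host K.d
      (D.candidates s.map y ∩ ({w | D.host.Adj w v} : Finset V))} with hatypical
  set alive : Finset V := {w ∈ D.allowedImages s.map z K.d |
    D.IsAlive v b (Function.update s.map z (some w))} with halive
  have hcover : D.candidates s.map z ∩ ({w | D.host.Adj w v} : Finset V) ⊆ usedVertices s.map ∪
      (D.freeCandidates s.map z \ D.allowedImages s.map z K.d) ∪ atypical ∪ alive := by
    intro w hw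
    obtain ⟨hwz, hwv⟩ := mem_inter.1 hw
    simp only [mem_union, or_assoc]
    by_cases hused : w ∈ usedVertices s.map
    · exact .inl hused
    by_cases hallowed : w ∈ D.allowedImages s.map z K.d
    swap
    · exact .inr (.inl (mem_sdiff.2 ⟨mem_sdiff.2 ⟨hwz, hused⟩, hallowed⟩))
    by_cases hwa : w ∈ atypical
    · exact .inr (.inr (.inl hwa))
    · refine .inr (.inr (.inr (mem_filter.2 ⟨hallowed, h.update hz (mem_filter.1 hwv).2
        fun y hby hy hyz hwy => hwa (mem_filter.2 ⟨hwz, y, hby, hy, hyz, hwy⟩)⟩)))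
  have hcard : (#(D.candidates s.map z ∩ ({w | D.host.Adj w v} : Finset V)) : ℝ)
      ≤ #(usedVertices s.map) + #(D.freeCandidates s.map z \ D.allowedImages s.map z K.d)
        + #atypical + #alive := by
    exact_mod_cast (card_le_card hcover).trans <| (card_union_le _ _).trans <|
      Nat.add_le_add_right ((card_union_le _ _).trans <|
        Nat.add_le_add_right (card_union_le _ _) _) _
  have hused : (#(usedVertices s.map) : ℝ) ≤ r * m * Δ := by
    exact_mod_cast hs.card_usedVertices_le hpend
  linarith [h.le_card hbz hz, hs.card_freeCandidates_sdiff_allowedImages_le z,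
    h.card_atypical_le z, D.admissible.alive_le]

variable (D) in
/-- The factor of `b` in the potential function for the event that all buffer vertices in a given
set cease to be alive for `v`. It is one minus half the expected chance that `b` stays alive. -/
noncomputable def aliveWeight (v : V) (b : U) (f : U → Option V) : ℝ :=
  if D.IsAlive v b f then 1 - K.q ^ #(D.unembeddedNbrs f b) / 2 else 1

theorem aliveWeight_nonneg : 0 ≤ D.aliveWeight v b f := by
  unfold aliveWeight
  split_ifs
  · linarith [pow_le_one₀ (n := #(D.unembeddedNbrs f b)) D.admissible.q_pos.le
      D.admissible.q_le_one]
  · exact zero_le_one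

theorem aliveWeight_le_one : D.aliveWeight v b f ≤ 1 := by
  unfold aliveWeight
  split_ifs
  · linarith [pow_pos D.admissible.q_pos #(D.unembeddedNbrs f b)]
  · exact le_rfl

theorem aliveWeight_update (hz : f z = none) (hbz : ¬ D.guest.Adj b z)
    (hyz : ∀ y, D.guest.Adj b y → f y = none → ¬ D.guest.Adj y z) :
    D.aliveWeight v b (Function.update f z (some w)) = D.aliveWeight v b f := by
  simp only [aliveWeight, isAlive_update_iff hz hbz hyz,
    EmbeddingProblem.unembeddedNbrs_update_of_not_adj hbz]

theorem card_allowedImages_le (D : BlowUpInstance K r Δ N m ε β U V) (f : U → Option V) (z : U) :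
    #(D.allowedImages f z K.d) ≤ N := by
  have hsub : D.allowedImages f z K.d ⊆
      ({v | D.hostPart v = D.guestPart z} : Finset V) := fun w hw =>
    mem_filter.2 ⟨mem_univ _, hostPart_of_mem_freeCandidates
      (EmbeddingProblem.mem_allowedImages.1 hw).1⟩
  exact (card_le_card hsub).trans_eq (D.card_hostPart _)

theorem sum_aliveWeight_update_le (hs : D.IsValid s) (hpend : D.HasPending s.map)
    (hbz : D.guest.Adj b z) (hz : s.map z = none) :
    ∑ w ∈ D.allowedImages s.map z K.d, D.aliveWeight v b (Function.update s.map z (some w))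
      ≤ #(D.allowedImages s.map z K.d) * D.aliveWeight v b s.map := by
  set allowed := D.allowedImages s.map z K.d
  by_cases hb : D.IsAlive v b s.map
  swap
  · rw [aliveWeight, if_neg hb, ← nsmul_eq_mul]
    exact sum_le_card_nsmul _ _ _ fun w _ => aliveWeight_le_one
  set k := #((D.unembeddedNbrs s.map b).erase z) with hk
  have hcard : #(D.unembeddedNbrs s.map b) = k + 1 :=
    (card_erase_add_one (EmbeddingProblem.mem_unembeddedNbrs.2 ⟨hbz, hz⟩)).symm
  have hweight : ∀ w, D.aliveWeight v b (Function.update s.map z (some w))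
      = 1 - if D.IsAlive v b (Function.update s.map z (some w)) then K.q ^ k / 2 else 0 :=
    fun w => by
      rw [aliveWeight, EmbeddingProblem.unembeddedNbrs_update, ← hk]
      split_ifs <;> ring
  have hkeep : K.q * #allowed
      ≤ #{w ∈ allowed | D.IsAlive v b (Function.update s.map z (some w))} :=
    (mul_le_mul_of_nonneg_left (Nat.cast_le.2 (D.card_allowedImages_le _ z))
      D.admissible.q_pos.le).trans (hb.le_card_allowedImages hs hpend hbz hz)
  rw [aliveWeight, if_pos hb, hcard, sum_congr rfl fun w _ => hweight w, sum_sub_distrib,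
    ← sum_filter, sum_const, sum_const, nsmul_eq_mul, nsmul_eq_mul, pow_succ]
  linarith [mul_le_mul_of_nonneg_right hkeep (pow_pos D.admissible.q_pos k).le]

theorem isSupermartingale_prod_aliveWeight (v : V) {B : Finset U} (hB : B ⊆ D.buffer) :
    IsSupermartingale D.options D.step D.IsValid fun s => ∏ b ∈ B, D.aliveWeight v b s.map := by
  refine isSupermartingale_prod B (fun _ _ => aliveWeight_nonneg) fun s z hs hz => ?_
  have hz₀ := (nextVertex_eq_some hz).1
  by_cases hzN : z ∈ D.bufferNbrs
  · obtain ⟨b, hb, hbz⟩ := mem_bufferNbrs.1 hzN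
    refine ⟨b, fun x hx hxb w _ => (aliveWeight_update hz₀ (fun hxz => hxb ?_)
      fun y hxy _ hyz => hxb ?_).le, fun _ => sum_aliveWeight_update_le hs ⟨z, hzN, hz₀⟩ hbz hz₀⟩
    · exact eq_of_walk (hB hx) hb (.cons hxz (.cons hbz.symm .nil)) (by simp)
    · exact eq_of_walk (hB hx) hb (.cons hxy (.cons hyz (.cons hbz.symm .nil))) (by simp)
  · have hpend : ¬ D.HasPending s.map := by
      have := (nextVertex_eq_some hz).2
      tauto
    have heq : ∀ x ∈ B, ∀ w, D.aliveWeight v x (Function.update s.map z (some w))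
        = D.aliveWeight v x s.map := fun x hx w =>
      aliveWeight_update hz₀ (fun hxz => hzN (mem_bufferNbrs.2 ⟨x, hB hx, hxz⟩)) fun y hxy hy _ =>
        hpend ⟨y, mem_bufferNbrs.2 ⟨x, hB hx, hxy⟩, hy⟩
    refine ⟨z, fun x hx _ w _ => (heq x hx w).le, fun hzB => ?_⟩
    rw [sum_congr rfl fun w _ => heq z hzB w, sum_const, nsmul_eq_mul]

end Buffer

section Atypical

variable (D) in
/-- The factor of `y` in the potential function for the event that no vertex in a given set is
typical for `T`. It bounds the probability that `y` does not stay typical. -/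
noncomputable def atypicalWeight (T : Finset V) (y : U) (f : U → Option V) : ℝ :=
  if D.IsTypical T #T y f then ε / K.c₀ * #(D.unembeddedNbrs f y) else 1

theorem ε_div_c₀_nonneg (D : BlowUpInstance K r Δ N m ε β U V) : 0 ≤ ε / K.c₀ :=
  div_nonneg D.admissible.ε_pos.le D.admissible.c₀_pos.le

theorem atypicalWeight_nonneg : 0 ≤ D.atypicalWeight T y f := by
  unfold atypicalWeight
  have := D.ε_div_c₀_nonneg
  split_ifs <;> positivity

theorem atypicalWeight_update (hz : f z = none) (hyz : ¬ D.guest.Adj y z) :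
    D.atypicalWeight T y (Function.update f z (some w)) = D.atypicalWeight T y f := by
  simp only [atypicalWeight, isTypical_update_iff_of_not_adj hz hyz,
    EmbeddingProblem.unembeddedNbrs_update_of_not_adj hyz]

theorem mul_card_unembeddedNbrs_le_one (D : BlowUpInstance K r Δ N m ε β U V) (f : U → Option V)
    (y : U) : ε / K.c₀ * #(D.unembeddedNbrs f y) ≤ 1 := by
  rw [div_mul_eq_mul_div, div_le_one D.admissible.c₀_pos, mul_comm]
  exact (mul_le_mul_of_nonneg_right (Nat.cast_le.2 (D.card_unembeddedNbrs_le f y))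
    D.admissible.ε_pos.le).trans D.admissible.Δ_mul_ε_le

theorem atypicalWeight_le_one : D.atypicalWeight T y f ≤ 1 := by
  unfold atypicalWeight
  split_ifs
  exacts [D.mul_card_unembeddedNbrs_le_one f y, le_rfl]

theorem IsTypical.ε_mul_le (h : D.IsTypical T #T y f) (hT : K.τ * N ≤ #T) :
    ε * N ≤ #(D.candidates f y ∩ T) :=
  calc ε * N ≤ K.d ^ Δ * K.τ * N := by gcongr; exact D.admissible.ε_le_τ
    _ = K.d ^ Δ * (K.τ * N) := mul_assoc _ _ _
    _ ≤ K.d ^ Δ * #T := mul_le_mul_of_nonneg_left hT (pow_nonneg D.admissible.d_pos.le _)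
    _ ≤ #(D.candidates f y ∩ T) := h.pow_mul_le (Nat.cast_nonneg _)

theorem sum_atypicalWeight_update_le (hs : D.IsValid s) (hT : K.τ * N ≤ #T)
    (hyz : D.guest.Adj y z) (hz : s.map z = none) :
    ∑ w ∈ D.allowedImages s.map z K.d, D.atypicalWeight T y (Function.update s.map z (some w))
      ≤ #(D.allowedImages s.map z K.d) * D.atypicalWeight T y s.map := by
  set allowed := D.allowedImages s.map z K.d with hallowed
  by_cases hy : D.IsTypical T #T y s.map
  swap
  · rw [atypicalWeight, if_neg hy, ← nsmul_eq_mul]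
    exact sum_le_card_nsmul _ _ _ fun w _ => atypicalWeight_le_one
  set atypical := atypicalVertices D.host K.d (D.candidates s.map y ∩ T)
  set k := #((D.unembeddedNbrs s.map y).erase z) with hk
  have hcard : #(D.unembeddedNbrs s.map y) = k + 1 :=
    (card_erase_add_one (EmbeddingProblem.mem_unembeddedNbrs.2 ⟨hyz, hz⟩)).symm
  have hρ := D.ε_div_c₀_nonneg
  have hweight : ∀ w ∈ allowed, D.atypicalWeight T y (Function.update s.map z (some w))
      ≤ (if w ∈ atypical then 1 else 0) + ε / K.c₀ * k := fun w _ => by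
    split_ifs with hw
    · exact atypicalWeight_le_one.trans (le_add_of_nonneg_right (by positivity))
    · rw [atypicalWeight, if_pos (hy.update hz fun _ => hw),
        EmbeddingProblem.unembeddedNbrs_update, zero_add]
  have hatypical : (#{w ∈ allowed | w ∈ atypical} : ℝ) ≤ ε * N := by
    refine (card_le_of_forall_mem_atypicalVertices (z := z) (J := {y})
      (T := fun y => D.candidates s.map y ∩ T) (by simpa using hyz.symm)
      (fun y _ w hw => hostPart_of_mem_candidates (mem_inter.1 hw).1)
      (by simpa using hy.ε_mul_le hT) (fun w hw => hostPart_of_mem_freeCandidates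
        (EmbeddingProblem.mem_allowedImages.1 (mem_filter.1 hw).1).1) fun w hw =>
      ⟨y, mem_singleton_self y, (mem_filter.1 hw).2⟩).trans_eq (by simp)
  have hρN : ε * N ≤ ε / K.c₀ * #allowed := by
    calc ε * N = ε / K.c₀ * (K.c₀ * N) := by field_simp [D.admissible.c₀_pos.ne']
      _ ≤ _ := mul_le_mul_of_nonneg_left (hs.le_card_allowedImages hz) hρ
  refine (sum_le_sum hweight).trans ?_
  rw [atypicalWeight, if_pos hy, hcard, sum_add_distrib, ← sum_filter, sum_const, sum_const,
    nsmul_eq_mul, nsmul_eq_mul, Nat.cast_add_one]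
  linarith

theorem isSupermartingale_prod_atypicalWeight (hT : K.τ * N ≤ #T) {S : Finset U}
    (hS : (S : Set U).PairwiseDisjoint D.guest.neighborSet) :
    IsSupermartingale D.options D.step D.IsValid
      fun s => ∏ y ∈ S, D.atypicalWeight T y s.map := by
  refine isSupermartingale_prod S (fun _ _ => atypicalWeight_nonneg) fun s z hs hz => ?_
  have hz₀ := (nextVertex_eq_some hz).1
  by_cases hex : ∃ y ∈ S, D.guest.Adj y z
  · obtain ⟨y, hy, hyz⟩ := hex
    exact ⟨y, fun x hx hxy w _ =>
      (atypicalWeight_update hz₀ fun hxz => hxy (hS.elim_set hx hy z hxz hyz)).le,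
      fun _ => sum_atypicalWeight_update_le hs hT hyz hz₀⟩
  · have heq : ∀ x ∈ S, ∀ w, D.atypicalWeight T x (Function.update s.map z (some w))
        = D.atypicalWeight T x s.map := fun x hx w =>
      atypicalWeight_update hz₀ fun hxz => hex ⟨x, hx, hxz⟩
    refine ⟨z, fun x hx _ w _ => (heq x hx w).le, fun hzS => ?_⟩
    rw [sum_congr rfl fun w _ => heq z hzS w, sum_const, nsmul_eq_mul]

end Atypical

end BlowUpInstance

/-! ### Concentration -/

theorem toOuterMeasure_biUnion_le {σ ι : Type*} (p : PMF σ) {J : Finset ι} {S : ι → Set σ}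
    {b : ℝ} (h : ∀ j ∈ J, p.toOuterMeasure (S j) ≤ ENNReal.ofReal b) :
    p.toOuterMeasure (⋃ j ∈ J, S j) ≤ ENNReal.ofReal (#J * b) := by
  refine (MeasureTheory.measure_biUnion_finset_le J S).trans ?_
  rw [ENNReal.ofReal_mul (Nat.cast_nonneg _), ENNReal.ofReal_natCast, ← nsmul_eq_mul]
  exact sum_le_card_nsmul _ _ _ h

theorem exists_subset_pairwiseDisjoint_neighborSet {U : Type*} [Fintype U] {G : SimpleGraph U}
    {Δ : ℕ} (hG : ∀ x, G.degree x ≤ Δ) (Q : Finset U) :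
    ∃ S ⊆ Q, (S : Set U).PairwiseDisjoint G.neighborSet ∧ #Q ≤ #S * (1 + Δ * Δ) := by
  obtain ⟨S, hS, hmax⟩ := exists_max_image
    (Q.powerset.filter fun S : Finset U => (S : Set U).PairwiseDisjoint G.neighborSet) card
    ⟨∅, by simp⟩
  obtain ⟨hSQ, hSd⟩ : S ⊆ Q ∧ (S : Set U).PairwiseDisjoint G.neighborSet := by simpa using hS
  have hcover : Q ⊆ S.biUnion fun y =>
      {y} ∪ (G.neighborFinset y).biUnion (G.neighborFinset ·) := fun x hx => by
    by_contra hx'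
    simp only [mem_biUnion, mem_union, mem_singleton, SimpleGraph.mem_neighborFinset,
      not_exists, not_and, not_or] at hx'
    have hxS : x ∉ S := fun h => (hx' x h).1 rfl
    have hinsert : ((insert x S : Finset U) : Set U).PairwiseDisjoint G.neighborSet := by
      rw [coe_insert]
      refine hSd.insert fun y hy _ => Set.disjoint_left.2 fun z hxz hyz => ?_
      exact (hx' y hy).2 z hyz (SimpleGraph.Adj.symm hxz)
    have hle := hmax (insert x S)
      (mem_filter.2 ⟨mem_powerset.2 (insert_subset hx hSQ), hinsert⟩)
    rw [card_insert_of_notMem hxS] at hle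
    exact (Nat.lt_succ_self _).not_ge hle
  refine ⟨S, hSQ, hSd, (card_le_card hcover).trans (card_biUnion_le_card_mul _ _ _ fun y _ => ?_)⟩
  have hball := card_biUnion_le_card_mul (G.neighborFinset y) (G.neighborFinset ·) Δ fun z _ =>
    (G.card_neighborFinset_eq_degree z).trans_le (hG z)
  calc #({y} ∪ (G.neighborFinset y).biUnion (G.neighborFinset ·))
      ≤ 1 + #(G.neighborFinset y) * Δ :=
        (card_union_le _ _).trans (Nat.add_le_add (card_singleton y).le hball)
    _ ≤ 1 + Δ * Δ := Nat.add_le_add_left (Nat.mul_le_mul_right _ <|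
        (G.card_neighborFinset_eq_degree y).trans_le (hG y)) _

theorem exp_neg_le_half_pow (n : ℕ) : Real.exp (-n) ≤ (1 / 2) ^ n := by
  rw [← mul_neg_one, Real.exp_nat_mul, Real.exp_neg, one_div]
  exact pow_le_pow_left₀ (inv_nonneg.2 (Real.exp_pos _).le)
    (inv_anti₀ two_pos (by linarith [Real.add_one_le_exp (1 : ℝ)])) n

theorem four_pow_mul_exp_le (n : ℕ) : 4 ^ n * Real.exp (-(4 * n)) ≤ Real.exp (-(2 * n)) := by
  have hfour : (4 : ℝ) ≤ Real.exp 2 := by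
    have := Real.add_one_le_exp (1 : ℝ)
    calc (4 : ℝ) ≤ Real.exp 1 * Real.exp 1 := by nlinarith
      _ = Real.exp 2 := by rw [← Real.exp_add]; norm_num
  calc (4 : ℝ) ^ n * Real.exp (-(4 * n)) ≤ Real.exp 2 ^ n * Real.exp (-(4 * n)) := by gcongr
    _ = Real.exp (-(2 * n)) := by
      rw [← Real.exp_nat_mul, ← Real.exp_add]
      ring_nf

namespace BlowUpInstance

variable {K : BlowUpConstants} {r Δ N m : ℕ} {ε β : ℝ} {U V : Type*} [Fintype U] [Fintype V]
  {D : BlowUpInstance K r Δ N m ε β U V} {p : PMF (EmbedState U V)}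

variable (D) in
/-- The properties of the distribution of the final state of the random greedy algorithm. -/
structure IsOutput (p : PMF (EmbedState U V)) : Prop where
  isValid : ∀ s ∈ p.support, D.IsValid s
  options_eq_empty : ∀ s ∈ p.support, D.options s = ∅
  tsum_le : ∀ Φ, IsSupermartingale D.options D.step D.IsValid Φ →
    ∑' s, p s * ENNReal.ofReal (Φ s) ≤ ENNReal.ofReal (Φ { map := fun _ => none, queue := ∅ })

variable (D) in
theorem exists_isOutput : ∃ p, D.IsOutput p := by
  obtain ⟨p, hp, hle⟩ := exists_terminal_pmf (fun s : EmbedState U V => #(domain s.map))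
    (fun s => card_le_univ _) (fun _ _ hv => card_domain_lt_card_domain_step hv)
    (fun _ hs _ hv => hs.step hv) D.isValid_init
  exact ⟨p, fun s hs => (hp s hs).1, fun s hs => (hp s hs).2, hle⟩

section Buffer

variable (D) in
/-- The buffer vertices which could still be mapped to `v`. -/
noncomputable def aliveBuffer (v : V) (f : U → Option V) : Finset U :=
  {b ∈ D.buffer | D.guestPart b = D.hostPart v ∧ D.IsAlive v b f}

theorem isAlive_none {b : U} {v : V} (hb : b ∈ D.buffer) (hv : D.guestPart b = D.hostPart v) :
    D.IsAlive v b fun _ => none := by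
  refine fun y hby => ⟨by simp, fun _ => ?_⟩
  have hy : y ∉ D.exceptional := fun hy => by
    have hfar := D.exceptional_separated b hb y hy
    rw [SimpleGraph.edist_eq_one_iff_adj.2 hby] at hfar
    exact lt_irrefl _ hfar
  rw [IsTypical, EmbeddingProblem.embeddedNbrs_none, card_empty, pow_zero, one_mul,
    EmbeddingProblem.candidates_none]
  refine (D.le_degree v (D.guestPart y) (hv ▸ D.reduced_adj b y hby)).trans ?_
  exact Nat.cast_le.2 <| card_le_card fun w hw => by
    simp only [mem_filter, mem_univ, true_and] at hw
    simpa [hw.2] using D.mem_target y hy w hw.1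

theorem aliveWeight_none_le {b : U} {v : V} (hb : b ∈ D.buffer)
    (hv : D.guestPart b = D.hostPart v) :
    D.aliveWeight v b (fun _ => none) ≤ Real.exp (-(K.q ^ Δ / 2)) := by
  rw [aliveWeight, if_pos (isAlive_none hb hv)]
  linarith [Real.add_one_le_exp (-(K.q ^ Δ / 2)), pow_le_pow_of_le_one D.admissible.q_pos.le
    D.admissible.q_le_one (D.card_unembeddedNbrs_le (fun _ => none) b)]

theorem aliveWeight_of_not_hasPending {b : U} {v : V} {f : U → Option V} (hb : b ∈ D.buffer)
    (hpend : ¬ D.HasPending f) :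
    D.aliveWeight v b f = if D.IsAlive v b f then 1 / 2 else 1 := by
  have hempty : D.unembeddedNbrs f b = ∅ := eq_empty_of_forall_notMem fun y hy => by
    obtain ⟨hby, hy⟩ := EmbeddingProblem.mem_unembeddedNbrs.1 hy
    exact hpend ⟨y, mem_bufferNbrs.2 ⟨b, hb, hby⟩, hy⟩
  rw [aliveWeight, hempty]
  norm_num

theorem IsOutput.toOuterMeasure_card_aliveBuffer_lt_le (hp : D.IsOutput p) (v : V) :
    p.toOuterMeasure {s | ¬ D.HasPending s.map ∧
        #(D.aliveBuffer v s.map) < K.q ^ Δ * K.μ * N / 4}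
      ≤ ENNReal.ofReal (Real.exp (-(K.q ^ Δ * K.μ * N / 4))) := by
  set B : Finset U := {b ∈ D.buffer | D.guestPart b = D.hostPart v} with hBdef
  have hB : B ⊆ D.buffer := filter_subset _ _
  set t : ℝ := K.q ^ Δ * K.μ * N / 4 with ht
  have hinit : ∏ b ∈ B, D.aliveWeight v b (fun _ => none) ≤ Real.exp (-(2 * t)) := by
    have hm : 2 * t ≤ m * (K.q ^ Δ / 2) := by
      rw [ht]
      linarith [mul_le_mul_of_nonneg_left D.admissible.μ_mul_le
        (pow_nonneg D.admissible.q_pos.le Δ)]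
    calc ∏ b ∈ B, D.aliveWeight v b (fun _ => none)
        ≤ ∏ _b ∈ B, Real.exp (-(K.q ^ Δ / 2)) :=
          prod_le_prod (fun _ _ => aliveWeight_nonneg) fun b hb =>
            aliveWeight_none_le (hB hb) (mem_filter.1 hb).2
      _ = Real.exp (-(m * (K.q ^ Δ / 2))) := by
          rw [prod_const, ← Real.exp_nat_mul, hBdef, D.card_buffer, mul_neg]
      _ ≤ Real.exp (-(2 * t)) := Real.exp_le_exp.2 (neg_le_neg hm)
  have hfinal : ∀ s : EmbedState U V, ¬ D.HasPending s.map → #(D.aliveBuffer v s.map) < t →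
      1 ≤ Real.exp t * ∏ b ∈ B, D.aliveWeight v b s.map := fun s hpend hlt => by
    have hprod : ∏ b ∈ B, D.aliveWeight v b s.map = (1 / 2) ^ #(D.aliveBuffer v s.map) := by
      rw [prod_congr rfl fun b hb => aliveWeight_of_not_hasPending (hB hb) hpend, prod_ite,
        prod_const, prod_const_one, mul_one, aliveBuffer, hBdef, filter_filter]
    calc 1 ≤ Real.exp (t - #(D.aliveBuffer v s.map)) := Real.one_le_exp (sub_nonneg.2 hlt.le)
      _ = Real.exp t * Real.exp (-#(D.aliveBuffer v s.map)) := by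
          rw [← Real.exp_add, sub_eq_add_neg]
      _ ≤ _ := by
          rw [hprod]
          exact mul_le_mul_of_nonneg_left (exp_neg_le_half_pow _) (Real.exp_pos _).le
  refine (toOuterMeasure_le_of_one_le p (Real.exp_pos t).le (fun s hs => hfinal s hs.1 hs.2)
    ((hp.tsum_le _ (isSupermartingale_prod_aliveWeight v hB)).trans
      (ENNReal.ofReal_le_ofReal hinit))).trans_eq ?_
  rw [← Real.exp_add]
  ring_nf

theorem IsOutput.toOuterMeasure_exists_card_aliveBuffer_lt_le (hp : D.IsOutput p) :
    p.toOuterMeasure {s | ∃ v, ¬ D.HasPending s.map ∧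
        #(D.aliveBuffer v s.map) < K.q ^ Δ * K.μ * N / 4} ≤ ENNReal.ofReal (1 / 4) := by
  have hV : #(univ : Finset V) = r * N := by
    rw [card_eq_sum_card_fiberwise fun v _ => mem_univ (D.hostPart v)]
    simp [D.card_hostPart]
  have hunion := toOuterMeasure_biUnion_le p fun v (_ : v ∈ (univ : Finset V)) =>
    hp.toOuterMeasure_card_aliveBuffer_lt_le v
  rw [hV, Nat.cast_mul] at hunion
  refine le_trans (p.toOuterMeasure.mono fun s ⟨v, hv⟩ => ?_)
    (hunion.trans (ENNReal.ofReal_le_ofReal D.admissible.alive_tail_le))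
  exact Set.mem_biUnion (mem_univ v) hv

end Buffer

section Atypical

variable {i : Fin r} {S : Finset U} {T : Finset V}

variable (D) in
/-- The vertices of `S` behave independently enough for the probability that none of them is
typical for `T` to be tiny. -/
structure IsTestPair (i : Fin r) (S : Finset U) (T : Finset V) : Prop where
  guestPart_eq : ∀ y ∈ S, D.guestPart y = i
  notMem_exceptional : ∀ y ∈ S, y ∉ D.exceptional
  pairwiseDisjoint : (S : Set U).PairwiseDisjoint D.guest.neighborSet
  le_card_left : K.γ' * N ≤ #S
  hostPart_eq : ∀ v ∈ T, D.hostPart v = i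
  le_card_right : K.τ * N ≤ #T

variable (D) in
theorem card_isTestPair_le (i : Fin r) :
    #{P : Finset U × Finset V | D.IsTestPair i P.1 P.2} ≤ 4 ^ N := by
  have hsub : ({P : Finset U × Finset V | D.IsTestPair i P.1 P.2} : Finset _) ⊆
      ({x | D.guestPart x = i} : Finset U).powerset ×ˢ
        ({v | D.hostPart v = i} : Finset V).powerset := fun P hP => by
    have hP := (mem_filter.1 hP).2
    rw [mem_product, mem_powerset, mem_powerset]
    exact ⟨fun y hy => mem_filter.2 ⟨mem_univ _, hP.guestPart_eq y hy⟩,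
      fun v hv => mem_filter.2 ⟨mem_univ _, hP.hostPart_eq v hv⟩⟩
  refine (card_le_card hsub).trans_eq ?_
  rw [card_product, card_powerset, card_powerset, D.card_guestPart, D.card_hostPart, ← mul_pow]
  norm_num

theorem atypicalWeight_none_le {y : U} (hy : y ∉ D.exceptional)
    (hT : ∀ v ∈ T, D.hostPart v = D.guestPart y) :
    D.atypicalWeight T y (fun _ => none) ≤ Real.exp (-(4 / K.γ')) := by
  have htyp : D.IsTypical T #T y fun _ => none := by
    rw [IsTypical, EmbeddingProblem.embeddedNbrs_none, card_empty, pow_zero, one_mul,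
      EmbeddingProblem.candidates_none]
    exact Nat.cast_le.2 <| card_le_card fun v hv =>
      mem_inter.2 ⟨D.mem_target y hy v (hT v hv), hv⟩
  rw [atypicalWeight, if_pos htyp]
  refine le_trans ?_ D.admissible.bad_le_exp
  rw [mul_comm]
  exact mul_le_mul_of_nonneg_right (Nat.cast_le.2 (D.card_unembeddedNbrs_le _ y))
    D.ε_div_c₀_nonneg

theorem IsOutput.toOuterMeasure_forall_not_isTypical_le (hp : D.IsOutput p)
    (h : D.IsTestPair i S T) :
    p.toOuterMeasure {s | ∀ y ∈ S, ¬ D.IsTypical T #T y s.map}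
      ≤ ENNReal.ofReal (Real.exp (-(4 * N))) := by
  have hinit : ∏ y ∈ S, D.atypicalWeight T y (fun _ => none) ≤ Real.exp (-(4 * N)) := by
    have hS : 4 * N ≤ #S * (4 / K.γ') := by
      rw [← mul_div_assoc, le_div_iff₀ D.admissible.γ'_pos]
      linarith [h.le_card_left]
    calc ∏ y ∈ S, D.atypicalWeight T y (fun _ => none)
        ≤ ∏ _y ∈ S, Real.exp (-(4 / K.γ')) :=
          prod_le_prod (fun _ _ => atypicalWeight_nonneg) fun y hy =>
            atypicalWeight_none_le (h.notMem_exceptional y hy) fun v hv =>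
              (h.hostPart_eq v hv).trans (h.guestPart_eq y hy).symm
      _ = Real.exp (-(#S * (4 / K.γ'))) := by rw [prod_const, ← Real.exp_nat_mul, mul_neg]
      _ ≤ Real.exp (-(4 * N)) := Real.exp_le_exp.2 (neg_le_neg hS)
  refine (toOuterMeasure_le_of_one_le p zero_le_one (fun s hs => ?_)
    ((hp.tsum_le _ (isSupermartingale_prod_atypicalWeight h.le_card_right
      h.pairwiseDisjoint)).trans (ENNReal.ofReal_le_ofReal hinit))).trans_eq (by rw [one_mul])
  rw [one_mul]
  exact (prod_eq_one fun y hy => if_neg (hs y hy)).ge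

variable (D) in
/-- The vertices in part `i` which have too few candidates in `T`. -/
noncomputable def atypicalGuests (i : Fin r) (T : Finset V) (f : U → Option V) : Finset U :=
  {y | D.guestPart y = i ∧ y ∉ D.exceptional ∧ ¬ D.IsTypical T #T y f}

theorem exists_isTestPair {f : U → Option V} (hT : ∀ v ∈ T, D.hostPart v = i)
    (hTcard : K.τ * N ≤ #T) (hlt : K.γ * N / 2 < #(D.atypicalGuests i T f)) :
    ∃ S, D.IsTestPair i S T ∧ ∀ y ∈ S, ¬ D.IsTypical T #T y f := by
  obtain ⟨S, hS, hdisj, hcard⟩ := exists_subset_pairwiseDisjoint_neighborSet D.degree_le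
    (D.atypicalGuests i T f)
  have hmem : ∀ y ∈ S, D.guestPart y = i ∧ y ∉ D.exceptional ∧ ¬ D.IsTypical T #T y f :=
    fun y hy => (mem_filter.1 (hS hy)).2
  refine ⟨S, ⟨fun y hy => (hmem y hy).1, fun y hy => (hmem y hy).2.1, hdisj, ?_, hT, hTcard⟩,
    fun y hy => (hmem y hy).2.2⟩
  have hcard : (#(D.atypicalGuests i T f) : ℝ) ≤ #S * (1 + Δ * Δ) := by exact_mod_cast hcard
  have hγ' := mul_le_mul_of_nonneg_right D.admissible.scattered_le D.N_pos.le
  refine le_of_mul_le_mul_left (a := 1 + (Δ : ℝ) * Δ) ?_ (by positivity)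
  linarith

theorem IsOutput.toOuterMeasure_exists_lt_card_atypicalGuests_le (hp : D.IsOutput p) :
    p.toOuterMeasure {s | ∃ i T, (∀ v ∈ T, D.hostPart v = i) ∧ K.τ * N ≤ #T ∧
        K.γ * N / 2 < #(D.atypicalGuests i T s.map)} ≤ ENNReal.ofReal (1 / 4) := by
  have hpart : ∀ i ∈ (univ : Finset (Fin r)), p.toOuterMeasure
      (⋃ P ∈ ({P | D.IsTestPair i P.1 P.2} : Finset (Finset U × Finset V)),
        {s | ∀ y ∈ P.1, ¬ D.IsTypical P.2 #P.2 y s.map})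
      ≤ ENNReal.ofReal (Real.exp (-(2 * N))) := fun i _ => by
    refine (toOuterMeasure_biUnion_le p fun P hP =>
      hp.toOuterMeasure_forall_not_isTypical_le (mem_filter.1 hP).2).trans ?_
    refine ENNReal.ofReal_le_ofReal (le_trans ?_ (four_pow_mul_exp_le N))
    exact mul_le_mul_of_nonneg_right (by exact_mod_cast D.card_isTestPair_le i)
      (Real.exp_pos _).le
  have hunion := toOuterMeasure_biUnion_le p hpart
  rw [card_univ, Fintype.card_fin] at hunion
  refine le_trans (p.toOuterMeasure.mono fun s ⟨i, T, hT, hTcard, hlt⟩ => ?_)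
    (hunion.trans (ENNReal.ofReal_le_ofReal D.admissible.bad_tail_le))
  obtain ⟨S, hST, hS⟩ := exists_isTestPair hT hTcard hlt
  exact Set.mem_biUnion (mem_univ i) <| Set.mem_biUnion (x := (S, T))
    (mem_filter.2 ⟨mem_univ _, hST⟩) hS

end Atypical

variable (D) in
/-- The properties of the final state of the algorithm, satisfied with probability at least one
half, which make it possible to embed the remaining vertices. -/
structure IsGood (s : EmbedState U V) : Prop where
  card_atypicalGuests_le : ∀ i T, (∀ v ∈ T, D.hostPart v = i) → K.τ * N ≤ #T →
    #(D.atypicalGuests i T s.map) ≤ K.γ * N / 2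
  le_card_aliveBuffer : ∀ v, ¬ D.HasPending s.map →
    K.q ^ Δ * K.μ * N / 4 ≤ #(D.aliveBuffer v s.map)

theorem IsOutput.toOuterMeasure_compl_isGood_le (hp : D.IsOutput p) :
    p.toOuterMeasure {s | D.IsGood s}ᶜ ≤ ENNReal.ofReal (1 / 2) := by
  have hcover : {s | D.IsGood s}ᶜ ⊆
      {s | ∃ i T, (∀ v ∈ T, D.hostPart v = i) ∧ K.τ * N ≤ #T ∧
        K.γ * N / 2 < #(D.atypicalGuests i T s.map)} ∪
      {s | ∃ v, ¬ D.HasPending s.map ∧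
        #(D.aliveBuffer v s.map) < K.q ^ Δ * K.μ * N / 4} := fun s hs => by
    by_contra hs'
    simp only [Set.mem_union, Set.mem_ofPred_eq, not_or, not_exists, not_and, not_lt] at hs'
    exact hs ⟨hs'.1, hs'.2⟩
  calc p.toOuterMeasure {s | D.IsGood s}ᶜ
      ≤ ENNReal.ofReal (1 / 4) + ENNReal.ofReal (1 / 4) :=
        (p.toOuterMeasure.mono hcover).trans <| (MeasureTheory.measure_union_le _ _).trans <|
          add_le_add hp.toOuterMeasure_exists_lt_card_atypicalGuests_le
            hp.toOuterMeasure_exists_card_aliveBuffer_lt_le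
    _ = ENNReal.ofReal (1 / 2) := by
        rw [← ENNReal.ofReal_add (by norm_num) (by norm_num)]
        norm_num

end BlowUpInstance

/-! ### Completing the embedding -/

/-- The map `φ` is an embedding of the guest graph which respects the target sets. -/
structure EmbeddingProblem.IsSolution {U V : Type*} (P : EmbeddingProblem U V) (φ : U → V) :
    Prop where
  injective : Function.Injective φ
  adj : ∀ x y, P.guest.Adj x y → P.host.Adj (φ x) (φ y)
  mem_target : ∀ x, φ x ∈ P.target x

theorem card_filter_map_subtype {α : Type*} {T : Finset α} (S : Finset T) (p : α → Prop)
    [DecidablePred p] :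
    #{y ∈ S | p y.1} = #{v ∈ S.map (Function.Embedding.subtype _) | p v} := by
  rw [filter_map, card_map]
  rfl

theorem card_filter_univ_coe {α : Type*} (T : Finset α) (p : α → Prop) [DecidablePred p] :
    #{y : T | p y.1} = #{v ∈ T | p v} := by
  rw [card_filter_map_subtype, univ_eq_attach, attach_map_val]

namespace BlowUpInstance

variable {K : BlowUpConstants} {r Δ N m : ℕ} {ε β : ℝ} {U V : Type*} [Fintype U] [Fintype V]
  (D : BlowUpInstance K r Δ N m ε β U V)

/-- The vertices of the guest graph in part `i` which are not embedded. -/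
noncomputable def remainingGuests (i : Fin r) (f : U → Option V) : Finset U :=
  {x | D.guestPart x = i ∧ f x = none}

/-- The vertices of the host graph in part `i` which are not used. -/
noncomputable def remainingHosts (i : Fin r) (f : U → Option V) : Finset V :=
  {v | D.hostPart v = i ∧ v ∉ usedVertices f}

variable {D} {f : U → Option V} {s : EmbedState U V} {i : Fin r} {x y : U} {v : V}

theorem mem_remainingGuests :
    x ∈ D.remainingGuests i f ↔ D.guestPart x = i ∧ f x = none := by
  simp [remainingGuests]

theorem mem_remainingHosts :
    v ∈ D.remainingHosts i f ↔ D.hostPart v = i ∧ ∀ x, f x ≠ some v := by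
  simp [remainingHosts]

section Sizes

theorem candidates_inter_remainingHosts (hx : D.guestPart x = i) :
    D.candidates f x ∩ D.remainingHosts i f = D.freeCandidates f x := by
  ext v
  rw [mem_inter, mem_remainingHosts, EmbeddingProblem.mem_freeCandidates]
  exact ⟨fun h => ⟨h.1, h.2.2⟩, fun h =>
    ⟨h.1, (hostPart_of_mem_candidates h.1).trans hx, h.2⟩⟩

theorem IsValid.hostPart_eq (hs : D.IsValid s) (hx : s.map x = some v) :
    D.hostPart v = D.guestPart x :=
  hostPart_of_mem_candidates (hs.mem_candidates x v hx)

theorem IsValid.card_embedded_eq_card_used (hs : D.IsValid s) (i : Fin r) :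
    #{x | D.guestPart x = i ∧ ¬ s.map x = none}
      = #{v | D.hostPart v = i ∧ ¬ v ∉ usedVertices s.map} := by
  have hsome : ∀ {x}, x ∈ ({x | D.guestPart x = i ∧ ¬ s.map x = none} : Finset U) →
      D.guestPart x = i ∧ (s.map x).isSome := fun hx =>
    (mem_filter.1 hx).2.imp_right Option.isSome_iff_ne_none.2
  refine card_bij (fun x hx => (s.map x).get (hsome hx).2) (fun x hx => ?_)
    (fun x hx y hy hxy => ?_) fun v hv => ?_
  · have hget := (Option.some_get (hsome hx).2).symm
    simp only [mem_filter, mem_univ, true_and, not_not, mem_usedVertices]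
    exact ⟨(hs.hostPart_eq hget).trans (hsome hx).1, x, hget⟩
  · exact hs.injective x y _ (Option.some_get (hsome hx).2).symm
      (hxy ▸ (Option.some_get (hsome hy).2).symm)
  · simp only [mem_filter, mem_univ, true_and, not_not, mem_usedVertices] at hv
    obtain ⟨hvi, x, hx⟩ := hv
    exact ⟨x, mem_filter.2 ⟨mem_univ x, (hs.hostPart_eq hx).symm.trans hvi, by simp [hx]⟩,
      by simp [hx]⟩

theorem IsValid.card_remainingHosts (hs : D.IsValid s) (i : Fin r) :
    #(D.remainingHosts i s.map) = #(D.remainingGuests i s.map) := by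
  have hguest := card_filter_add_card_filter_not (s := {x | D.guestPart x = i})
    fun x => s.map x = none
  have hhost := card_filter_add_card_filter_not (s := {v | D.hostPart v = i})
    fun v => v ∉ usedVertices s.map
  rw [filter_filter, filter_filter, D.card_guestPart] at hguest
  rw [filter_filter, filter_filter, D.card_hostPart] at hhost
  have := hs.card_embedded_eq_card_used i
  unfold remainingHosts remainingGuests
  omega

theorem IsValid.le_card_remainingGuests (hs : D.IsValid s) (i : Fin r) :
    K.μ * N / 2 ≤ #(D.remainingGuests i s.map) := by
  have hsub : {x ∈ D.buffer | D.guestPart x = i}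
      ⊆ D.remainingGuests i s.map ∪ {x ∈ s.queue | D.guestPart x = i} := fun x hx => by
    obtain ⟨hxb, hxi⟩ := mem_filter.1 hx
    by_cases hx₀ : s.map x = none
    · exact mem_union_left _ (mem_remainingGuests.2 ⟨hxi, hx₀⟩)
    · exact mem_union_right _ (mem_filter.2 ⟨hs.mem_queue_of_mem_buffer x hxb hx₀, hxi⟩)
  have hcard := (card_le_card hsub).trans (card_union_le _ _)
  rw [D.card_buffer] at hcard
  have hcard : (m : ℝ) ≤ #(D.remainingGuests i s.map) + #{x ∈ s.queue | D.guestPart x = i} := by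
    exact_mod_cast hcard
  linarith [D.admissible.μ_mul_le, D.admissible.queue_le_buffer, hs.card_queue_le i]

theorem IsValid.le_card_remainingHosts (hs : D.IsValid s) (i : Fin r) :
    K.μ * N / 2 ≤ #(D.remainingHosts i s.map) :=
  hs.card_remainingHosts i ▸ hs.le_card_remainingGuests i

end Sizes

section Terminal

theorem IsGood.isShortQueue (hgood : D.IsGood s) (hs : D.IsValid s) :
    D.IsShortQueue s.queue := fun i => by
  have hsub : {x ∈ s.queue | D.guestPart x = i}
      ⊆ D.exceptional ∪ D.atypicalGuests i (D.remainingHosts i s.map) s.map := fun x hx => by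
    obtain ⟨hxQ, hxi⟩ := mem_filter.1 hx
    rw [mem_union, or_iff_not_imp_left]
    refine fun hxe => mem_filter.2 ⟨mem_univ x, hxi, hxe, fun htyp => ?_⟩
    have hlow := htyp.pow_mul_le (Nat.cast_nonneg _)
    rw [candidates_inter_remainingHosts hxi] at hlow
    linarith [hs.card_free_of_mem_queue x hxQ, D.admissible.critical_le_buffer,
      mul_le_mul_of_nonneg_left (hs.le_card_remainingHosts i)
        (pow_nonneg D.admissible.d_pos.le Δ)]
  have hτ : K.τ * N ≤ #(D.remainingHosts i s.map) := by
    linarith [hs.le_card_remainingHosts i,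
      mul_le_mul_of_nonneg_right D.admissible.τ_le_μ D.N_pos.le]
  have hatyp := hgood.card_atypicalGuests_le i _ (fun v hv => (mem_remainingHosts.1 hv).1) hτ
  calc (#{x ∈ s.queue | D.guestPart x = i} : ℝ)
      ≤ #D.exceptional + #(D.atypicalGuests i (D.remainingHosts i s.map) s.map) := by
        exact_mod_cast (card_le_card hsub).trans (card_union_le _ _)
    _ ≤ K.γ * N := by
        linarith [D.card_exceptional_le,
          mul_le_mul_of_nonneg_right D.admissible.β_le D.N_pos.le]

variable (D) in
/-- The algorithm has terminated successfully: only buffer vertices remain to be embedded, and the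
properties in `IsGood` ensure that this can be done by perfect matchings. -/
structure IsTerminal (s : EmbedState U V) : Prop where
  isValid : D.IsValid s
  isGood : D.IsGood s
  nextVertex_eq_none : D.nextVertex s.map = none

theorem IsGood.isTerminal (hgood : D.IsGood s) (hs : D.IsValid s) (hopts : D.options s = ∅) :
    D.IsTerminal s := by
  refine ⟨hs, hgood, Option.eq_none_iff_forall_not_mem.2 fun z hz => ?_⟩
  have hz : D.nextVertex s.map = some z := hz
  have hallowed : D.allowedImages s.map z K.d = ∅ := by
    simpa [options, hgood.isShortQueue hs, hz] using hopts
  have hle := hs.le_card_allowedImages (nextVertex_eq_some hz).1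
  rw [hallowed, card_empty, Nat.cast_zero] at hle
  exact hle.not_gt (mul_pos D.admissible.c₀_pos D.N_pos)

theorem IsTerminal.mem_buffer (hs : D.IsTerminal s) (hx : s.map x = none) : x ∈ D.buffer :=
  (D.nextVertex_eq_none hs.nextVertex_eq_none).2 x hx

theorem IsTerminal.not_hasPending (hs : D.IsTerminal s) : ¬ D.HasPending s.map :=
  fun ⟨_, hxN, hx⟩ => notMem_bufferNbrs_of_mem_buffer (hs.mem_buffer hx) hxN

theorem notMem_exceptional_of_mem_buffer (hx : x ∈ D.buffer) : x ∉ D.exceptional := fun hxe => by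
  simpa using D.exceptional_separated x hx x hxe

theorem IsTerminal.card_remainingGuests_le (hs : D.IsTerminal s) (i : Fin r) :
    #(D.remainingGuests i s.map) ≤ 2 * K.μ * N := by
  refine le_trans (Nat.cast_le.2 ?_) D.admissible.le_two_mul_μ
  refine (card_le_card fun x hx => ?_).trans_eq (D.card_buffer i)
  obtain ⟨hxi, hx₀⟩ := mem_remainingGuests.1 hx
  exact mem_filter.2 ⟨hs.mem_buffer hx₀, hxi⟩

theorem IsTerminal.c₂_mul_card_le (hs : D.IsTerminal s) (i : Fin r) :
    K.c₂ * #(D.remainingGuests i s.map) ≤ K.c₂ * (2 * K.μ) * N := by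
  rw [mul_assoc]
  exact mul_le_mul_of_nonneg_left (hs.card_remainingGuests_le i) D.admissible.c₂_pos.le

theorem IsTerminal.le_card_filter_mem_candidates (hs : D.IsTerminal s)
    (hx : x ∈ D.remainingGuests i s.map) :
    K.c₂ * #(D.remainingGuests i s.map)
      ≤ #{v ∈ D.remainingHosts i s.map | v ∈ D.candidates s.map x} := by
  obtain ⟨hxi, hx₀⟩ := mem_remainingGuests.1 hx
  rw [filter_mem_eq_inter, inter_comm, candidates_inter_remainingHosts hxi]
  have hfree : K.κ * N + 1 ≤ #(D.freeCandidates s.map x) := by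
    by_contra! hlt
    exact (D.nextVertex_eq_none hs.nextVertex_eq_none).1 x ⟨hx₀, hlt⟩
  linarith [hs.c₂_mul_card_le i, mul_le_mul_of_nonneg_right D.admissible.c₂_le_κ D.N_pos.le]

theorem IsTerminal.le_card_filter_candidates_mem (hs : D.IsTerminal s)
    (hv : v ∈ D.remainingHosts i s.map) :
    K.c₂ * #(D.remainingGuests i s.map)
      ≤ #{x ∈ D.remainingGuests i s.map | v ∈ D.candidates s.map x} := by
  have hsub : D.aliveBuffer v s.map
      ⊆ {x ∈ D.remainingGuests i s.map | v ∈ D.candidates s.map x}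
        ∪ {x ∈ s.queue | D.guestPart x = i} := fun b hb => by
    obtain ⟨hbb, hbv, halive⟩ := mem_filter.1 hb
    have hbi := hbv.trans (mem_remainingHosts.1 hv).1
    by_cases hb₀ : s.map b = none
    · refine mem_union_left _ (mem_filter.2 ⟨mem_remainingGuests.2 ⟨hbi, hb₀⟩, ?_⟩)
      exact EmbeddingProblem.mem_candidates.2
        ⟨D.mem_target b (notMem_exceptional_of_mem_buffer hbb) v hbv.symm,
          fun z w hbz hw => (halive z hbz).1 w hw⟩
    · exact mem_union_right _
        (mem_filter.2 ⟨hs.isValid.mem_queue_of_mem_buffer b hbb hb₀, hbi⟩)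
  have hcard : (#(D.aliveBuffer v s.map) : ℝ)
      ≤ #{x ∈ D.remainingGuests i s.map | v ∈ D.candidates s.map x}
        + #{x ∈ s.queue | D.guestPart x = i} := by
    exact_mod_cast (card_le_card hsub).trans (card_union_le _ _)
  linarith [hs.c₂_mul_card_le i, hs.isGood.le_card_aliveBuffer v hs.not_hasPending,
    hs.isGood.isShortQueue hs.isValid i,
    mul_le_mul_of_nonneg_right D.admissible.c₂_add_γ_le D.N_pos.le]

theorem IsTerminal.le_card_filter_le_card_candidates (hs : D.IsTerminal s) {S : Finset U}
    {T : Finset V} (hS : S ⊆ D.remainingGuests i s.map) (hT : T ⊆ D.remainingHosts i s.map)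
    (hScard : K.c₂ / 2 * #(D.remainingGuests i s.map) ≤ #S)
    (hTcard : K.c₂ / 2 * #(D.remainingGuests i s.map) ≤ #T) :
    K.c₂ / 4 * #(D.remainingGuests i s.map) ≤
      #{x ∈ S | K.d ^ Δ * K.c₂ / 2 * #(D.remainingGuests i s.map)
        ≤ #{v ∈ T | v ∈ D.candidates s.map x}} := by
  have hlow := mul_le_mul_of_nonneg_left (hs.isValid.le_card_remainingGuests i)
    D.admissible.c₂_pos.le
  have hγN : 0 ≤ K.γ * N := mul_nonneg D.admissible.γ_pos.le D.N_pos.le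
  have hτ : K.τ * N ≤ #T := by
    linarith [mul_le_mul_of_nonneg_right D.admissible.τ_le_c₂ D.N_pos.le]
  have hatyp := hs.isGood.card_atypicalGuests_le i T
    (fun v hv => (mem_remainingHosts.1 (hT hv)).1) hτ
  have hsub : S ⊆ {x ∈ S | K.d ^ Δ * K.c₂ / 2 * #(D.remainingGuests i s.map)
      ≤ #{v ∈ T | v ∈ D.candidates s.map x}} ∪ D.atypicalGuests i T s.map := fun x hx => by
    obtain ⟨hxi, hx₀⟩ := mem_remainingGuests.1 (hS hx)
    by_cases htyp : D.IsTypical T #T x s.map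
    · refine mem_union_left _ (mem_filter.2 ⟨hx, ?_⟩)
      rw [filter_mem_eq_inter, inter_comm]
      linarith [htyp.pow_mul_le (Nat.cast_nonneg _),
        mul_le_mul_of_nonneg_left hTcard (pow_nonneg D.admissible.d_pos.le Δ)]
    · exact mem_union_right _ (mem_filter.2
        ⟨mem_univ x, hxi, notMem_exceptional_of_mem_buffer (hs.mem_buffer hx₀), htyp⟩)
  have hcard : (#S : ℝ) ≤ #{x ∈ S | K.d ^ Δ * K.c₂ / 2 * #(D.remainingGuests i s.map)
      ≤ #{v ∈ T | v ∈ D.candidates s.map x}} + #(D.atypicalGuests i T s.map) := by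
    exact_mod_cast (card_le_card hsub).trans (card_union_le _ _)
  linarith [mul_le_mul_of_nonneg_right D.admissible.γ_le_c₂ D.N_pos.le]

theorem IsTerminal.isLowerRegular (hs : D.IsTerminal s) (i : Fin r) :
    IsLowerRegular (X := D.remainingGuests i s.map) (Y := D.remainingHosts i s.map)
      (fun x v => v.1 ∈ D.candidates s.map x) K.c₂ (K.d ^ Δ * K.c₂ / 2)
      #(D.remainingGuests i s.map) where
  card_left := Fintype.card_coe _
  card_right := (Fintype.card_coe _).trans (hs.isValid.card_remainingHosts i)
  degree_left x := by
    have hdegree := hs.le_card_filter_mem_candidates x.2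
    rw [← card_filter_univ_coe _ (· ∈ D.candidates s.map x)] at hdegree
    convert hdegree
  degree_right v := by
    have hdegree := hs.le_card_filter_candidates_mem v.2
    rw [← card_filter_univ_coe _ (v.1 ∈ D.candidates s.map ·)] at hdegree
    convert hdegree
  regular S T hS hT := by
    have hmain := hs.le_card_filter_le_card_candidates
      (fun x hx => property_of_mem_map_subtype S hx) (fun v hv => property_of_mem_map_subtype T hv)
      ((card_map _).symm ▸ hS) ((card_map _).symm ▸ hT)
    rw [← card_filter_map_subtype S fun x => _ ≤ (#{v ∈ T.map _ | v ∈ D.candidates s.map x} : ℝ)]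
      at hmain
    simp only [← card_filter_map_subtype T (· ∈ D.candidates s.map _)] at hmain
    convert hmain

end Terminal

section Glue

/-- The extension of the partial map `f` by matchings `ψ i` of the remaining vertices. -/
noncomputable def glue (f : U → Option V)
    (ψ : ∀ i, D.remainingGuests i f → D.remainingHosts i f) (x : U) : V :=
  if hx : f x = none then ψ (D.guestPart x) ⟨x, mem_remainingGuests.2 ⟨rfl, hx⟩⟩
  else (f x).get (Option.isSome_iff_ne_none.2 hx)

variable {ψ : ∀ i, D.remainingGuests i f → D.remainingHosts i f}

theorem glue_of_eq_some (hx : f x = some v) : glue f ψ x = v := by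
  simp [glue, hx]

theorem glue_of_mem (hx : x ∈ D.remainingGuests i f) : glue f ψ x = ψ i ⟨x, hx⟩ := by
  obtain ⟨rfl, hx₀⟩ := mem_remainingGuests.1 hx
  rw [glue, dif_pos hx₀]

theorem exists_glue_eq (hx : f x = none) :
    ∃ hx' : x ∈ D.remainingGuests (D.guestPart x) f, glue f ψ x = ψ _ ⟨x, hx'⟩ :=
  ⟨mem_remainingGuests.2 ⟨rfl, hx⟩, glue_of_mem _⟩

variable {ψ : ∀ i, D.remainingGuests i s.map → D.remainingHosts i s.map}

theorem IsValid.glue_mem_candidates (hs : D.IsValid s)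
    (hψ : ∀ i x, (ψ i x).1 ∈ D.candidates s.map x.1) (x : U) :
    glue s.map ψ x ∈ D.candidates s.map x := by
  cases hx : s.map x with
  | none =>
    obtain ⟨hx', heq⟩ := exists_glue_eq (ψ := ψ) hx
    exact heq ▸ hψ _ _
  | some v => exact glue_of_eq_some hx ▸ hs.mem_candidates x v hx

theorem IsValid.glue_injective (hs : D.IsValid s) (hψ : ∀ i, Function.Injective (ψ i)) :
    Function.Injective (glue s.map ψ) := by
  have hne : ∀ {x y v}, s.map x = some v → s.map y = none → glue s.map ψ x ≠ glue s.map ψ y :=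
    fun {x y v} hx hy heq => by
      obtain ⟨hy', hyψ⟩ := exists_glue_eq (ψ := ψ) hy
      rw [glue_of_eq_some hx, hyψ] at heq
      exact (mem_remainingHosts.1 (ψ _ ⟨y, hy'⟩).2).2 x (heq ▸ hx)
  intro x y hxy
  cases hx : s.map x with
  | some v =>
    cases hy : s.map y with
    | some w =>
      rw [glue_of_eq_some hx, glue_of_eq_some hy] at hxy
      exact hs.injective x y v hx (hxy ▸ hy)
    | none => exact absurd hxy (hne hx hy)
  | none =>
    cases hy : s.map y with
    | some w => exact absurd hxy.symm (hne hy hx)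
    | none =>
      obtain ⟨hx', hxψ⟩ := exists_glue_eq (ψ := ψ) hx
      obtain ⟨hy', hyψ⟩ := exists_glue_eq (ψ := ψ) hy
      have hpart : D.guestPart x = D.guestPart y :=
        (mem_remainingHosts.1 (ψ _ ⟨x, hx'⟩).2).1.symm.trans
          ((hxψ.symm.trans (hxy.trans hyψ)) ▸ (mem_remainingHosts.1 (ψ _ ⟨y, hy'⟩).2).1)
      rw [glue_of_mem (hpart ▸ hx'), glue_of_mem hy'] at hxy
      exact congrArg Subtype.val (hψ _ (Subtype.ext hxy))

theorem IsTerminal.isSolution_glue (hs : D.IsTerminal s)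
    (hψ : ∀ i, Function.Injective (ψ i) ∧ ∀ x, (ψ i x).1 ∈ D.candidates s.map x.1) :
    D.IsSolution (glue s.map ψ) := by
  have hmem := fun x => EmbeddingProblem.mem_candidates.1
    (hs.isValid.glue_mem_candidates (fun i => (hψ i).2) x)
  have hadj : ∀ {x y w}, s.map y = some w → D.guest.Adj x y →
      D.host.Adj (glue s.map ψ x) (glue s.map ψ y) := fun {x y w} hy hxy =>
    glue_of_eq_some hy ▸ (hmem x).2 y w hxy hy
  refine ⟨hs.isValid.glue_injective fun i => (hψ i).1, fun x y hxy => ?_, fun x => (hmem x).1⟩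
  cases hy : s.map y with
  | some w => exact hadj hy hxy
  | none =>
    cases hx : s.map x with
    | some w => exact (hadj hx hxy.symm).symm
    | none => exact absurd (eq_of_walk (hs.mem_buffer hx) (hs.mem_buffer hy) hxy.toWalk
        (by simp)) hxy.ne

end Glue

section Spread

variable {k : ℕ} {M : ℝ}

theorem pow_d_mul_c₂_le_one (D : BlowUpInstance K r Δ N m ε β U V) : K.d ^ Δ * K.c₂ / 2 ≤ 1 := by
  have hμ := D.admissible.μ_pos
  have hc₂ : K.c₂ * K.μ ≤ 1 * K.μ := by
    linarith [D.admissible.c₂_add_γ_le, D.admissible.γ_pos, mul_le_of_le_one_left hμ.le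
      (pow_le_one₀ (n := Δ) D.admissible.q_pos.le D.admissible.q_le_one)]
  linarith [mul_le_one₀ (D.pow_d_le_one Δ) D.admissible.c₂_pos.le (le_of_mul_le_mul_right hc₂ hμ)]

variable (D) in
theorem prod_imageWeight_eq {g : U → V} {I : Finset U}
    (hg : ∀ x ∈ I, ∀ v, f x = some v → v = g x) :
    ∏ x ∈ I, imageWeight M g x f = ∏ i, M ^ #{x : D.remainingGuests i f | x.1 ∈ I} := by
  have hfiber : ∀ i, #{x : D.remainingGuests i f | x.1 ∈ I}
      = #{x ∈ {x ∈ I | f x = none} | D.guestPart x = i} := fun i => by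
    rw [card_filter_univ_coe _ (· ∈ I)]
    congr 1
    ext x
    simp only [mem_filter, mem_remainingGuests]
    tauto
  rw [prod_pow_eq_pow_sum, sum_congr rfl fun i _ => hfiber i,
    ← card_eq_sum_card_fiberwise fun x _ => mem_univ (D.guestPart x), ← prod_const, prod_filter]
  refine prod_congr rfl fun x hx => ?_
  cases hxv : f x with
  | none => simp [imageWeight, hxv]
  | some v => simp [imageWeight, hxv, hg x hx v hxv]

theorem IsTerminal.exists_completion (hs : D.IsTerminal s)
    (hk : IsLargeOutdegree k K.c₂ (K.d ^ Δ * K.c₂ / 2))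
    (hM : 4 * (k + 2 : ℕ) / K.c₂ / (K.μ * N / 2) ≤ M) :
    ∃ p : PMF (U → V), (∀ φ ∈ p.support, D.IsSolution φ) ∧ ∀ (I : Finset U) (g : U → V),
      p.toOuterMeasure {φ | ∀ x ∈ I, φ x = g x}
        ≤ ENNReal.ofReal (∏ x ∈ I, imageWeight M g x s.map) := by
  have hμN : 0 < K.μ * N / 2 := half_pos (mul_pos D.admissible.μ_pos D.N_pos)
  have hk₀ : 0 ≤ 4 * (k + 2 : ℕ) / K.c₂ := div_nonneg (by positivity) D.admissible.c₂_pos.le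
  choose p hp hspread using fun i => (hs.isLowerRegular i).exists_spread_perfectMatching
    (Nat.cast_pos.1 (hμN.trans_le (hs.isValid.le_card_remainingGuests i))) D.admissible.c₂_pos
    (half_pos (mul_pos (pow_pos D.admissible.d_pos Δ) D.admissible.c₂_pos))
    D.pow_d_mul_c₂_le_one hk
  refine ⟨(productPMF p).map (glue s.map), fun φ hφ => ?_, fun I g => ?_⟩
  · obtain ⟨ψ, hψ, rfl⟩ := (PMF.mem_support_map_iff _ _ _).1 hφ
    exact hs.isSolution_glue fun i => hp i _ (mem_support_of_mem_support_productPMF hψ i)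
  rw [PMF.toOuterMeasure_map_apply]
  obtain hempty | ⟨ψ₀, hψ₀⟩ :=
    (glue s.map ⁻¹' {φ | ∀ x ∈ I, φ x = g x} : Set (∀ i, _ → _)).eq_empty_or_nonempty
  · rw [hempty, MeasureTheory.measure_empty]
    exact zero_le
  let J : ∀ i, Finset (D.remainingGuests i s.map) := fun i => {x | x.1 ∈ I}
  have hsub : glue s.map ⁻¹' {φ | ∀ x ∈ I, φ x = g x}
      ⊆ {ψ | ∀ i, ψ i ∈ {ρ | ∀ x ∈ J i, ρ x = ψ₀ i x}} := fun ψ hψ i x hx => by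
    have hxI := (mem_filter.1 hx).2
    have heq := (hψ x hxI).trans (hψ₀ x hxI).symm
    rw [glue_of_mem x.2, glue_of_mem x.2] at heq
    exact Subtype.ext heq
  have hle : ∀ i, 4 * (k + 2 : ℕ) / K.c₂ / #(D.remainingGuests i s.map) ≤ M := fun i =>
    (div_le_div_of_nonneg_left hk₀ hμN (hs.isValid.le_card_remainingGuests i)).trans hM
  calc (productPMF p).toOuterMeasure (glue s.map ⁻¹' {φ | ∀ x ∈ I, φ x = g x})
      ≤ ∏ i, (p i).toOuterMeasure {ρ | ∀ x ∈ J i, ρ x = ψ₀ i x} :=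
        ((productPMF p).toOuterMeasure.mono hsub).trans_eq (toOuterMeasure_productPMF_pi p _)
    _ ≤ ∏ i, ENNReal.ofReal (M ^ #(J i)) := prod_le_prod' fun i _ =>
        (hspread i (J i) (ψ₀ i)).trans (ENNReal.ofReal_le_ofReal
          (pow_le_pow_left₀ (div_nonneg hk₀ (Nat.cast_nonneg _)) (hle i) _))
    _ = ENNReal.ofReal (∏ x ∈ I, imageWeight M g x s.map) := by
        have hg : ∀ x ∈ I, ∀ v, s.map x = some v → v = g x := fun x hx v hxv =>
          (glue_of_eq_some hxv).symm.trans (hψ₀ x hx)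
        rw [D.prod_imageWeight_eq hg, ENNReal.ofReal_prod_of_nonneg fun i _ => pow_nonneg
          ((div_nonneg hk₀ hμN.le).trans hM) _]

theorem IsOutput.exists_isGood {p : PMF (EmbedState U V)} (hp : D.IsOutput p) :
    ∃ s ∈ {s | D.IsGood s}, s ∈ p.support := by
  by_contra! hnone
  have hone : p.toOuterMeasure {s | D.IsGood s}ᶜ = 1 :=
    (p.toOuterMeasure_apply_eq_one_iff _).2 fun s hs hgood => hnone s hgood hs
  have hle := hp.toOuterMeasure_compl_isGood_le
  rw [hone, ENNReal.one_le_ofReal] at hle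
  norm_num at hle

theorem IsOutput.toOuterMeasure_bindOnSupport_le {p p' : PMF (EmbedState U V)}
    (hp : D.IsOutput p) (hp' : ∀ s, p' s ≤ 2 * p s) {q : ∀ s ∈ p'.support, PMF (U → V)}
    (hM : 1 ≤ M * (K.c₀ * N)) {I : Finset U} {g : U → V}
    (hq : ∀ s hs, (q s hs).toOuterMeasure {φ | ∀ x ∈ I, φ x = g x}
      ≤ ENNReal.ofReal (∏ x ∈ I, imageWeight M g x s.map)) :
    (p'.bindOnSupport q).toOuterMeasure {φ | ∀ x ∈ I, φ x = g x}
      ≤ ENNReal.ofReal (2 * M ^ #I) := by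
  have hM₀ : 0 ≤ M :=
    (pos_of_mul_pos_left (one_pos.trans_le hM)
      (mul_pos D.admissible.c₀_pos D.N_pos).le).le
  rw [PMF.toOuterMeasure_bindOnSupport_apply]
  calc _ ≤ ∑' s, 2 * (p s * ENNReal.ofReal (∏ x ∈ I, imageWeight M g x s.map)) :=
        ENNReal.tsum_le_tsum fun s => by
          rw [← mul_assoc]
          refine mul_le_mul' (hp' s) ?_
          split_ifs with hs
          exacts [zero_le, hq s hs]
    _ ≤ 2 * ENNReal.ofReal (∏ x ∈ I, imageWeight M g x fun _ => none) := by
        rw [ENNReal.tsum_mul_left]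
        exact mul_le_mul_right (hp.tsum_le _ (isSupermartingale_prod_imageWeight D hM₀ hM g I)) _
    _ = ENNReal.ofReal (2 * M ^ #I) := by
        simp [imageWeight, ENNReal.ofReal_mul]

variable (D) in
theorem exists_spread_isSolution (hk : IsLargeOutdegree k K.c₂ (K.d ^ Δ * K.c₂ / 2)) :
    ∃ p : PMF (U → V), (∀ φ ∈ p.support, D.IsSolution φ) ∧
      IsVertexSpread p (2 * (1 / K.c₀ + 2 * (4 * (k + 2 : ℕ) / K.c₂) / K.μ) / N) := by
  have hN := D.N_pos
  have hc₀ := D.admissible.c₀_pos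
  have hμ := D.admissible.μ_pos
  have hc₂ := D.admissible.c₂_pos
  set C : ℝ := 4 * (k + 2 : ℕ) / K.c₂
  set M : ℝ := (1 / K.c₀ + 2 * C / K.μ) / N with hMdef
  have hMc₀ : 1 ≤ M * (K.c₀ * N) := by
    have : M * (K.c₀ * N) = 1 + 2 * C / K.μ * K.c₀ := by rw [hMdef]; field_simp
    rw [this]
    exact le_add_of_nonneg_right (by positivity)
  have hMμ : C / (K.μ * N / 2) ≤ M := by
    have : M = 1 / K.c₀ / N + C / (K.μ * N / 2) := by rw [hMdef]; field_simp
    rw [this]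
    exact le_add_of_nonneg_left (by positivity)
  obtain ⟨p, hp⟩ := D.exists_isOutput
  set p' := p.filter {s | D.IsGood s} hp.exists_isGood
  have hterm : ∀ s ∈ p'.support, D.IsTerminal s := fun s hs => by
    obtain ⟨hgood, hs⟩ := (PMF.mem_support_filter_iff _).1 hs
    exact IsGood.isTerminal hgood (hp.isValid s hs) (hp.options_eq_empty s hs)
  choose q hq hqle using fun s hs => (hterm s hs).exists_completion hk hMμ
  have hsol : ∀ φ ∈ (p'.bindOnSupport q).support, D.IsSolution φ := fun φ hφ => by
    obtain ⟨s, hs, hφ⟩ := (PMF.mem_support_bindOnSupport_iff _ _).1 hφ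
    exact hq s hs φ hφ
  refine ⟨p'.bindOnSupport q, hsol, isVertexSpread_of_injective (fun φ hφ => (hsol φ hφ).injective)
    fun I hI g _ => (hp.toOuterMeasure_bindOnSupport_le
      (filter_apply_le_two_mul p _ hp.toOuterMeasure_compl_isGood_le) hMc₀
      fun s hs => hqle s hs I g).trans (ENNReal.ofReal_le_ofReal ?_)⟩
  calc 2 * M ^ #I ≤ 2 ^ #I * M ^ #I := by
        gcongr
        exact le_self_pow₀ one_le_two hI.card_ne_zero
    _ = (2 * (1 / K.c₀ + 2 * C / K.μ) / N) ^ #I := by rw [← mul_pow, hMdef, ← mul_div_assoc]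

end Spread

end BlowUpInstance

/-! ### Choice of the constants -/

section Eventually

open Filter Topology

theorem eventually_mul_exp_neg_mul_le (a : ℝ) {b c : ℝ} (hb : 0 < b) (hc : 0 < c) :
    ∀ᶠ N : ℕ in atTop, a * N * Real.exp (-(b * N)) ≤ c := by
  have hlim : Tendsto (fun N : ℕ => a * ((N : ℝ) ^ (1 : ℝ) * Real.exp (-b * N))) atTop
      (𝓝 (a * 0)) :=
    ((tendsto_rpow_mul_exp_neg_mul_atTop_nhds_zero 1 b hb).comp
      tendsto_natCast_atTop_atTop).const_mul a
  filter_upwards [hlim.eventually_lt_const (by simpa using hc)] with N hN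
  simpa [mul_assoc] using hN.le

theorem eventually_le_mul_natCast (a : ℝ) {b : ℝ} (hb : 0 < b) :
    ∀ᶠ N : ℕ in atTop, a ≤ b * N :=
  (tendsto_natCast_atTop_atTop.const_mul_atTop hb).eventually_ge_atTop a

end Eventually

namespace BlowUpConstants

variable {K : BlowUpConstants} {r Δ : ℕ}

theorem exists_isHierarchy (r Δ : ℕ) {δ α : ℝ} (hδ₀ : 0 < δ) (hδ₁ : δ ≤ 1) (hα₀ : 0 < α)
    (hα₁ : α ≤ 1) :
    ∃ K : BlowUpConstants, K.δ = δ ∧ K.α = α ∧ K.IsHierarchy r Δ := by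
  set P : ℝ := (δ / 2) ^ Δ with hP
  have hP₀ : 0 < P := by positivity
  have hP₁ : P ≤ 1 := pow_le_one₀ (by positivity) (by linarith)
  have hPα : P * α * δ ≤ P * α := mul_le_of_le_one_right (by positivity) hδ₁
  have hPδ : P * α * δ ≤ P * δ := by
    rw [mul_right_comm]
    exact mul_le_of_le_one_right (by positivity) hα₁
  have hPδ₁ : P * δ ≤ 1 := mul_le_one₀ hP₁ hδ₀.le hδ₁
  set q : ℝ := P * δ / 2 with hq
  have hQ₀ : 0 < q ^ Δ := by positivity
  have hQ₁ : q ^ Δ ≤ 1 := pow_le_one₀ (by positivity) (by linarith)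
  set M : ℝ := 1 + Δ + Δ ^ 2 + Δ ^ 3
  have hΔM : (Δ : ℝ) ≤ M := by
    have : (0 : ℝ) ≤ 1 + Δ ^ 2 + Δ ^ 3 := by positivity
    linarith
  obtain ⟨μ, hμ₀, hμ⟩ := exists_pos_mul_lt (show 0 < P * α * δ by positivity) (8 * (r * M) + 1)
  have hrΔμ : 0 ≤ r * Δ * μ := by positivity
  have hrMμ : r * Δ * μ ≤ r * M * μ := by gcongr
  set κ : ℝ := P * μ / 4 with hκ
  have hκμ : P * μ ≤ μ := mul_le_of_le_one_left hμ₀.le hP₁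
  set c₂ : ℝ := q ^ Δ * P / 16 with hc₂
  have hc₂₀ : 0 < c₂ := by positivity
  have hc₂P : c₂ * μ ≤ P / 16 * μ := by
    gcongr
    linarith [mul_le_of_le_one_left hP₀.le hQ₁]
  have hc₂Q : c₂ * μ ≤ q ^ Δ / 16 * μ := by
    gcongr
    linarith [mul_le_of_le_one_right hQ₀.le hP₁]
  obtain ⟨γ, hγ₀, hγ⟩ := exists_pos_mul_lt
    (show 0 < min (c₂ * μ / 8) (P * κ / 4) by positivity) (r + 1)
  obtain ⟨hγc₂, hγκ⟩ := lt_min_iff.1 hγ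
  have hrγ : 0 ≤ r * γ := by positivity
  refine ⟨⟨δ / 2, δ, α, μ, κ, γ, P * κ / 4, q, c₂ * μ / 4, γ / (2 * (1 + Δ * Δ)), c₂⟩, rfl,
    rfl, ?_⟩
  have hγ' : (1 + Δ * Δ) * (γ / (2 * (1 + Δ * Δ))) ≤ γ / 2 := le_of_eq (by field_simp)
  constructor <;> dsimp only <;> (try rw [← hP]) <;> first | positivity | linarith

namespace IsHierarchy

theorem isAdmissible_ceil (hK : K.IsHierarchy r Δ) {ε β : ℝ} {N : ℕ} (hε : 0 < ε)
    (hΔε : (8 * Δ + 1) * ε ≤ min (min K.d (K.c₀ * Real.exp (-(4 / K.γ'))))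
      (min (K.d ^ Δ * K.δ) (K.d ^ Δ * K.τ)))
    (hβ : 0 < β) (hΔβ : (1 + Δ) * β ≤ K.γ / 4) (hN : 0 < N) (hκN : 1 ≤ K.κ * N)
    (hrN : r ≤ K.d ^ Δ * K.κ / 4 * N)
    (halive : r * N * Real.exp (-(K.q ^ Δ * K.μ / 4 * N)) ≤ 1 / 4)
    (hbad : r * N * Real.exp (-(2 * N)) ≤ 1 / 4) :
    K.IsAdmissible r Δ ε β N ⌈K.μ * N⌉₊ := by
  obtain ⟨hd, hd₁, -, -, hμ, -, -, hc₀, -, -, -, hγ', -, hμ₁, hμα, hμδ, hκα, hκμ, hγκ, hγμ, hγ₁,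
    hqδ, -⟩ := id hK
  simp only [le_min_iff] at hΔε
  have hN₀ : (0 : ℝ) < N := Nat.cast_pos.2 hN
  have hΔε₀ : 0 ≤ Δ * ε := by positivity
  have hΔβ₀ : 0 ≤ Δ * β := by positivity
  have hm := Nat.le_ceil (K.μ * N)
  have hμN : K.d ^ Δ * (K.μ * N) ≤ K.μ * N :=
    mul_le_of_le_one_left (by positivity) (pow_le_one₀ hd.le hd₁)
  have hmulN : ∀ {a b : ℝ}, a ≤ b → a * N ≤ b * N := fun h => mul_le_mul_of_nonneg_right h hN₀.le
  have hκμN := hmulN hκμ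
  have hm₂ : ⌈K.μ * N⌉₊ ≤ 2 * K.μ * N := by
    linarith [Nat.ceil_lt_add_one (show 0 ≤ K.μ * N by positivity)]
  have hrm : ∀ a : ℝ, 0 ≤ a → r * ⌈K.μ * N⌉₊ * a ≤ 2 * (r * a) * K.μ * N := fun a ha => by
    calc _ ≤ r * (2 * K.μ * N) * a := by gcongr
      _ = 2 * (r * a) * K.μ * N := by ring
  have hrmΔ := hrm Δ Δ.cast_nonneg
  have hrmM := hrm (1 + Δ + Δ ^ 2 + Δ ^ 3) (by positivity)
  have hexp : K.c₀ * Real.exp (-(4 / K.γ')) ≤ K.c₀ :=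
    mul_le_of_le_one_right hc₀.le (Real.exp_le_one_iff.2 (neg_nonpos.2 (by positivity)))
  have hΔεN : 8 * Δ * ε * N ≤ K.d ^ Δ * K.δ * N := hmulN (by linarith)
  have hbadexp : Δ * (ε / K.c₀) ≤ Real.exp (-(4 / K.γ')) := by
    rw [mul_div_assoc', div_le_iff₀ hc₀]
    linarith
  have hbad' : r * Real.exp (-(2 * N)) ≤ 1 / 4 := le_trans (by
    gcongr
    exact le_mul_of_one_le_right r.cast_nonneg (Nat.one_le_cast.2 hN)) hbad
  rw [div_mul_eq_mul_div] at halive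
  constructor <;> first
    | assumption
    | linarith [hmulN hμ₁, hmulN hμα, hmulN hμδ, hmulN hκα, hmulN hγκ, hmulN hγμ, hmulN hγ₁,
        hmulN hqδ, hmulN hΔβ]

theorem exists_isAdmissible (hK : K.IsHierarchy r Δ) :
    ∃ ε₀ > 0, ∃ β₀ > 0, ∃ N₀ : ℕ, ∀ ε > 0, ε ≤ ε₀ → ∀ β > 0, β ≤ β₀ → ∀ N ≥ N₀, ∃ m,
      K.IsAdmissible r Δ ε β N m := by
  have hd := hK.d_pos
  have hδ := hK.δ_pos
  have hκ := hK.κ_pos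
  have hc₀ := hK.c₀_pos
  have hτ := hK.τ_pos
  have hμ := hK.μ_pos
  have hq := hK.q_pos
  obtain ⟨ε₀, hε₀, hΔε₀⟩ := exists_pos_mul_lt
    (show 0 < min (min K.d (K.c₀ * Real.exp (-(4 / K.γ'))))
      (min (K.d ^ Δ * K.δ) (K.d ^ Δ * K.τ)) by positivity) (8 * Δ + 1)
  obtain ⟨β₀, hβ₀, hΔβ₀⟩ := exists_pos_mul_lt (div_pos hK.γ_pos four_pos) (1 + Δ)
  obtain ⟨N₀, hN₀⟩ := Filter.eventually_atTop.1 <| (Filter.eventually_gt_atTop 0).and <|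
    (eventually_le_mul_natCast 1 hκ).and <|
    (eventually_le_mul_natCast (r : ℝ) (show 0 < K.d ^ Δ * K.κ / 4 by positivity)).and <|
    (eventually_mul_exp_neg_mul_le r (show 0 < K.q ^ Δ * K.μ / 4 by positivity)
      (one_div_pos.2 four_pos)).and <|
    eventually_mul_exp_neg_mul_le r two_pos (one_div_pos.2 four_pos)
  refine ⟨ε₀, hε₀, β₀, hβ₀, N₀, fun ε hε hεε₀ β hβ hββ₀ N hN => ⟨⌈K.μ * N⌉₊, ?_⟩⟩
  obtain ⟨hN, hκN, hrN, halive, hbad⟩ := hN₀ N hN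
  exact hK.isAdmissible_ceil hε
    ((mul_le_mul_of_nonneg_left hεε₀ (by positivity)).trans hΔε₀.le) hβ
    ((mul_le_mul_of_nonneg_left hββ₀ (by positivity)).trans hΔβ₀.le) hN hκN hrN halive hbad

end IsHierarchy

end BlowUpConstants

/-! ### Choice of the buffer -/

theorem exists_adj_edist_le_of_edist_le_succ {U : Type*} {G : SimpleGraph U} {k : ℕ} {x y : U}
    (hxy : G.edist x y ≤ (k + 1 : ℕ)) (hne : x ≠ y) : ∃ z, G.Adj x z ∧ G.edist z y ≤ k := by
  obtain ⟨w, hw⟩ := SimpleGraph.exists_walk_of_edist_ne_top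
    (hxy.trans_lt (ENat.natCast_lt_top _)).ne
  cases w with
  | nil => exact absurd rfl hne
  | cons hadj w =>
    rw [← hw, Nat.cast_le, SimpleGraph.Walk.length_cons, Nat.add_le_add_iff_right] at hxy
    exact ⟨_, hadj, (SimpleGraph.edist_le w).trans (Nat.cast_le.2 hxy)⟩

section Separated

variable {U ι : Type*} [Fintype U] [Fintype ι] [DecidableEq ι] {G : SimpleGraph U} {Δ k m : ℕ}

theorem card_edist_le_le_sum_pow (hG : ∀ x, G.degree x ≤ Δ) (k : ℕ) (x : U) :
    #{y | G.edist x y ≤ k} ≤ ∑ i ∈ range (k + 1), Δ ^ i := by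
  induction k generalizing x with
  | zero => simp [SimpleGraph.edist_eq_zero_iff, filter_eq]
  | succ k ih =>
    have hsub : ({y | G.edist x y ≤ (k + 1 : ℕ)} : Finset U)
        ⊆ insert x ((G.neighborFinset x).biUnion fun z => {y | G.edist z y ≤ k}) := fun y hy => by
      obtain rfl | hne := eq_or_ne x y
      · exact mem_insert_self _ _
      · obtain ⟨z, hz, hzy⟩ := exists_adj_edist_le_of_edist_le_succ (mem_filter.1 hy).2 hne
        exact mem_insert_of_mem (mem_biUnion.2 ⟨z, by simpa using hz, by simpa using hzy⟩)
    calc #{y | G.edist x y ≤ (k + 1 : ℕ)}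
        ≤ #((G.neighborFinset x).biUnion fun z => {y | G.edist z y ≤ k}) + 1 :=
          (card_le_card hsub).trans (card_insert_le _ _)
      _ ≤ #(G.neighborFinset x) * ∑ i ∈ range (k + 1), Δ ^ i + 1 :=
          Nat.add_le_add_right (card_biUnion_le_card_mul _ _ _ fun z _ => ih z) 1
      _ ≤ ∑ i ∈ range (k + 1 + 1), Δ ^ i := by
          rw [geom_sum_succ (n := k + 1), G.card_neighborFinset_eq_degree]
          exact Nat.add_le_add_right (Nat.mul_le_mul_right _ (hG x)) 1

theorem exists_forall_lt_edist {part : U → ι} (hG : ∀ x, G.degree x ≤ Δ) {B E : Finset U}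
    (hB : ∀ i, #{x ∈ B | part x = i} ≤ m) {i : ι}
    (hroom : Fintype.card ι * m * ∑ j ∈ range (k + 1), Δ ^ j + #E < #{x | part x = i}) :
    ∃ x ∉ E, part x = i ∧ ∀ b ∈ B, k < G.edist b x := by
  have hcardB : #B ≤ Fintype.card ι * m := by
    rw [card_eq_sum_card_fiberwise fun x _ => mem_univ (part x)]
    exact sum_le_card_nsmul _ _ _ fun i _ => hB i
  have hnear : #((B.biUnion fun b => {x | G.edist b x ≤ k}) ∪ E) < #{x | part x = i} :=
    ((card_union_le _ _).trans (Nat.add_le_add_right ((card_biUnion_le_card_mul _ _ _ fun b _ =>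
      card_edist_le_le_sum_pow hG k b).trans (Nat.mul_le_mul_right _ hcardB)) _)).trans_lt hroom
  obtain ⟨x, hx, hfar⟩ := exists_mem_notMem_of_card_lt_card hnear
  simp only [mem_union, mem_biUnion, mem_filter_univ, not_or, not_exists, not_and, not_le]
    at hx hfar
  exact ⟨x, hfar.2, hx, hfar.1⟩

theorem exists_separated_transversal {part : U → ι} (hG : ∀ x, G.degree x ≤ Δ) {E : Finset U}
    (hroom : ∀ i, Fintype.card ι * m * ∑ j ∈ range (k + 1), Δ ^ j + #E < #{x | part x = i}) :
    ∃ B : Finset U, (∀ i, #{x ∈ B | part x = i} = m) ∧ Disjoint B E ∧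
      (B : Set U).Pairwise fun b b' => k < G.edist b b' := by
  obtain ⟨B, hB, hmax⟩ := exists_max_image (univ.filter fun B : Finset U =>
    (∀ i, #{x ∈ B | part x = i} ≤ m) ∧ Disjoint B E ∧
      (B : Set U).Pairwise fun b b' => k < G.edist b b') card ⟨∅, by simp⟩
  obtain ⟨hcard, hBE, hsep⟩ := (mem_filter.1 hB).2
  refine ⟨B, fun i => (hcard i).antisymm ?_, hBE, hsep⟩
  by_contra! hlt
  obtain ⟨x, hxE, hxi, hfar⟩ := exists_forall_lt_edist hG hcard (hroom i)
  have hxB : x ∉ B := fun hx => absurd (hfar x hx) (by simp)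
  refine absurd (hmax (insert x B) (mem_filter.2 ⟨mem_univ _, fun j => ?_,
    disjoint_insert_left.2 ⟨hxE, hBE⟩, ?_⟩)) (by simp [card_insert_of_notMem hxB])
  · rw [filter_insert]
    split_ifs with hxj
    · rw [card_insert_of_notMem fun h => hxB (mem_filter.1 h).1, ← hxj, hxi]
      exact hlt
    · exact hcard j
  · rw [coe_insert]
    refine hsep.insert fun b hb _ => ⟨?_, hfar b hb⟩
    rw [G.edist_comm]
    exact hfar b hb

end Separated

namespace BlowUpConstants.IsAdmissible

theorem exists_buffer {K : BlowUpConstants} {r Δ N m : ℕ} {ε β : ℝ} {U : Type*} [Fintype U]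
    {H : SimpleGraph U} {part : U → Fin r} {W : Finset U} (hK : K.IsAdmissible r Δ ε β N m)
    (hH : ∀ x, H.degree x ≤ Δ) (hpart : ∀ i, #{x | part x = i} = N) (hW : #W ≤ β * N) :
    ∃ B : Finset U, (∀ i, #{x ∈ B | part x = i} = m) ∧
      (∀ b ∈ B, ∀ b' ∈ B, b ≠ b' → 3 < H.edist b b') ∧ ∀ b ∈ B, ∀ x ∈ W, 1 < H.edist b x := by
  have hnear : #(W.biUnion fun x => {y | H.edist x y ≤ (1 : ℕ)}) ≤ #W * (1 + Δ) := by
    refine card_biUnion_le_card_mul _ _ _ fun x _ => ?_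
    simpa [sum_range_succ] using card_edist_le_le_sum_pow hH 1 x
  have hnear' : (#(W.biUnion fun x => {y | H.edist x y ≤ (1 : ℕ)}) : ℝ) ≤ (1 + Δ) * (β * N) := by
    calc _ ≤ (#W : ℝ) * (1 + Δ) := by exact_mod_cast hnear
      _ ≤ (1 + Δ) * (β * N) := by rw [mul_comm]; gcongr
  obtain ⟨B, hBm, hBE, hsep⟩ := exists_separated_transversal (k := 3) (m := m) (part := part) hH
    (E := W.biUnion fun x => {y | H.edist x y ≤ (1 : ℕ)}) fun i => by
      rw [hpart, Fintype.card_fin, ← Nat.cast_lt (α := ℝ)]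
      refine lt_of_le_of_lt ?_ hK.near_buffer_lt
      push_cast [sum_range_succ]
      simpa using hnear'
  refine ⟨B, hBm, fun b hb b' hb' hne => hsep hb hb' hne, fun b hb x hx => not_le.1 fun hle => ?_⟩
  rw [H.edist_comm] at hle
  exact disjoint_left.1 hBE hb (mem_biUnion.2 ⟨x, hx, mem_filter.2 ⟨mem_univ _, hle⟩⟩)

end BlowUpConstants.IsAdmissible

section Regularity

variable {V : Type} {G : SimpleGraph V} {A B Y : Finset V} {ε δ d : ℝ} {N : ℕ}

theorem IsSuperRegularPair.le_edgeDensityR (h : IsSuperRegularPair G A B ε δ N) (hN : 0 < N) :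
    δ ≤ edgeDensityR G A B := by
  obtain ⟨-, hA, hB, hdeg, -⟩ := h
  have hsum := card_nsmul_le_sum A (fun a => (#{b ∈ B | G.Adj a b} : ℝ)) (δ * N) hdeg
  rw [hA, nsmul_eq_mul] at hsum
  rw [edgeDensityR, hA, hB, le_div_iff₀ (by positivity)]
  linarith

theorem edgeDensityR_lt_of_forall_card_lt {X : Finset V} (hX : X.Nonempty) (hY : Y.Nonempty)
    (h : ∀ x ∈ X, #{y ∈ Y | G.Adj x y} < d * #Y) : edgeDensityR G X Y < d := by
  have hX₀ : (0 : ℝ) < #X := Nat.cast_pos.2 hX.card_pos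
  have hY₀ : (0 : ℝ) < #Y := Nat.cast_pos.2 hY.card_pos
  rw [edgeDensityR, div_lt_iff₀ (by positivity)]
  calc ∑ x ∈ X, (#{y ∈ Y | G.Adj x y} : ℝ) < ∑ _x ∈ X, d * #Y := sum_lt_sum_of_nonempty hX h
    _ = d * (#X * #Y) := by rw [sum_const, nsmul_eq_mul]; ring

theorem IsRegularPair.card_filter_lt (h : IsRegularPair G A B ε) (hε : 0 < ε) (hA : A.Nonempty)
    (hB : B.Nonempty) (hd : d + ε ≤ edgeDensityR G A B) (hYB : Y ⊆ B) (hY : ε * #B ≤ #Y) :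
    #{v ∈ A | #{w ∈ Y | G.Adj v w} < d * #Y} < ε * #A := by
  have hA₀ : (0 : ℝ) < #A := Nat.cast_pos.2 hA.card_pos
  have hB₀ : (0 : ℝ) < #B := Nat.cast_pos.2 hB.card_pos
  by_contra! hle
  have hX := card_pos.1 (Nat.cast_pos.1 ((mul_pos hε hA₀).trans_le hle))
  have hY₀ := card_pos.1 (Nat.cast_pos.1 ((mul_pos hε hB₀).trans_le hY))
  have hlt := edgeDensityR_lt_of_forall_card_lt hX hY₀ fun x hx => (mem_filter.1 hx).2
  linarith [(abs_le.1 (h _ (filter_subset _ _) Y hYB hle hY)).1]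

end Regularity

section VertexSpread

variable {X Y Z : Type*} {p : PMF (X → Y)} {q q' : ℝ}

theorem IsVertexSpread.mono (hp : IsVertexSpread p q) (hq : 0 ≤ q) (hqq' : q ≤ q') :
    IsVertexSpread p q' := fun s g =>
  (hp s g).trans (ENNReal.ofReal_le_ofReal (pow_le_pow_left₀ hq hqq' _))

theorem isVertexSpread_of_one_le (p : PMF (X → Y)) (hq : Nonempty X → 1 ≤ q) :
    IsVertexSpread p q := fun s g => by
  refine (toOuterMeasure_le_one p _).trans (ENNReal.one_le_ofReal.2 ?_)
  obtain rfl | ⟨x, -⟩ := s.eq_empty_or_nonempty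
  exacts [(pow_zero q).ge, one_le_pow₀ (hq ⟨x⟩)]

theorem IsVertexSpread.map_comp (hp : IsVertexSpread p q) {f : Z → X}
    (hf : Function.Injective f) : IsVertexSpread (p.map (· ∘ f)) q := fun s g => by
  obtain ⟨φ₀, -⟩ := p.support_nonempty
  rw [PMF.toOuterMeasure_map_apply, ← card_image_of_injective s hf]
  refine le_of_eq_of_le (congrArg _ ?_) (hp (s.image f) (Function.extend f g φ₀))
  ext φ
  simp [hf.extend_apply]

theorem IsVertexSpread.exists_subtype (hp : IsVertexSpread p q) {S : (X → Y) → Prop}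
    (hS : ∀ φ ∈ p.support, S φ) :
    ∃ p' : PMF {φ // S φ}, ∀ (k : ℕ) (x : Fin k → X) (y : Fin k → Y), Function.Injective x →
      p'.toOuterMeasure {φ | ∀ i, φ.1 (x i) = y i} ≤ ENNReal.ofReal (q ^ k) := by
  refine ⟨p.bindOnSupport fun φ hφ => PMF.pure ⟨φ, hS φ hφ⟩, fun k x y hx => ?_⟩
  obtain ⟨φ₀, -⟩ := p.support_nonempty
  have heq : {φ : X → Y | ∀ i, φ (x i) = y i}
      = {φ | ∀ z ∈ univ.image x, φ z = Function.extend x y φ₀ z} := by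
    ext φ
    simp [hx.extend_apply]
  have hle := hp (univ.image x) (Function.extend x y φ₀)
  rw [card_image_of_injective _ hx, card_univ, Fintype.card_fin, ← heq] at hle
  refine le_trans (le_of_eq ?_) hle
  rw [PMF.toOuterMeasure_bindOnSupport_apply, PMF.toOuterMeasure_apply]
  refine tsum_congr fun φ => ?_
  by_cases hφ : p φ = 0
  · simp [hφ, Set.indicator]
  · simp [hφ, Set.indicator]

end VertexSpread

/-- The hypotheses of the blow-up lemma with parts indexed by `Fin r`, where `h` and `c` assign to
every vertex of the guest and of the host graph its part, and only the target sets of vertices in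
`W` may be restricted. -/
structure EmbeddingProblem.IsBlowUp {U : Type*} {V : Type} [Fintype U] [Fintype V] {r : ℕ}
    (P : EmbeddingProblem U V) (R : SimpleGraph (Fin r)) (h : U → Fin r) (c : V → Fin r)
    (W : Finset U) (Δ N : ℕ) (ε δ α β : ℝ) : Prop where
  card_hostPart : ∀ i, #{v | c v = i} = N
  isSuperRegularPair : ∀ i j, R.Adj i j →
    IsSuperRegularPair P.host ({v | c v = i} : Finset V) ({v | c v = j} : Finset V) ε δ N
  degree_le : ∀ x, P.guest.degree x ≤ Δ
  reduced_adj : ∀ x y, P.guest.Adj x y → R.Adj (h x) (h y)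
  card_guestPart_le : ∀ i, #{x | h x = i} ≤ N
  card_exceptional_le : #W ≤ β * N
  hostPart_of_mem_target : ∀ x, ∀ v ∈ P.target x, c v = h x
  le_card_target : ∀ x ∈ W, α * N ≤ #(P.target x)
  mem_target : ∀ x ∉ W, ∀ v, c v = h x → v ∈ P.target x

namespace EmbeddingProblem.IsBlowUp

variable {U : Type*} {V : Type} [Fintype U] [Fintype V] {r Δ N m : ℕ} {P : EmbeddingProblem U V}
  {R : SimpleGraph (Fin r)} {h : U → Fin r} {c : V → Fin r} {W : Finset U} {ε δ α β : ℝ}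
  {K : BlowUpConstants}

theorem mono (hP : P.IsBlowUp R h c W Δ N ε δ α β) {δ' α' : ℝ} (hδ : δ' ≤ δ) (hα : α' ≤ α) :
    P.IsBlowUp R h c W Δ N ε δ' α' β where
  __ := hP
  isSuperRegularPair i j hij := by
    obtain ⟨hreg, hi, hj, hdeg, hdeg'⟩ := hP.isSuperRegularPair i j hij
    have hδN : δ' * N ≤ δ * N := by gcongr
    exact ⟨hreg, hi, hj, fun v hv => hδN.trans (hdeg v hv), fun v hv => hδN.trans (hdeg' v hv)⟩
  le_card_target x hx := le_trans (by gcongr) (hP.le_card_target x hx)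

theorem card_filter_atypicalVertices_le (hP : P.IsBlowUp R h c W Δ N ε K.δ α β)
    (hK : K.IsAdmissible r Δ ε β N m) {i j : Fin r} (hij : R.Adj i j) {Y : Finset V}
    (hYj : ∀ v ∈ Y, c v = j) (hY : ε * N ≤ #Y) :
    #{v ∈ atypicalVertices P.host K.d Y | c v = i} ≤ ε * N := by
  have hpair := hP.isSuperRegularPair i j hij
  have hne : ∀ i, ({v | c v = i} : Finset V).Nonempty := fun i =>
    card_pos.1 ((hP.card_hostPart i).symm ▸ hK.N_pos)
  have hdens := hpair.le_edgeDensityR hK.N_pos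
  have hlt := hpair.1.card_filter_lt (d := K.d) hK.ε_pos (hne i) (hne j)
    (by linarith [hK.ε_le_d, hK.two_mul_d_le])
    (fun v hv => (mem_filter_univ v).2 (hYj v hv)) (by rwa [hP.card_hostPart])
  rw [hP.card_hostPart, filter_filter] at hlt
  refine le_trans (le_of_eq ?_) hlt.le
  simp only [atypicalVertices, filter_filter, and_comm, P.host.adj_comm]

theorem exists_blowUpInstance (hP : P.IsBlowUp R h c W Δ N ε K.δ K.α β)
    (hK : K.IsAdmissible r Δ ε β N m) (hcard : ∀ i, #{x | h x = i} = N) :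
    ∃ D : BlowUpInstance K r Δ N m ε β U V, D.toEmbeddingProblem = P := by
  obtain ⟨B, hBm, hBsep, hBW⟩ := hK.exists_buffer hP.degree_le hcard hP.card_exceptional_le
  have hN : (0 : ℝ) ≤ N := Nat.cast_nonneg N
  refine ⟨{ P with
    admissible := hK
    reduced := R
    guestPart := h
    hostPart := c
    exceptional := W
    buffer := B
    card_guestPart := hcard
    card_hostPart := hP.card_hostPart
    regular := fun i j hij Y hYj hY => hP.card_filter_atypicalVertices_le hK hij hYj hY
    le_degree := fun v j hvj => ?_
    degree_le := hP.degree_le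
    reduced_adj := hP.reduced_adj
    hostPart_of_mem_target := hP.hostPart_of_mem_target
    le_card_target := fun x => ?_
    mem_target := hP.mem_target
    card_exceptional_le := hP.card_exceptional_le
    card_buffer := hBm
    buffer_separated := hBsep
    exceptional_separated := hBW }, rfl⟩
  · obtain ⟨-, -, -, hdeg, -⟩ := hP.isSuperRegularPair _ j hvj
    simpa only [filter_filter, P.host.adj_comm v] using hdeg v (by simp)
  · by_cases hx : x ∈ W
    · exact hP.le_card_target x hx
    · have hsub : ({v | c v = h x} : Finset V) ⊆ P.target x := fun v hv =>
        hP.mem_target x hx v (mem_filter.1 hv).2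
      calc K.α * N ≤ N := mul_le_of_le_one_left hN hK.α_le_one
        _ ≤ #(P.target x) := by
          rw [← hP.card_hostPart (h x)]
          exact_mod_cast card_le_card hsub

end EmbeddingProblem.IsBlowUp

/-! ### Reduction to full parts -/

section Padding

variable {U Z V ι : Type*} {P : EmbeddingProblem U V} {t : Z → Finset V}

/-- The problem obtained by adding isolated vertices `z` with target sets `t z` to the guest graph.
It reduces the blow-up lemma to the case that all parts of the guest graph have full size. -/
def EmbeddingProblem.addIsolated (P : EmbeddingProblem U V) (t : Z → Finset V) :
    EmbeddingProblem (U ⊕ Z) V where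
  host := P.host
  guest := P.guest ⊕g ⊥
  target := Sum.elim P.target t

theorem EmbeddingProblem.IsSolution.comp_inl {φ : U ⊕ Z → V}
    (hφ : (P.addIsolated t).IsSolution φ) : P.IsSolution (φ ∘ Sum.inl) where
  injective := hφ.injective.comp Sum.inl_injective
  adj _ _ hxy := hφ.adj _ _ (SimpleGraph.sum_adj_inl.2 hxy)
  mem_target x := hφ.mem_target (Sum.inl x)

theorem EmbeddingProblem.degree_addIsolated_le [Fintype U] [Fintype Z] {Δ : ℕ}
    (hP : ∀ x, P.guest.degree x ≤ Δ) (x : U ⊕ Z) : (P.addIsolated t).guest.degree x ≤ Δ := by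
  rw [← SimpleGraph.card_neighborFinset_eq_degree]
  obtain x | z := x
  · refine le_trans (card_le_card (t := (P.guest.neighborFinset x).map Function.Embedding.inl)
      fun y hy => ?_) ((card_map _).trans_le (hP x))
    rw [SimpleGraph.mem_neighborFinset] at hy
    obtain y | z := y
    · exact mem_map_of_mem _ ((P.guest.mem_neighborFinset x y).2 hy)
    · exact absurd hy (by simp [EmbeddingProblem.addIsolated])
  · refine le_of_eq_of_le (card_eq_zero.2 (eq_empty_of_forall_notMem ?_)) Δ.zero_le
    rintro (y | z') hy <;> rw [SimpleGraph.mem_neighborFinset] at hy <;>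
      exact absurd hy (by simp [EmbeddingProblem.addIsolated])

theorem card_filter_sumElim_eq [DecidableEq ι] [Fintype U] [Fintype Z] (h : U → ι) (h' : Z → ι)
    (i : ι) : #{x | Sum.elim h h' x = i} = #{x | h x = i} + #{z | h' z = i} := by
  rw [← card_disjSum]
  congr 1
  ext (x | z) <;> simp

theorem card_filter_sigma_fst_eq [DecidableEq ι] [Fintype ι] {κ : ι → Type*} [∀ i, Fintype (κ i)]
    (i : ι) : #{z : Σ i, κ i | z.1 = i} = Fintype.card (κ i) := by
  rw [← card_univ, ← card_map (Function.Embedding.sigmaMk i)]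
  congr 1
  ext ⟨j, z⟩
  simp only [mem_filter_univ, mem_map, mem_univ, true_and, Function.Embedding.sigmaMk_apply]
  exact ⟨by rintro rfl; exact ⟨z, rfl⟩, by rintro ⟨z, hz⟩; exact (congrArg Sigma.fst hz).symm⟩

theorem exists_injective_of_card_fiber_le [DecidableEq ι] [Fintype U] [Fintype V] {h : U → ι}
    {c : V → ι} (hcard : ∀ i, #{x | h x = i} ≤ #{v | c v = i}) :
    ∃ φ : U → V, Function.Injective φ ∧ ∀ x, c (φ x) = h x := by
  have hemb : ∀ i, Nonempty ({x // h x = i} ↪ {v // c v = i}) := fun i =>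
    Function.Embedding.nonempty_of_card_le (by simpa only [Fintype.card_subtype] using hcard i)
  let e := fun i => (hemb i).some
  have he : ∀ x, c (e (h x) ⟨x, rfl⟩) = h x := fun x => (e (h x) ⟨x, rfl⟩).2
  refine ⟨fun x => e (h x) ⟨x, rfl⟩, fun x y hxy => ?_, he⟩
  have hh : h y = h x := (he y).symm.trans ((congrArg c hxy).symm.trans (he x))
  have key : ∀ i (hi : h y = i), (e (h y) ⟨y, rfl⟩ : V) = e i ⟨y, hi⟩ := by
    rintro _ rfl
    rfl
  exact congrArg Subtype.val
    ((e (h x)).injective (Subtype.val_injective (hxy.trans (key (h x) hh))))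

end Padding

namespace EmbeddingProblem.IsBlowUp

variable {U Z : Type*} {V : Type} [Fintype U] [Fintype Z] [Fintype V] {r Δ N m k : ℕ}
  {P : EmbeddingProblem U V} {R : SimpleGraph (Fin r)} {h : U → Fin r} {c : V → Fin r}
  {W : Finset U} {ε δ α β : ℝ} {K : BlowUpConstants}

theorem addIsolated (hP : P.IsBlowUp R h c W Δ N ε δ α β) {h' : Z → Fin r}
    (hN : ∀ i, #{x | Sum.elim h h' x = i} ≤ N) :
    (P.addIsolated fun z => {v | c v = h' z}).IsBlowUp R (Sum.elim h h') c
      (W.map Function.Embedding.inl) Δ N ε δ α β where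
  card_hostPart := hP.card_hostPart
  isSuperRegularPair := hP.isSuperRegularPair
  degree_le := EmbeddingProblem.degree_addIsolated_le hP.degree_le
  reduced_adj := by
    rintro (x | z) (y | z') hxy
    · exact hP.reduced_adj x y hxy
    all_goals exact absurd hxy (by simp [EmbeddingProblem.addIsolated])
  card_guestPart_le := hN
  card_exceptional_le := by simpa only [card_map] using hP.card_exceptional_le
  hostPart_of_mem_target := by
    rintro (x | z) v hv
    · exact hP.hostPart_of_mem_target x v hv
    · exact (mem_filter.1 hv).2
  le_card_target := by
    rintro _ hx
    obtain ⟨x, hxW, rfl⟩ := mem_map.1 hx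
    exact hP.le_card_target x hxW
  mem_target := by
    rintro (x | z) hx v hv
    · exact hP.mem_target x (fun hxW => hx (mem_map_of_mem _ hxW)) v hv
    · exact mem_filter.2 ⟨mem_univ _, hv⟩

theorem exists_spread_isSolution_of_isAdmissible (hP : P.IsBlowUp R h c W Δ N ε K.δ K.α β)
    (hK : K.IsAdmissible r Δ ε β N m) (hk : IsLargeOutdegree k K.c₂ (K.d ^ Δ * K.c₂ / 2)) :
    ∃ p : PMF (U → V), (∀ φ ∈ p.support, P.IsSolution φ) ∧
      IsVertexSpread p (2 * (1 / K.c₀ + 2 * (4 * (k + 2 : ℕ) / K.c₂) / K.μ) / N) := by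
  have hcard : ∀ i, #{x | Sum.elim h
      (Sigma.fst : (Σ i, Fin (N - #{x | h x = i})) → Fin r) x = i} = N := fun i => by
    rw [card_filter_sumElim_eq, card_filter_sigma_fst_eq, Fintype.card_fin,
      Nat.add_sub_cancel' (hP.card_guestPart_le i)]
  obtain ⟨D, hD⟩ := (hP.addIsolated fun i => (hcard i).le).exists_blowUpInstance hK hcard
  obtain ⟨p, hp, hspread⟩ := D.exists_spread_isSolution hk
  refine ⟨p.map (· ∘ Sum.inl), fun φ hφ => ?_, hspread.map_comp Sum.inl_injective⟩
  obtain ⟨φ', hφ', rfl⟩ := (PMF.mem_support_map_iff _ _ _).1 hφ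
  exact (hD ▸ hp φ' hφ').comp_inl

end EmbeddingProblem.IsBlowUp

section Small

theorem IsSuperRegularPair.adj_of_mul_le_one {V : Type} {G : SimpleGraph V} {A B : Finset V}
    {ε δ : ℝ} {N : ℕ} {a b : V} (h : IsSuperRegularPair G A B ε δ N) (hεN : ε * N ≤ 1)
    (hεδ : ε < δ) (ha : a ∈ A) (hb : b ∈ B) : G.Adj a b := by
  by_contra hab
  obtain ⟨hreg, hA, hB, -, -⟩ := id h
  have hδ := h.le_edgeDensityR (hA ▸ card_pos.2 ⟨a, ha⟩)
  have habs := hreg {a} (singleton_subset_iff.2 ha) {b} (singleton_subset_iff.2 hb)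
    (by simpa [hA] using hεN) (by simpa [hB] using hεN)
  have hzero : edgeDensityR G {a} {b} = 0 := by
    simp [edgeDensityR, hab]
  rw [hzero] at habs
  linarith [neg_abs_le (0 - edgeDensityR G A B)]

namespace EmbeddingProblem.IsBlowUp

variable {U : Type*} {V : Type} [Fintype U] [Fintype V] {r Δ N : ℕ} {P : EmbeddingProblem U V}
  {R : SimpleGraph (Fin r)} {h : U → Fin r} {c : V → Fin r} {W : Finset U} {ε δ α β : ℝ}

theorem exists_isSolution_of_mul_lt_one (hP : P.IsBlowUp R h c W Δ N ε δ α β) (hεN : ε * N ≤ 1)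
    (hεδ : ε < δ) (hβN : β * N < 1) : ∃ φ, P.IsSolution φ := by
  have hW : W = ∅ :=
    card_eq_zero.1 (Nat.lt_one_iff.1 (by exact_mod_cast hP.card_exceptional_le.trans_lt hβN))
  obtain ⟨φ, hφ, hφc⟩ := exists_injective_of_card_fiber_le fun i =>
    (hP.card_guestPart_le i).trans_eq (hP.card_hostPart i).symm
  refine ⟨φ, hφ, fun x y hxy => ?_, fun x => hP.mem_target x (by simp [hW]) _ (hφc x)⟩
  exact (hP.isSuperRegularPair _ _ (hP.reduced_adj x y hxy)).adj_of_mul_le_one hεN hεδ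
    ((mem_filter_univ _).2 (hφc x)) ((mem_filter_univ _).2 (hφc y))

theorem exists_spread_isSolution_of_mul_lt_one (hP : P.IsBlowUp R h c W Δ N ε δ α β)
    (hεN : ε * N ≤ 1) (hεδ : ε < δ) (hβN : β * N < 1) {C : ℝ} (hC : N ≤ C) :
    ∃ p : PMF (U → V), (∀ φ ∈ p.support, P.IsSolution φ) ∧ IsVertexSpread p (C / N) := by
  obtain ⟨φ, hφ⟩ := hP.exists_isSolution_of_mul_lt_one hεN hεδ hβN
  refine ⟨PMF.pure φ, fun φ' hφ' => ?_, isVertexSpread_of_one_le _ fun ⟨x⟩ => ?_⟩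
  · rwa [(PMF.mem_support_pure_iff φ φ').1 hφ']
  · have hN : 0 < N := (card_pos.2 ⟨x, by simp⟩).trans_le (hP.card_guestPart_le (h x))
    rwa [one_le_div (by exact_mod_cast hN)]

end EmbeddingProblem.IsBlowUp

end Small

theorem EmbeddingProblem.exists_spread_isSolution_of_isBlowUp (r Δ : ℕ) {δ α : ℝ} (hδ : 0 < δ)
    (hα : 0 < α) :
    ∃ ε β C : ℝ, 0 < ε ∧ 0 < β ∧ 0 < C ∧ ∀ {N : ℕ} {U V : Type} [Fintype U] [Fintype V]
      {P : EmbeddingProblem U V} {R : SimpleGraph (Fin r)} {h : U → Fin r} {c : V → Fin r}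
      {W : Finset U}, P.IsBlowUp R h c W Δ N ε δ α β →
      ∃ p : PMF (U → V), (∀ φ ∈ p.support, P.IsSolution φ) ∧ IsVertexSpread p (C / N) := by
  obtain ⟨K, hKδ, hKα, hK⟩ := BlowUpConstants.exists_isHierarchy r Δ
    (lt_min hδ one_pos) (min_le_right δ 1) (lt_min hα one_pos) (min_le_right α 1)
  obtain ⟨ε₀, hε₀, β₀, hβ₀, N₀, hadm⟩ := hK.exists_isAdmissible
  obtain ⟨k, hk⟩ := exists_isLargeOutdegree hK.c₂_pos
    (half_pos (mul_pos (pow_pos hK.d_pos Δ) hK.c₂_pos))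
  have hη : (0 : ℝ) < 1 / (N₀ + 1) := by positivity
  set C₀ : ℝ := 2 * (1 / K.c₀ + 2 * (4 * (k + 2 : ℕ) / K.c₂) / K.μ)
  have hC₀ : 0 < C₀ := by
    have := hK.c₀_pos
    have := hK.c₂_pos
    have := hK.μ_pos
    positivity
  have hε : 0 < min ε₀ (min (δ / 2) (1 / (N₀ + 1))) := lt_min hε₀ (lt_min (half_pos hδ) hη)
  have hβ : 0 < min β₀ (1 / (N₀ + 1)) := lt_min hβ₀ hη
  refine ⟨_, _, C₀ + N₀, hε, hβ, by positivity, fun {N U V} _ _ {P R h c W} hP => ?_⟩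
  obtain hN | hN := le_or_gt N₀ N
  · obtain ⟨m, hm⟩ := hadm _ hε (min_le_left _ _) _ hβ (min_le_left _ _) N hN
    obtain ⟨p, hp, hspread⟩ := (hP.mono (hKδ.trans_le (min_le_left _ _))
      (hKα.trans_le (min_le_left _ _))).exists_spread_isSolution_of_isAdmissible hm hk
    exact ⟨p, hp, hspread.mono (by positivity)
      (by gcongr; exact le_add_of_nonneg_right N₀.cast_nonneg)⟩
  · have hηN : 1 / (N₀ + 1 : ℝ) * N < 1 := by
      rw [one_div_mul_eq_div, div_lt_one (by positivity)]
      exact_mod_cast hN.trans N₀.lt_succ_self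
    have hNC : (N : ℝ) ≤ C₀ + N₀ := by
      have hNN₀ : (N : ℝ) ≤ N₀ := by exact_mod_cast hN.le
      linarith
    exact hP.exists_spread_isSolution_of_mul_lt_one
      (hηN.le.trans' (by gcongr; exact (min_le_right _ _).trans (min_le_right _ _)))
      (((min_le_right _ _).trans (min_le_left _ _)).trans_lt (half_lt_self hδ))
      (hηN.trans_le' (by gcongr; exact min_le_right _ _)) hNC

theorem exists_forall_filter_eq_of_biUnion_eq_univ {V ι : Type*} [Fintype V] [Fintype ι]
    [DecidableEq V] [DecidableEq ι] {s : ι → Finset V} (hs : ∀ i j, i ≠ j → Disjoint (s i) (s j))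
    (hs' : univ.biUnion s = univ) : ∃ c : V → ι, ∀ i, ({v | c v = i} : Finset V) = s i := by
  choose c hc using fun v => show ∃ i, v ∈ s i by simpa using hs'.ge (mem_univ v)
  refine ⟨c, fun i => ext fun v => ⟨fun hv => (mem_filter_univ v).1 hv ▸ hc v, fun hv => ?_⟩⟩
  refine (mem_filter_univ v).2 (by_contra fun hne => ?_)
  exact disjoint_left.1 (hs _ _ hne) (hc v) hv

/-- Spread blow-up lemma. -/
theorem spread_blow_up_lemma (r Δ : ℕ) (δ α : ℝ) (hδ : 0 < δ) (hα : 0 < α) :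
    ∃ ε β C : ℝ, 0 < ε ∧ 0 < β ∧ 0 < C ∧
      ∀ (N : ℕ) (V : Type) [Fintype V] [DecidableEq V]
        (R : SimpleGraph (Fin r)) (Vs : Fin r → Finset V) (G : SimpleGraph V)
        (VH : Type) [Fintype VH] [DecidableEq VH]
        (H : SimpleGraph VH) (h : VH → Fin r) (W : Finset VH) (Wx : VH → Finset V),
        -- the sets `V_1, …, V_r` have size `N`, are pairwise disjoint and cover `V`
        (∀ i, (Vs i).card = N) →
        (∀ i j : Fin r, i ≠ j → Disjoint (Vs i) (Vs j)) →
        (univ.biUnion Vs = (univ : Finset V)) →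
        -- `(V_i, V_j)` is `(ε, δ)`-super-regular for every edge `{i, j}` of `R`
        (∀ i j : Fin r, R.Adj i j → IsSuperRegularPair G (Vs i) (Vs j) ε δ N) →
        -- `H` has maximum degree at most `Δ`
        (∀ x : VH, (univ.filter fun y => H.Adj x y).card ≤ Δ) →
        -- `h` is a homomorphism from `H` to `R` with fibres of size at most `N`
        (∀ x y : VH, H.Adj x y → R.Adj (h x) (h y)) →
        (∀ i : Fin r, (univ.filter fun x => h x = i).card ≤ N) →
        -- `W` has size at most `βN` and target sets have size at least `αN`
        ((W.card : ℝ) ≤ β * N) →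
        (∀ x ∈ W, Wx x ⊆ Vs (h x) ∧ α * N ≤ ((Wx x).card : ℝ)) →
        (∀ x ∉ W, Wx x = Vs (h x)) →
        -- conclusion: a `(C/N)`-vertex-spread distribution over embeddings of `H`
        -- into `G` respecting the constraints `φ(x) ∈ W_x`
        ∃ lam : PMF {φ : VH → V // Function.Injective φ ∧
            (∀ x y : VH, H.Adj x y → G.Adj (φ x) (φ y)) ∧ ∀ x : VH, φ x ∈ Wx x},
          ∀ (k : ℕ) (x : Fin k → VH) (y : Fin k → V),
            Function.Injective x → Function.Injective y →
            lam.toOuterMeasure {φ | ∀ i, φ.1 (x i) = y i} ≤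
              ENNReal.ofReal ((C / N) ^ k) := by
  obtain ⟨ε, β, C, hε, hβ, hC, hspread⟩ :=
    EmbeddingProblem.exists_spread_isSolution_of_isBlowUp r Δ hδ hα
  refine ⟨ε, β, C, hε, hβ, hC, fun N V _ _ R Vs G VH _ _ H h W Wx hN hdisj hcover hreg hdeg hhom
    hfib hW hWx hWx' => ?_⟩
  obtain ⟨c, hc⟩ := exists_forall_filter_eq_of_biUnion_eq_univ hdisj hcover
  have hmem : ∀ {v i}, c v = i ↔ v ∈ Vs i := fun {v i} => by rw [← hc i, mem_filter_univ]
  have hsub : ∀ x, Wx x ⊆ Vs (h x) := fun x =>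
    if hx : x ∈ W then (hWx x hx).1 else (hWx' x hx).le
  have hP : (EmbeddingProblem.mk G H Wx).IsBlowUp R h c W Δ N ε δ α β :=
    { card_hostPart := fun i => hc i ▸ hN i
      isSuperRegularPair := fun i j hij => hc i ▸ hc j ▸ hreg i j hij
      degree_le := by simpa only [← SimpleGraph.card_neighborFinset_eq_degree,
        SimpleGraph.neighborFinset_eq_filter] using hdeg
      reduced_adj := hhom
      card_guestPart_le := hfib
      card_exceptional_le := hW
      hostPart_of_mem_target := fun x v hv => hmem.2 (hsub x hv)
      le_card_target := fun x hx => (hWx x hx).2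
      mem_target := fun x hx v hv => (hWx' x hx).ge (hmem.1 hv) }
  obtain ⟨p, hp, hpspread⟩ := hspread hP
  obtain ⟨lam, hlam⟩ := hpspread.exists_subtype fun φ hφ =>
    (⟨(hp φ hφ).injective, (hp φ hφ).adj, (hp φ hφ).mem_target⟩ :
      Function.Injective φ ∧ (∀ x y, H.Adj x y → G.Adj (φ x) (φ y)) ∧ ∀ x, φ x ∈ Wx x)
  exact ⟨lam, fun k x y hx _ => hlam k x y hx⟩
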